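/- Assume ε ∉ (1/2)ℤ. Then there exist h₀ > 0 and β > 0, depending only on V₁, V₂ and ε, such that for every positive integer N with h = 1/N ≤ h₀ and every vector φ = (φ₀,…,φ_{N−1}) ∈ ℂ^N, the Euclidean-norm lower bound |W^ε φ|₂ ≥ β h |φ|₂ holds (equivalently, sup over nonzero ψ ∈ ℂ^N of |Σ_{i,j=0}^{N−1} ψ_i W^ε_{ij} φ_j| / (h^{1/2}|ψ|₂) is at least β h^{1/2}|φ|₂, which is the discrete inf-sup condition for the bilinear form of the method in the L² norms of the associated step functions). In particular, for h ≤ h₀ the N×N matrix W^ε is invertible. -/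

import Mathlib

noncomputable section

/-- Smooth kernel data, 1-periodic in each variable. -/
def SPK (A : ℝ → ℝ → ℂ) : Prop :=
  ContDiff ℝ (⊤ : ℕ∞) (fun p : ℝ × ℝ => A p.1 p.2) ∧
    (∀ s t, A (s + 1) t = A s t) ∧ (∀ s t, A s (t + 1) = A s t)

/-- Logarithmic kernel `V(s,t) = (i/(2π)) A(s,t) log(sin²(π(s−t))) + K(s,t)`. -/
def logKer (A K : ℝ → ℝ → ℂ) (s t : ℝ) : ℂ :=
  Complex.I / (2 * Real.pi) * A s t * (Real.log (Real.sin (Real.pi * (s - t)) ^ 2) : ℂ) + K s t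

/-- Grid point `s_{j+ε} = (j − 1/2 + ε)h`. -/
def sg (h ε : ℝ) (j : ℤ) : ℝ := ((j : ℝ) - 1 / 2 + ε) * h

/-- Grid point `t_{j+ε} = (j + ε)h`. -/
def tg (h ε : ℝ) (j : ℤ) : ℝ := ((j : ℝ) + ε) * h

/-- Integral operator with kernel `V`. -/
def Vop (V : ℝ → ℝ → ℂ) (φ : ℝ → ℂ) (s : ℝ) : ℂ := ∫ t in (0:ℝ)..1, V s t * φ t

/-- Hypersingular operator `W = −D V₁ D + V₂`. -/
def Wop (V1 V2 : ℝ → ℝ → ℂ) (φ : ℝ → ℂ) (s : ℝ) : ℂ :=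
  -deriv (Vop V1 (deriv φ)) s + Vop V2 φ s

/-- Nyström matrix entries `W^ε_{ij}`. -/
def Wmat (V1 V2 : ℝ → ℝ → ℂ) (h ε : ℝ) (i j : ℤ) : ℂ :=
  V1 (sg h ε (i + 1)) (sg h 0 (j + 1)) - V1 (sg h ε i) (sg h 0 (j + 1))
    - V1 (sg h ε (i + 1)) (sg h 0 j) + V1 (sg h ε i) (sg h 0 j)
    + (h : ℂ) ^ 2 * V2 (tg h ε i) (tg h 0 j)

/-- Fourier coefficient of a 1-periodic function. -/
def fc (u : ℝ → ℂ) (m : ℤ) : ℂ :=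
  ∫ t in (0:ℝ)..1, u t * Complex.exp (-(2 * Real.pi * Complex.I * (m : ℂ) * (t : ℂ)))

/-- Periodic Sobolev norm of order `r`. -/
def sobNorm (r : ℝ) (u : ℝ → ℂ) : ℝ :=
  Real.sqrt (‖fc u 0‖ ^ 2 +
    ∑' m : ℤ, if m = 0 then 0 else |(m : ℝ)| ^ (2 * r) * ‖fc u m‖ ^ 2)

/-- 1-periodic step function on the ε-shifted grid with coefficients `v`. -/
def stepf (N : ℕ) (ε : ℝ) (v : ZMod N → ℂ) (s : ℝ) : ℂ :=
  v ((⌊s * N + 1 / 2 - ε⌋ : ℤ) : ZMod N)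

/-- Midpoint quadrature error matrix entries `E^ε_{ij}`. -/
def Emat (V2 : ℝ → ℝ → ℂ) (h ε : ℝ) (i j : ℤ) : ℂ :=
  (∫ s in (sg h ε i)..(sg h ε (i + 1)), ∫ t in (sg h 0 j)..(sg h 0 (j + 1)), V2 s t)
    - (h : ℂ) ^ 2 * V2 (tg h ε i) (tg h 0 j)

/-- Spectral (ℓ²-operator) norm of a complex `N×N` matrix. -/
def specNorm {N : ℕ} (M : Matrix (Fin N) (Fin N) ℂ) : ℝ :=
  ‖LinearMap.toContinuousLinearMap (Matrix.toEuclideanLin M)‖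

/-- The function `C̄₁(t) = −(1/(2πi)) log(4 sin²(πt))`. -/
def Cbar1 (t : ℝ) : ℂ :=
  -(1 / (2 * Real.pi * Complex.I)) * (Real.log (4 * Real.sin (Real.pi * t) ^ 2) : ℂ)

end

/-!
`N W^ε` acts on grid functions `x : ℤ/N → ℂ` as a discrete hypersingular operator `Op`
(`Nystrom.HypersingularData.nystromOp`), and stability means `β ‖x‖ ≤ ‖Op x‖` for large `N`. This
follows by contradiction and compactness.

*Ellipticity.* The principal part of `Op` is the mixed difference of `κ log sin²(π(s - t))`, where
`κ` is the constant diagonal value of the coefficient of the logarithm. It is a convolution, so the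
discrete Fourier transform diagonalises it. Writing `log (1 - z)` as an integral of its radial
derivative and summing a geometric progression over the `N`-th roots of unity gives a closed form
for the symbol (`Nystrom.dft_logSinDistSq`), which is bounded below exactly because `exp(2πiε)` is
not real, that is, `ε ∉ ½ℤ`. The remainder has a logarithmic coefficient vanishing on the diagonal.
Replacing `log sin²` by `log (sin² + ρ⁸)` shows that it is bounded by `θ ‖∂x‖ + C_θ ‖x‖` with `θ`
arbitrarily small. Hence `‖∂x‖ ≤ C (‖Op x‖ + ‖x‖)`. Since divided differences commute with `Op` up
to kernels differenced along the diagonal, the estimate bootstraps to all orders.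

*Compactness.* If stability fails, pick for a sequence `N → ∞` a singular vector `x` with singular
value tending to zero, normalised by `‖x‖² = N`. The adjoint of `Op` is an operator of the same
type, so the equation `Op* Op x = μ x` and regularity for both operators bound all discrete
derivatives of `x` uniformly. Rapid decay of the discrete Fourier coefficients then makes a
subsequence converge, with its first differences, uniformly to a smooth periodic `φ`.

*The limit.* Quadrature sums of logarithmic kernels on shifted grids converge uniformly to the
integral operators. Summing `Op x → 0` over grid intervals gives
`V₁φ'(s) - V₁φ'(r) = ∫_r^s V₂φ`, that is, `Wφ = 0`. Injectivity of `W` yields `φ = 0`, which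
contradicts the normalisation.
-/

noncomputable section

namespace Nystrom

open Filter MeasureTheory
open ZMod (stdAddChar dft)
open scoped ContDiff ComplexConjugate Topology FourierTransform Real

variable {N : ℕ}

/-! ### Grid functions -/

/-- Functions on the cyclic grid `ℤ/N` with the (unweighted) Euclidean norm. -/
abbrev GridFun (N : ℕ) := EuclideanSpace ℂ (ZMod N)

/-- The isometry `(shift x)ⱼ = xⱼ₊₁` of grid functions. -/
def shift [NeZero N] : GridFun N ≃ₗᵢ[ℂ] GridFun N :=
  LinearIsometryEquiv.piLpCongrLeft 2 ℂ ℂ (Equiv.subRight (1 : ZMod N))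

/-- Forward divided difference on the grid of mesh `1/N`. -/
def forwardDiff [NeZero N] : Module.End ℂ (GridFun N) :=
  (N : ℂ) • (shift.toLinearMap - 1)

/-- Backward divided difference on the grid of mesh `1/N`. -/
def backwardDiff [NeZero N] : Module.End ℂ (GridFun N) :=
  (N : ℂ) • (1 - shift.symm.toLinearMap)

section GridFun

variable [NeZero N]

@[simp]
lemma shift_apply (x : GridFun N) (j : ZMod N) : shift x j = x (j + 1) := rfl

@[simp]
lemma forwardDiff_apply (x : GridFun N) (j : ZMod N) :
    forwardDiff x j = N * (x (j + 1) - x j) := rfl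

@[simp]
lemma backwardDiff_apply (x : GridFun N) (j : ZMod N) :
    backwardDiff x j = N * (x j - x (j - 1)) := by
  simp [backwardDiff, shift, sub_eq_add_neg, mul_add]

lemma commute_forwardDiff_shift : Commute forwardDiff (shift (N := N)).toLinearMap :=
  ((Commute.refl _).sub_left (Commute.one_left _)).smul_left _

lemma forwardDiff_pow_shift (k : ℕ) (x : GridFun N) :
    (forwardDiff ^ k) (shift x) = shift ((forwardDiff ^ k) x) :=
  LinearMap.congr_fun (commute_forwardDiff_shift.pow_left k) x

lemma norm_backwardDiff (x : GridFun N) : ‖backwardDiff x‖ = ‖forwardDiff x‖ := by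
  rw [← shift.norm_map (backwardDiff x)]
  congr 1
  ext j
  simp

lemma sum_norm_le (x : GridFun N) : ∑ j, ‖x j‖ ≤ √N * ‖x‖ := by
  refine (Real.le_sqrt_of_sq_le (y := N * ‖x‖ ^ 2) ?_).trans_eq ?_
  · simpa [EuclideanSpace.norm_sq_eq, ZMod.card] using
      sq_sum_le_card_mul_sum_sq (s := Finset.univ) (f := fun j => ‖x j‖)
  · rw [Real.sqrt_mul (Nat.cast_nonneg N), Real.sqrt_sq (norm_nonneg x)]

end GridFun

/-! ### Biperiodic kernels and their divided differences -/

/-- Periodicity with period `1` in each of the two variables. -/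
def BiPeriodic {E : Type*} (F : ℝ × ℝ → E) : Prop :=
  ∀ s t, F (s + 1, t) = F (s, t) ∧ F (s, t + 1) = F (s, t)

/-- Divided difference of a kernel with step `1/N` in the direction `w`; the directions that occur
are the coordinate directions and the diagonal one `(1, 1)`. -/
def kernelDiff (N : ℕ) (w : ℝ × ℝ) (F : ℝ × ℝ → ℂ) (p : ℝ × ℝ) : ℂ :=
  N * (F (p + (1 / (N : ℝ)) • w) - F p)

namespace BiPeriodic

variable {E : Type*} {F G : ℝ × ℝ → E}

lemma add_intCast (hF : BiPeriodic F) (s t : ℝ) (m n : ℤ) : F (s + m, t + n) = F (s, t) := by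
  have periodic_fst : Function.Periodic (fun s => F (s, t + n)) 1 := fun s => (hF s _).1
  have periodic_snd : Function.Periodic (fun t => F (s, t)) 1 := fun t => (hF s t).2
  have eq_fst := (periodic_fst.int_mul m) s
  have eq_snd := (periodic_snd.int_mul n) t
  simp only [mul_one] at eq_fst eq_snd
  rw [eq_fst, eq_snd]

lemma add [Add E] (hF : BiPeriodic F) (hG : BiPeriodic G) : BiPeriodic (F + G) :=
  fun s t => ⟨by simp [(hF s t).1, (hG s t).1], by simp [(hF s t).2, (hG s t).2]⟩

lemma mul [Mul E] (hF : BiPeriodic F) (hG : BiPeriodic G) : BiPeriodic (F * G) :=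
  fun s t => ⟨by simp [(hF s t).1, (hG s t).1], by simp [(hF s t).2, (hG s t).2]⟩

lemma kernelDiff {F : ℝ × ℝ → ℂ} (hF : BiPeriodic F) (N : ℕ) (w : ℝ × ℝ) :
    BiPeriodic (kernelDiff N w F) := by
  have fst_eq := fun s t => (hF s t).1
  have snd_eq := fun s t => (hF s t).2
  refine fun s t => ⟨?_, ?_⟩
  · simp only [Nystrom.kernelDiff, Prod.mk_add_mk, Prod.smul_def, fst_eq, add_right_comm s 1]
  · simp only [Nystrom.kernelDiff, Prod.mk_add_mk, Prod.smul_def, snd_eq, add_right_comm t 1]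

lemma kernelDiff_iterate {F : ℝ × ℝ → ℂ} (hF : BiPeriodic F) (N : ℕ) (w : ℝ × ℝ) (l : ℕ) :
    BiPeriodic ((Nystrom.kernelDiff N w)^[l] F) := by
  induction l with
  | zero => exact hF
  | succ l ih =>
    rw [Function.iterate_succ_apply']
    exact ih.kernelDiff N w

end BiPeriodic

lemma kernelDiff_commute (N : ℕ) (w w' : ℝ × ℝ) :
    Function.Commute (kernelDiff N w) (kernelDiff N w') := by
  intro F
  ext p
  simp only [kernelDiff, add_right_comm p]
  ring

/-! ### Quadrature operators -/

/-- The grid point `(i + a)/N`. -/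
def gridPoint (N : ℕ) (a : ℝ) (i : ℤ) : ℝ := (i + a) / N

/-- Values of a kernel on the product of the grids `(i + a)/N` and `(j + c)/N`. The canonical
integer representatives of residues are used; for biperiodic kernels the choice is irrelevant
(`kernelMatrix_intCast`). -/
def kernelMatrix (N : ℕ) (a c : ℝ) (F : ℝ × ℝ → ℂ) : Matrix (ZMod N) (ZMod N) ℂ :=
  Matrix.of fun i j => F (gridPoint N a i.cast, gridPoint N c j.cast)

/-- The quadrature operator `(quadOp N a c F x)ᵢ = N⁻¹ ∑ⱼ F((i + a)/N, (j + c)/N) xⱼ`. -/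
def quadOp (N : ℕ) [NeZero N] (a c : ℝ) (F : ℝ × ℝ → ℂ) : Module.End ℂ (GridFun N) :=
  (N : ℂ)⁻¹ • Matrix.toEuclideanLin (kernelMatrix N a c F)

lemma gridPoint_succ (N : ℕ) (a : ℝ) (m : ℤ) :
    gridPoint N a (m + 1) = gridPoint N a m + 1 / N := by
  unfold gridPoint
  push_cast
  ring

section QuadratureOperator

variable [NeZero N]

lemma exists_gridPoint_eq_add_intCast (a : ℝ) (m : ℤ) :
    ∃ k : ℤ, gridPoint N a m = gridPoint N a (m : ZMod N).cast + k := by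
  have hN : (N : ℝ) ≠ 0 := NeZero.ne _
  obtain ⟨k, hk⟩ := (ZMod.intCast_zmod_eq_zero_iff_dvd (m - (m : ZMod N).cast) N).1 (by simp)
  refine ⟨k, ?_⟩
  have hk' : (m : ℝ) - ((m : ZMod N).cast : ℤ) = N * k := by exact_mod_cast hk
  unfold gridPoint
  field_simp
  linarith

lemma kernelMatrix_intCast (a c : ℝ) {F : ℝ × ℝ → ℂ} (hF : BiPeriodic F) (m n : ℤ) :
    kernelMatrix N a c F m n = F (gridPoint N a m, gridPoint N c n) := by
  obtain ⟨k, hk⟩ := exists_gridPoint_eq_add_intCast (N := N) a m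
  obtain ⟨l, hl⟩ := exists_gridPoint_eq_add_intCast (N := N) c n
  rw [hk, hl, hF.add_intCast]
  rfl

lemma kernelMatrix_kernelDiff (a c : ℝ) {F : ℝ × ℝ → ℂ} (hF : BiPeriodic F) (k l : ℤ)
    (i j : ZMod N) :
    kernelMatrix N a c (kernelDiff N (k, l) F) i j =
      N * (kernelMatrix N a c F (i + k) (j + l) - kernelMatrix N a c F i j) := by
  obtain ⟨m, rfl⟩ := ZMod.intCast_surjective i
  obtain ⟨n, rfl⟩ := ZMod.intCast_surjective j
  rw [← Int.cast_add, ← Int.cast_add, kernelMatrix_intCast a c hF, kernelMatrix_intCast a c hF,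
    kernelMatrix_intCast a c (hF.kernelDiff N _)]
  simp only [kernelDiff, gridPoint, Prod.smul_mk, Prod.mk_add_mk, Int.cast_add, smul_eq_mul]
  ring_nf

lemma quadOp_apply (a c : ℝ) (F : ℝ × ℝ → ℂ) (x : GridFun N) (i : ZMod N) :
    quadOp N a c F x i = (N : ℂ)⁻¹ * ∑ j, kernelMatrix N a c F i j * x j := rfl

lemma quadOp_smul (a c : ℝ) (r : ℂ) (F : ℝ × ℝ → ℂ) :
    quadOp N a c (r • F) = r • quadOp N a c F := by
  rw [quadOp, quadOp, smul_comm, ← map_smul Matrix.toEuclideanLin r]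
  rfl

lemma quadOp_add (a c : ℝ) (F G : ℝ × ℝ → ℂ) :
    quadOp N a c (F + G) = quadOp N a c F + quadOp N a c G := by
  rw [quadOp, quadOp, quadOp, ← smul_add, ← map_add]
  rfl

/-- Summation by parts. -/
lemma quadOp_kernelDiff_snd (a c : ℝ) {F : ℝ × ℝ → ℂ} (hF : BiPeriodic F) (x : GridFun N) :
    quadOp N a c (kernelDiff N (0, 1) F) x = -quadOp N a c F (backwardDiff x) := by
  ext i
  have entry := fun j => kernelMatrix_kernelDiff a c hF 0 1 i j
  simp only [Int.cast_zero, Int.cast_one, add_zero] at entry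
  have sum_shift := Equiv.sum_comp (Equiv.addRight (1 : ZMod N))
    (fun j => kernelMatrix N a c F i j * x (j - 1))
  simp only [Equiv.coe_addRight, add_sub_cancel_right] at sum_shift
  simp only [quadOp_apply, PiLp.neg_apply, entry, backwardDiff_apply, mul_assoc, sub_mul,
    mul_sub, mul_left_comm _ (N : ℂ), Finset.sum_sub_distrib, ← Finset.mul_sum,
    sum_shift, neg_sub]

lemma quadOp_kernelDiff_fst (a c : ℝ) {F : ℝ × ℝ → ℂ} (hF : BiPeriodic F) (x : GridFun N) :
    quadOp N a c (kernelDiff N (1, 0) F) x = forwardDiff (quadOp N a c F x) := by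
  ext i
  have entry := fun j => kernelMatrix_kernelDiff a c hF 1 0 i j
  simp only [Int.cast_zero, Int.cast_one, add_zero] at entry
  simp only [quadOp_apply, entry, forwardDiff_apply, mul_assoc, sub_mul, mul_sub,
    Finset.sum_sub_distrib, ← Finset.mul_sum, mul_left_comm _ (N : ℂ)]

lemma forwardDiff_quadOp (a c : ℝ) {F : ℝ × ℝ → ℂ} (hF : BiPeriodic F) (x : GridFun N) :
    forwardDiff (quadOp N a c F x) =
      quadOp N a c (kernelDiff N (1, 1) F) (shift x) + quadOp N a c F (forwardDiff x) := by
  ext i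
  have entry := fun j => kernelMatrix_kernelDiff a c hF 1 1 i j
  simp only [Int.cast_one] at entry
  have sum_shift := Equiv.sum_comp (Equiv.addRight (1 : ZMod N))
    (fun j => kernelMatrix N a c F (i + 1) j * x j)
  simp only [Equiv.coe_addRight] at sum_shift
  simp only [quadOp_apply, PiLp.add_apply, entry, forwardDiff_apply, shift_apply, mul_assoc,
    sub_mul, mul_sub, Finset.sum_sub_distrib, ← Finset.mul_sum, mul_left_comm _ (N : ℂ),
    ← sum_shift]
  ring

/-- The operator norm is at most the Hilbert–Schmidt norm. -/
lemma norm_toEuclideanLin_le {m n : Type*} [Fintype m] [Fintype n] [DecidableEq n]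
    (M : Matrix m n ℂ) {C : ℝ} (hC : 0 ≤ C) (hM : ∑ i, ∑ j, ‖M i j‖ ^ 2 ≤ C ^ 2)
    (x : EuclideanSpace ℂ n) : ‖Matrix.toEuclideanLin M x‖ ≤ C * ‖x‖ := by
  refine (pow_le_pow_iff_left₀ (norm_nonneg _) (by positivity) two_ne_zero).1 ?_
  have row_bound (i : m) :
      ‖Matrix.toEuclideanLin M x i‖ ^ 2 ≤ (∑ j, ‖M i j‖ ^ 2) * ‖x‖ ^ 2 := by
    have norm_row : ‖∑ j, M i j * x j‖ ≤ ∑ j, ‖M i j‖ * ‖x j‖ := by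
      simpa only [norm_mul] using norm_sum_le Finset.univ fun j => M i j * x j
    rw [EuclideanSpace.norm_sq_eq]
    exact (pow_le_pow_left₀ (norm_nonneg _) norm_row 2).trans
      (Finset.sum_mul_sq_le_sq_mul_sq Finset.univ (fun j => ‖M i j‖) fun j => ‖x j‖)
  calc ‖Matrix.toEuclideanLin M x‖ ^ 2
      ≤ ∑ i, (∑ j, ‖M i j‖ ^ 2) * ‖x‖ ^ 2 := by
        rw [EuclideanSpace.norm_sq_eq]
        exact Finset.sum_le_sum fun i _ => row_bound i
    _ ≤ (C * ‖x‖) ^ 2 := by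
        rw [← Finset.sum_mul, mul_pow]
        gcongr

lemma norm_quadOp_le (a c : ℝ) (F : ℝ × ℝ → ℂ) (w : ZMod N → ℝ) {C : ℝ} (hC : 0 ≤ C)
    (hF : ∀ i j, ‖kernelMatrix N a c F i j‖ ^ 2 ≤ w (i - j)) (hw : (N : ℝ)⁻¹ * ∑ k, w k ≤ C ^ 2)
    (x : GridFun N) : ‖quadOp N a c F x‖ ≤ C * ‖x‖ := by
  have hN : (0 : ℝ) < N := Nat.cast_pos.2 (NeZero.pos N)
  have row_sum (i : ZMod N) : ∑ j, ‖kernelMatrix N a c F i j‖ ^ 2 ≤ N * C ^ 2 := calc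
    _ ≤ ∑ j, w (i - j) := Finset.sum_le_sum fun j _ => hF i j
    _ = ∑ k, w k := Equiv.sum_comp (Equiv.subLeft i) w
    _ ≤ N * C ^ 2 := (inv_mul_le_iff₀ hN).1 hw
  have hilbert_schmidt : ∑ i, ∑ j, ‖kernelMatrix N a c F i j‖ ^ 2 ≤ (N * C) ^ 2 := calc
    _ ≤ ∑ _i : ZMod N, N * C ^ 2 := Finset.sum_le_sum fun i _ => row_sum i
    _ = (N * C) ^ 2 := by simp [ZMod.card]; ring
  rw [quadOp, LinearMap.smul_apply, norm_smul, norm_inv, Complex.norm_natCast,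
    inv_mul_le_iff₀ hN, ← mul_assoc]
  exact norm_toEuclideanLin_le _ (by positivity) hilbert_schmidt x

end QuadratureOperator

/-! ### Uniformly smooth families -/

/-- A family of smooth functions whose derivatives of each order are bounded uniformly over the
family and over the whole space. -/
def UniformlySmooth {ι E : Type*} [NormedAddCommGroup E] [NormedSpace ℝ E] (F : ι → E → ℂ) : Prop :=
  (∀ i, ContDiff ℝ ∞ (F i)) ∧ ∀ k : ℕ, ∃ C, ∀ i p, ‖iteratedFDeriv ℝ k (F i) p‖ ≤ C

namespace UniformlySmooth

section

variable {ι E : Type*} [NormedAddCommGroup E] [NormedSpace ℝ E] {F G : ι → E → ℂ}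

lemma contDiffAt (hF : UniformlySmooth F) (i : ι) (k : ℕ) (p : E) : ContDiffAt ℝ k (F i) p :=
  ((hF.1 i).of_le (by exact_mod_cast le_top)).contDiffAt

lemma exists_iteratedFDeriv_le (hF : UniformlySmooth F) (k : ℕ) :
    ∃ C, 0 ≤ C ∧ ∀ i p, ‖iteratedFDeriv ℝ k (F i) p‖ ≤ C := by
  obtain ⟨C, hC⟩ := hF.2 k
  exact ⟨max C 0, le_max_right _ _, fun i p => (hC i p).trans (le_max_left _ _)⟩

lemma exists_norm_le (hF : UniformlySmooth F) : ∃ C, 0 ≤ C ∧ ∀ i p, ‖F i p‖ ≤ C := by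
  simpa using hF.exists_iteratedFDeriv_le 0

lemma add (hF : UniformlySmooth F) (hG : UniformlySmooth G) :
    UniformlySmooth fun i => F i + G i := by
  refine ⟨fun i => (hF.1 i).add (hG.1 i), fun k => ?_⟩
  obtain ⟨C, hC⟩ := hF.2 k
  obtain ⟨D, hD⟩ := hG.2 k
  refine ⟨C + D, fun i p => ?_⟩
  rw [iteratedFDeriv_add_apply (hF.contDiffAt i k p) (hG.contDiffAt i k p)]
  exact (norm_add_le _ _).trans (add_le_add (hC i p) (hD i p))

lemma mul (hF : UniformlySmooth F) (hG : UniformlySmooth G) :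
    UniformlySmooth fun i => F i * G i := by
  refine ⟨fun i => (hF.1 i).mul (hG.1 i), fun k => ?_⟩
  choose C hC0 hC using hF.exists_iteratedFDeriv_le
  choose D _ hD using hG.exists_iteratedFDeriv_le
  refine ⟨∑ l ∈ Finset.range (k + 1), (k.choose l : ℝ) * C l * D (k - l), fun i p => ?_⟩
  refine (norm_iteratedFDeriv_mul_le (hF.1 i) (hG.1 i) p (n := k)
    (by exact_mod_cast le_top)).trans (Finset.sum_le_sum fun l _ => ?_)
  have := hC0 l
  gcongr
  exacts [hC l i p, hD (k - l) i p]

lemma exists_iteratedFDeriv_lipschitz (hF : UniformlySmooth F) (k : ℕ) : ∃ C, 0 ≤ C ∧ ∀ i p q,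
    ‖iteratedFDeriv ℝ k (F i) q - iteratedFDeriv ℝ k (F i) p‖ ≤ C * ‖q - p‖ := by
  obtain ⟨C, hC0, hC⟩ := hF.exists_iteratedFDeriv_le (k + 1)
  refine ⟨C, hC0, fun i p q => ?_⟩
  refine convex_univ.norm_image_sub_le_of_norm_fderiv_le (𝕜 := ℝ) (fun x _ => ?_) (fun x _ => ?_)
    (Set.mem_univ p) (Set.mem_univ q)
  · exact (hF.1 i).differentiable_iteratedFDeriv (by exact_mod_cast WithTop.coe_lt_top _) x
  · rw [norm_fderiv_iteratedFDeriv]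
    exact hC i x

lemma exists_lipschitz (hF : UniformlySmooth F) : ∃ C, 0 ≤ C ∧ ∀ i p q,
    ‖F i q - F i p‖ ≤ C * ‖q - p‖ := by
  obtain ⟨C, hC0, hC⟩ := hF.exists_iteratedFDeriv_lipschitz 0
  refine ⟨C, hC0, fun i p q => ?_⟩
  have bound := hC i p q
  simp only [iteratedFDeriv_zero_eq_comp, Function.comp_apply, ← map_sub] at bound
  simpa using bound

end

/-- By the mean value theorem: a difference quotient is controlled by one more derivative. -/
lemma kernelDiff {F : ℕ → ℝ × ℝ → ℂ} (hF : UniformlySmooth F) (w : ℝ × ℝ) :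
    UniformlySmooth fun N => kernelDiff N w (F N) := by
  have smooth_translate (N : ℕ) : ContDiff ℝ ∞ fun p => F N (p + (1 / (N : ℝ)) • w) :=
    (hF.1 N).comp (contDiff_id.add contDiff_const)
  refine ⟨fun N => contDiff_const.mul ((smooth_translate N).sub (hF.1 N)), fun k => ?_⟩
  obtain ⟨C, hC0, hC⟩ := hF.exists_iteratedFDeriv_lipschitz k
  refine ⟨C * ‖w‖, fun N p => ?_⟩
  have translate : ContDiffAt ℝ k (fun p => F N (p + (1 / (N : ℝ)) • w)) p :=
    ((smooth_translate N).of_le (by exact_mod_cast le_top)).contDiffAt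
  have kernelDiff_eq : Nystrom.kernelDiff N w (F N) =
      (N : ℂ) • ((fun p => F N (p + (1 / (N : ℝ)) • w)) - F N) := rfl
  have difference : ContDiffAt ℝ k ((fun p => F N (p + (1 / (N : ℝ)) • w)) - F N) p :=
    translate.sub (hF.contDiffAt N k p)
  have lipschitz := hC N p (p + (1 / (N : ℝ)) • w)
  rw [add_sub_cancel_left, norm_smul, Real.norm_of_nonneg (by positivity)] at lipschitz
  beta_reduce
  rw [kernelDiff_eq, iteratedFDeriv_const_smul_apply difference,
    iteratedFDeriv_sub_apply translate (hF.contDiffAt N k p), iteratedFDeriv_comp_add_right,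
    norm_smul, Complex.norm_natCast]
  rcases N.eq_zero_or_pos with rfl | hN
  · simp only [CharP.cast_eq_zero, zero_mul]
    positivity
  · calc _ ≤ (N : ℝ) * (C * (1 / N * ‖w‖)) := by gcongr
      _ = C * ‖w‖ := by field_simp

lemma kernelDiff_iterate {F : ℕ → ℝ × ℝ → ℂ} (hF : UniformlySmooth F) (w : ℝ × ℝ) (l : ℕ) :
    UniformlySmooth fun N => (Nystrom.kernelDiff N w)^[l] (F N) := by
  induction l with
  | zero => exact hF
  | succ l ih => simpa only [Function.iterate_succ_apply'] using ih.kernelDiff w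

end UniformlySmooth

namespace BiPeriodic

lemma exists_norm_le_of_continuous {E : Type*} [NormedAddCommGroup E] {G : ℝ × ℝ → E}
    (hG : BiPeriodic G) (hc : Continuous G) : ∃ C, ∀ p, ‖G p‖ ≤ C := by
  have unit_square_compact : IsCompact (Set.Icc ((0 : ℝ), (0 : ℝ)) (1, 1)) := isCompact_Icc
  obtain ⟨C, hC⟩ := unit_square_compact.exists_bound_of_continuousOn hc.continuousOn
  refine ⟨C, fun p => ?_⟩
  have eq_fract : G p = G (Int.fract p.1, Int.fract p.2) := by
    simpa using hG.add_intCast (Int.fract p.1) (Int.fract p.2) ⌊p.1⌋ ⌊p.2⌋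
  rw [eq_fract]
  exact hC _ ⟨⟨Int.fract_nonneg _, Int.fract_nonneg _⟩,
    ⟨(Int.fract_lt_one _).le, (Int.fract_lt_one _).le⟩⟩

lemma iteratedFDeriv {F : ℝ × ℝ → ℂ} (hF : BiPeriodic F) (k : ℕ) :
    BiPeriodic (iteratedFDeriv ℝ k F) := by
  have of_translate (v : ℝ × ℝ) (hv : (fun p => F (p + v)) = F) (p : ℝ × ℝ) :
      _root_.iteratedFDeriv ℝ k F (p + v) = _root_.iteratedFDeriv ℝ k F p := by
    rw [← iteratedFDeriv_comp_add_right, hv]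
  refine fun s t => ⟨?_, ?_⟩
  · simpa using of_translate (1, 0) (by ext ⟨a, b⟩; simpa using (hF a b).1) (s, t)
  · simpa using of_translate (0, 1) (by ext ⟨a, b⟩; simpa using (hF a b).2) (s, t)

lemma uniformlySmooth_const {ι : Type*} {F : ℝ × ℝ → ℂ} (hF : BiPeriodic F)
    (hs : ContDiff ℝ ∞ F) : UniformlySmooth fun _ : ι => F := by
  refine ⟨fun _ => hs, fun k => ?_⟩
  obtain ⟨C, hC⟩ := (hF.iteratedFDeriv k).exists_norm_le_of_continuous
    (hs.continuous_iteratedFDeriv (by exact_mod_cast le_top))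
  exact ⟨C, fun _ => hC⟩

end BiPeriodic

/-! ### The distance to the diagonal, measured by `|sin π(s - t)|` -/

lemma abs_sin_pi_mul_add_intCast (x : ℝ) (n : ℤ) :
    |Real.sin (π * (x + n))| = |Real.sin (π * x)| := by
  rw [mul_add, mul_comm π (n : ℝ), Real.sin_add_int_mul_pi, abs_mul]
  rcases n.even_or_odd with h | h <;> simp [h.neg_one_zpow]

lemma two_mul_abs_sub_round_le (x : ℝ) : 2 * |x - round x| ≤ |Real.sin (π * x)| := by
  have sin_eq : |Real.sin (π * x)| = |Real.sin (π * (x - round x))| := by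
    rw [← abs_sin_pi_mul_add_intCast (x - round x) (round x), sub_add_cancel]
  rw [sin_eq]
  have le_half : |π * (x - round x)| ≤ π / 2 := by
    rw [abs_mul, abs_of_pos Real.pi_pos]
    nlinarith [Real.pi_pos, abs_sub_round x]
  refine (Real.mul_abs_le_abs_sin le_half).trans_eq' ?_
  rw [abs_mul, abs_of_pos Real.pi_pos]
  field_simp

lemma UniformlySmooth.exists_norm_le_mul_abs_sin {ι : Type*} {F : ι → ℝ × ℝ → ℂ}
    (hF : UniformlySmooth F) (hp : ∀ i, BiPeriodic (F i)) (h0 : ∀ i s, F i (s, s) = 0) :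
    ∃ C, 0 ≤ C ∧ ∀ i p, ‖F i p‖ ≤ C * |Real.sin (π * (p.1 - p.2))| := by
  obtain ⟨C, hC0, hC⟩ := hF.exists_lipschitz
  refine ⟨C, hC0, fun i ⟨s, t⟩ => ?_⟩
  have vanish : F i (t + round (s - t), t) = 0 := by
    simpa [h0] using (hp i).add_intCast t t (round (s - t)) 0
  calc ‖F i (s, t)‖ ≤ C * ‖(s, t) - (t + round (s - t), t)‖ := by
        simpa [vanish] using hC i (t + round (s - t), t) (s, t)
    _ = C * |s - t - round (s - t)| := by
        rw [Prod.mk_sub_mk, Prod.norm_mk, sub_self, norm_zero, Real.norm_eq_abs,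
          max_eq_left (abs_nonneg _), sub_add_eq_sub_sub]
    _ ≤ C * |Real.sin (π * (s - t))| := by
        have := two_mul_abs_sub_round_le (s - t)
        have := abs_nonneg (s - t - round (s - t))
        exact mul_le_mul_of_nonneg_left (by linarith) hC0

/-- The value of `|sin π(s - t)|` at points `s`, `t` of two grids whose offsets differ by `ε`, as a
function of the difference `k` of their indices. -/
def sinDist (N : ℕ) (ε : ℝ) (k : ZMod N) : ℝ := |Real.sin (π * gridPoint N ε k.cast)|

section sinDist

variable [NeZero N]

lemma sinDist_intCast (ε : ℝ) (m : ℤ) :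
    sinDist N ε (m : ZMod N) = |Real.sin (π * gridPoint N ε m)| := by
  obtain ⟨k, hk⟩ := exists_gridPoint_eq_add_intCast (N := N) ε m
  rw [hk, abs_sin_pi_mul_add_intCast]
  rfl

lemma abs_sin_gridPoint_sub (a c : ℝ) (m n : ℤ) :
    |Real.sin (π * (gridPoint N a m - gridPoint N c n))| = sinDist N (a - c) (m - n : ZMod N) := by
  rw [← Int.cast_sub, sinDist_intCast]
  congr 3
  unfold gridPoint
  push_cast
  ring

lemma two_mul_div_le_sinDist {ε d : ℝ} (hd : ∀ k : ℤ, d ≤ |ε - k|) (k : ZMod N) :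
    2 * d / N ≤ sinDist N ε k := by
  have hN : (0 : ℝ) < N := Nat.cast_pos.2 (NeZero.pos N)
  obtain ⟨m, rfl⟩ := ZMod.intCast_surjective k
  rw [sinDist_intCast]
  refine le_trans ?_ (two_mul_abs_sub_round_le _)
  set r := round (gridPoint N ε m)
  have sub_eq : gridPoint N ε m - r = (ε - (N * r - m : ℤ)) / N := by
    unfold gridPoint
    push_cast
    field_simp
    ring
  rw [sub_eq, abs_div, abs_of_pos hN, mul_div_assoc]
  gcongr
  exact hd _

lemma exists_pos_le_abs_sub_intCast {ε : ℝ} (hε : ∀ k : ℤ, ε ≠ k) :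
    ∃ d, 0 < d ∧ ∀ k : ℤ, d ≤ |ε - k| :=
  ⟨|ε - round ε|, abs_pos.2 (sub_ne_zero.2 (hε _)), round_le ε⟩

lemma sinDist_pos {ε : ℝ} (hε : ∀ k : ℤ, ε ≠ k) (k : ZMod N) : 0 < sinDist N ε k := by
  have hN : (0 : ℝ) < N := Nat.cast_pos.2 (NeZero.pos N)
  obtain ⟨d, hd0, hd⟩ := exists_pos_le_abs_sub_intCast hε
  exact lt_of_lt_of_le (by positivity) (two_mul_div_le_sinDist hd k)

lemma sinDist_eq_sinDist_fract (ε : ℝ) (k : ZMod N) :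
    sinDist N ε k = sinDist N (Int.fract ε) (k + (⌊ε⌋ : ℤ)) := by
  obtain ⟨m, rfl⟩ := ZMod.intCast_surjective k
  rw [← Int.cast_add, sinDist_intCast, sinDist_intCast]
  congr 3
  unfold gridPoint
  rw [Int.fract]
  push_cast
  ring

end sinDist

lemma inv_sqrt_abs_sin_le {x : ℝ} (hx0 : 0 < x) (hx1 : x < 1) :
    1 / √|Real.sin (π * x)| ≤ 1 / √x + 1 / √(1 - x) := by
  have dist_le := two_mul_abs_sub_round_le x
  rw [abs_sub_round_eq_min, Int.fract_eq_self.2 ⟨hx0.le, hx1⟩] at dist_le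
  have hx1' := sub_pos.2 hx1
  rcases min_cases x (1 - x) with ⟨h, -⟩ | ⟨h, -⟩ <;> rw [h] at dist_le
  · exact (one_div_le_one_div_of_le (Real.sqrt_pos.2 hx0) (Real.sqrt_le_sqrt (by linarith))).trans
      (le_add_of_nonneg_right (by positivity))
  · exact (one_div_le_one_div_of_le (Real.sqrt_pos.2 hx1') (Real.sqrt_le_sqrt (by linarith))).trans
      (le_add_of_nonneg_left (by positivity))

lemma one_div_sqrt_le_two_mul_sqrt_sub (n : ℕ) :
    1 / √((n : ℝ) + 1) ≤ 2 * (√((n : ℝ) + 1) - √n) := by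
  have sq_succ : √((n : ℝ) + 1) ^ 2 = n + 1 := Real.sq_sqrt (by positivity)
  have sq_self : √(n : ℝ) ^ 2 = n := Real.sq_sqrt (by positivity)
  rw [div_le_iff₀ (Real.sqrt_pos.2 (by positivity))]
  nlinarith [sq_nonneg (√((n : ℝ) + 1) - √n)]

lemma sum_inv_sqrt_le {e : ℝ} (he : 0 < e) (n : ℕ) :
    ∑ k ∈ Finset.range (n + 1), 1 / √(k + e) ≤ 1 / √e + 2 * √n := by
  induction n with
  | zero => simp
  | succ n ih =>
    rw [Finset.sum_range_succ]
    have last_le : 1 / √((n + 1 : ℕ) + e) ≤ 1 / √((n : ℝ) + 1) := by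
      push_cast
      exact one_div_le_one_div_of_le (Real.sqrt_pos.2 (by positivity))
        (Real.sqrt_le_sqrt (by linarith))
    have := one_div_sqrt_le_two_mul_sqrt_sub n
    push_cast at last_le ⊢
    linarith

lemma average_inv_sqrt_le [NeZero N] {e : ℝ} (he : 0 < e) :
    (N : ℝ)⁻¹ * ∑ k ∈ Finset.range N, 1 / √((k + e) / N) ≤ 1 / √e + 2 := by
  obtain ⟨n, rfl⟩ := Nat.exists_eq_succ_of_ne_zero (NeZero.ne N)
  have sqrt_pos : 1 ≤ √((n.succ : ℕ) : ℝ) := Real.one_le_sqrt.2 (by push_cast; simp)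
  have sqrt_sq : √((n.succ : ℕ) : ℝ) ^ 2 = n.succ := Real.sq_sqrt (by positivity)
  have sqrt_le : √(n : ℝ) ≤ √((n.succ : ℕ) : ℝ) := Real.sqrt_le_sqrt (by simp)
  have term_eq (k : ℕ) : 1 / √((k + e) / (n.succ : ℕ)) = √(n.succ : ℕ) * (1 / √(k + e)) := by
    rw [Real.sqrt_div (by positivity), one_div_div, mul_one_div]
  simp only [term_eq, ← Finset.mul_sum]
  have sum_le := sum_inv_sqrt_le he n
  have e_nonneg : 0 ≤ 1 / √e := by positivity
  generalize √((n.succ : ℕ) : ℝ) = q at *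
  rw [← sqrt_sq]
  calc (q ^ 2)⁻¹ * (q * ∑ k ∈ Finset.range (n + 1), 1 / √(k + e))
      ≤ (q ^ 2)⁻¹ * (q * (1 / √e * q + 2 * q)) := by
        gcongr
        nlinarith
    _ = 1 / √e + 2 := by field_simp

lemma sum_zmod_eq_sum_range [NeZero N] {M : Type*} [AddCommMonoid M] (f : ℤ → M) :
    ∑ k : ZMod N, f k.cast = ∑ k ∈ Finset.range N, f k := by
  obtain ⟨n, rfl⟩ := Nat.exists_eq_succ_of_ne_zero (NeZero.ne N)
  exact Fin.sum_univ_eq_sum_range (fun k => f k) (n + 1)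

lemma average_inv_sqrt_sinDist_le [NeZero N] {e : ℝ} (he0 : 0 < e) (he1 : e < 1) :
    (N : ℝ)⁻¹ * ∑ k : ZMod N, 1 / √(sinDist N e k) ≤ (1 / √e + 2) + (1 / √(1 - e) + 2) := by
  have hN : (0 : ℝ) < N := Nat.cast_pos.2 (NeZero.pos N)
  have term_le : ∀ k ∈ Finset.range N, 1 / √|Real.sin (π * gridPoint N e k)| ≤
      1 / √((k + e) / N) + 1 / √(((N - 1 - k : ℕ) + (1 - e)) / N) := by
    intro k hk
    have hk' : (k : ℝ) + 1 ≤ N := by exact_mod_cast Finset.mem_range.1 hk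
    have reflect : (((N - 1 - k : ℕ) : ℝ) + (1 - e)) / N = 1 - (k + e) / N := by
      rw [Nat.sub_sub, Nat.cast_sub (by have := Finset.mem_range.1 hk; omega)]
      push_cast
      field_simp
      ring
    have point_eq : gridPoint N e k = (k + e) / N := by simp [gridPoint]
    rw [reflect, point_eq]
    exact inv_sqrt_abs_sin_le (by positivity) ((div_lt_one hN).2 (by linarith))
  calc (N : ℝ)⁻¹ * ∑ k : ZMod N, 1 / √(sinDist N e k)
      = (N : ℝ)⁻¹ * ∑ k ∈ Finset.range N, 1 / √|Real.sin (π * gridPoint N e k)| := by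
        rw [← sum_zmod_eq_sum_range fun k : ℤ => 1 / √|Real.sin (π * gridPoint N e k)|]
        rfl
    _ ≤ (N : ℝ)⁻¹ * ∑ k ∈ Finset.range N,
          (1 / √((k + e) / N) + 1 / √(((N - 1 - k : ℕ) + (1 - e)) / N)) := by
        gcongr with k hk
        exact term_le k hk
    _ = (N : ℝ)⁻¹ * ∑ k ∈ Finset.range N, 1 / √((k + e) / N) +
          (N : ℝ)⁻¹ * ∑ k ∈ Finset.range N, 1 / √((k + (1 - e)) / N) := by
        rw [Finset.sum_add_distrib, mul_add,
          Finset.sum_range_reflect fun k => 1 / √(((k : ℝ) + (1 - e)) / N)]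
    _ ≤ _ := add_le_add (average_inv_sqrt_le he0) (average_inv_sqrt_le (by linarith))

lemma exists_average_inv_sqrt_sinDist_le {ε : ℝ} (hε : ∀ k : ℤ, ε ≠ k) :
    ∃ C, 0 ≤ C ∧ ∀ (N : ℕ) [NeZero N], (N : ℝ)⁻¹ * ∑ k, 1 / √(sinDist N ε k) ≤ C := by
  have fract_pos : 0 < Int.fract ε := Int.fract_pos.2 (hε _)
  refine ⟨(1 / √(Int.fract ε) + 2) + (1 / √(1 - Int.fract ε) + 2), by positivity, fun N _ => ?_⟩
  have sum_shift := Equiv.sum_comp (Equiv.addRight ((⌊ε⌋ : ℤ) : ZMod N))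
    fun k => 1 / √(sinDist N (Int.fract ε) k)
  simp only [Equiv.coe_addRight] at sum_shift
  simp only [sinDist_eq_sinDist_fract ε, sum_shift]
  exact average_inv_sqrt_sinDist_le fract_pos (Int.fract_lt_one ε)

/-! ### The logarithmic kernel and its regularization -/

/-- The kernel `log(sin²(π(s - t)))`. On the diagonal, where it is singular, its value is `0`. -/
def logSinSq (p : ℝ × ℝ) : ℂ := (Real.log (Real.sin (π * (p.1 - p.2)) ^ 2) : ℂ)

/-- The regularization `log(sin²(π(s - t)) + η)` of `logSinSq`. -/
def regLogSinSq (η : ℝ) (p : ℝ × ℝ) : ℂ := (Real.log (Real.sin (π * (p.1 - p.2)) ^ 2 + η) : ℂ)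

lemma biPeriodic_comp_sin_sq {E : Type*} (f : ℝ → E) :
    BiPeriodic fun p : ℝ × ℝ => f (Real.sin (π * (p.1 - p.2)) ^ 2) := by
  have sin_sq_add_one (s : ℝ) : Real.sin (π * (s + 1)) ^ 2 = Real.sin (π * s) ^ 2 := by
    rw [mul_add, mul_one, Real.sin_add_pi, neg_sq]
  refine fun s t => ⟨?_, ?_⟩
  · simp only [add_sub_right_comm, sin_sq_add_one]
  · have sub_add_one : s - t = s - (t + 1) + 1 := by ring
    simp only [sub_add_one, sin_sq_add_one]

lemma biPeriodic_logSinSq : BiPeriodic logSinSq :=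
  biPeriodic_comp_sin_sq fun x => (Real.log x : ℂ)

lemma biPeriodic_regLogSinSq (η : ℝ) : BiPeriodic (regLogSinSq η) :=
  biPeriodic_comp_sin_sq fun x => (Real.log (x + η) : ℂ)

lemma biPeriodic_logSinSq_sub_regLogSinSq (η : ℝ) : BiPeriodic (logSinSq - regLogSinSq η) :=
  biPeriodic_comp_sin_sq fun x => (Real.log x : ℂ) - (Real.log (x + η) : ℂ)

lemma contDiff_regLogSinSq {η : ℝ} (hη : 0 < η) : ContDiff ℝ ∞ (regLogSinSq η) := by
  refine Complex.ofRealCLM.contDiff.comp (ContDiff.log ?_ fun p => by positivity)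
  refine ContDiff.add (ContDiff.pow (Real.contDiff_sin.comp ?_) 2) contDiff_const
  exact contDiff_const.mul (contDiff_fst.sub contDiff_snd)

lemma kernelDiff_diag_mul_logSinSq (N : ℕ) (B : ℝ × ℝ → ℂ) :
    kernelDiff N (1, 1) (B * logSinSq) = kernelDiff N (1, 1) B * logSinSq := by
  ext p
  have invariant : logSinSq (p + (1 / (N : ℝ)) • (1, 1)) = logSinSq p := by simp [logSinSq]
  simp only [kernelDiff, Pi.mul_apply, invariant]
  ring

/-- The majorant `ρ u^(-1/4)` of logarithmic singularities; its square is summable over grids. -/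
def quarterWeight (ρ u : ℝ) : ℝ := ρ / √(√u)

/-- The regularization error `log(u² + ρ⁸) - log(u²)`. The exponent makes it a function of the
eighth power of `quarterWeight ρ u`. -/
def regError (ρ u : ℝ) : ℝ := Real.log (u ^ 2 + ρ ^ 8) - Real.log (u ^ 2)

lemma quarterWeight_nonneg {ρ : ℝ} (hρ : 0 ≤ ρ) (u : ℝ) : 0 ≤ quarterWeight ρ u := by
  unfold quarterWeight
  positivity

lemma quarterWeight_sq (ρ u : ℝ) : quarterWeight ρ u ^ 2 = ρ ^ 2 * (1 / √u) := by
  rw [quarterWeight, div_pow, Real.sq_sqrt (Real.sqrt_nonneg _), mul_one_div]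

lemma quarterWeight_pow_eight (ρ : ℝ) {u : ℝ} (hu : 0 ≤ u) :
    quarterWeight ρ u ^ 8 = ρ ^ 8 / u ^ 2 := calc
  quarterWeight ρ u ^ 8 = (quarterWeight ρ u ^ 2) ^ 4 := by ring
  _ = ρ ^ 8 / (√u ^ 2) ^ 2 := by rw [quarterWeight_sq]; ring
  _ = ρ ^ 8 / u ^ 2 := by rw [Real.sq_sqrt hu]

lemma one_le_quarterWeight_one {u : ℝ} (hu : 0 < u) (hu1 : u ≤ 1) : 1 ≤ quarterWeight 1 u := by
  rw [quarterWeight, one_le_div (Real.sqrt_pos.2 (Real.sqrt_pos.2 hu))]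
  exact Real.sqrt_le_one.2 (Real.sqrt_le_one.2 hu1)

lemma abs_log_sq_le {u : ℝ} (hu : 0 < u) (hu1 : u ≤ 1) :
    |Real.log (u ^ 2)| ≤ 8 * quarterWeight 1 u := by
  have log_eq : Real.log (u ^ 2) = -(8 * Real.log (quarterWeight 1 u)) := by
    have inv_eq : u ^ 2 = (quarterWeight 1 u ^ 8)⁻¹ := by simp [quarterWeight_pow_eight 1 hu.le]
    rw [inv_eq, Real.log_inv, Real.log_pow, Nat.cast_ofNat]
  have weight_pos := one_pos.trans_le (one_le_quarterWeight_one hu hu1)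
  rw [abs_of_nonpos (Real.log_nonpos (by positivity) (pow_le_one₀ hu.le hu1)), log_eq, neg_neg]
  linarith [Real.log_le_sub_one_of_pos weight_pos]

lemma regError_eq {ρ u : ℝ} (hρ : 0 < ρ) (hu : 0 < u) :
    regError ρ u = Real.log (1 + quarterWeight ρ u ^ 8) := by
  rw [regError, ← Real.log_div (by positivity) (by positivity), quarterWeight_pow_eight ρ hu.le]
  congr 1
  field_simp

lemma regError_nonneg {ρ u : ℝ} (hρ : 0 < ρ) (hu : 0 < u) : 0 ≤ regError ρ u := by
  have := quarterWeight_nonneg hρ.le u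
  rw [regError_eq hρ hu]
  exact Real.log_nonneg (le_add_of_nonneg_right (by positivity))

lemma regError_le {ρ u : ℝ} (hρ : 0 < ρ) (hu : 0 < u) :
    regError ρ u ≤ 8 * quarterWeight ρ u := by
  have weight_nonneg := quarterWeight_nonneg hρ.le u
  have pow_le : 1 + quarterWeight ρ u ^ 8 ≤ (1 + quarterWeight ρ u) ^ 8 := by
    simpa using pow_add_pow_le zero_le_one weight_nonneg (n := 8) (by norm_num)
  calc regError ρ u = Real.log (1 + quarterWeight ρ u ^ 8) := regError_eq hρ hu
    _ ≤ Real.log ((1 + quarterWeight ρ u) ^ 8) := Real.log_le_log (by positivity) pow_le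
    _ = 8 * Real.log (1 + quarterWeight ρ u) := by rw [Real.log_pow, Nat.cast_ofNat]
    _ ≤ 8 * quarterWeight ρ u := by
        linarith [Real.log_le_sub_one_of_pos (x := 1 + quarterWeight ρ u) (by positivity)]

lemma pow_eight_div_one_add_le {q : ℝ} (hq : 0 ≤ q) : q ^ 8 / (1 + q ^ 8) ≤ q := by
  rw [div_le_iff₀ (by positivity)]
  rcases le_total q 1 with hq1 | hq1
  · have : q ^ 8 ≤ q := pow_le_of_le_one hq hq1 (by norm_num)
    have : 0 ≤ q * q ^ 8 := by positivity
    linarith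
  · nlinarith [pow_nonneg hq 8]

lemma regError_antitone {ρ u v : ℝ} (hρ : 0 < ρ) (hu : 0 < u) (huv : u ≤ v) :
    regError ρ v ≤ regError ρ u := by
  have hv := hu.trans_le huv
  rw [regError_eq hρ hu, regError_eq hρ hv, quarterWeight_pow_eight ρ hu.le,
    quarterWeight_pow_eight ρ hv.le]
  gcongr

lemma mul_regError_sub_le {ρ u v κ : ℝ} (hρ : 0 < ρ) (hu : 0 < u) (huv : u ≤ v)
    (hκ : v ≤ κ * u) :
    u * (regError ρ u - regError ρ v) ≤ (κ + 1) * (v - u) * quarterWeight ρ v := by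
  have hv := hu.trans_le huv
  have := sub_nonneg.2 huv
  have := quarterWeight_nonneg hρ.le u
  have weight_v_nonneg := quarterWeight_nonneg hρ.le v
  set q := quarterWeight ρ v
  have weight_u : quarterWeight ρ u ^ 8 = q ^ 8 * (v ^ 2 / u ^ 2) := by
    rw [quarterWeight_pow_eight ρ hu.le, quarterWeight_pow_eight ρ hv.le]
    field_simp
  have ratio_le : (v + u) / u ≤ κ + 1 := by
    rw [div_le_iff₀ hu]
    linarith
  rw [regError_eq hρ hu, regError_eq hρ hv, ← Real.log_div (by positivity) (by positivity)]
  calc u * Real.log ((1 + quarterWeight ρ u ^ 8) / (1 + q ^ 8))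
      ≤ u * ((1 + quarterWeight ρ u ^ 8) / (1 + q ^ 8) - 1) := by
        gcongr
        exact Real.log_le_sub_one_of_pos (by positivity)
    _ = q ^ 8 / (1 + q ^ 8) * ((v - u) * ((v + u) / u)) := by
        rw [weight_u]
        field_simp
        ring
    _ ≤ q * ((v - u) * (κ + 1)) := by
        gcongr
        exact pow_eight_div_one_add_le weight_v_nonneg
    _ = (κ + 1) * (v - u) * q := by ring

lemma mul_abs_regError_sub_le {ρ u v κ : ℝ} (hρ : 0 < ρ) (hu : 0 < u) (hv : 0 < v)
    (hκ : v ≤ κ * u) (hκ' : u ≤ κ * v) (hκ1 : 1 ≤ κ) :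
    u * |regError ρ u - regError ρ v| ≤
      κ * (κ + 1) * |v - u| * (quarterWeight ρ u + quarterWeight ρ v) := by
  have weight_u_nonneg := quarterWeight_nonneg hρ.le u
  have weight_v_nonneg := quarterWeight_nonneg hρ.le v
  rcases le_total u v with huv | hvu
  · rw [abs_of_nonneg (sub_nonneg.2 (regError_antitone hρ hu huv)),
      abs_of_nonneg (sub_nonneg.2 huv)]
    have : 0 ≤ v - u := sub_nonneg.2 huv
    calc u * (regError ρ u - regError ρ v) ≤ 1 * (κ + 1) * (v - u) * (0 + quarterWeight ρ v) := by
          simpa using mul_regError_sub_le hρ hu huv hκ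
      _ ≤ _ := by gcongr
  · rw [abs_sub_comm, abs_of_nonneg (sub_nonneg.2 (regError_antitone hρ hv hvu)), abs_sub_comm,
      abs_of_nonneg (sub_nonneg.2 hvu)]
    have : 0 ≤ u - v := sub_nonneg.2 hvu
    calc u * (regError ρ v - regError ρ u) ≤ κ * v * (regError ρ v - regError ρ u) := by
          have := sub_nonneg.2 (regError_antitone hρ hv hvu)
          exact mul_le_mul_of_nonneg_right hκ' this
      _ = κ * (v * (regError ρ v - regError ρ u)) := by ring
      _ ≤ κ * ((κ + 1) * (u - v) * (quarterWeight ρ u + 0)) := by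
          rw [add_zero]
          exact mul_le_mul_of_nonneg_left (mul_regError_sub_le hρ hv hvu hκ') (by positivity)
      _ ≤ κ * ((κ + 1) * (u - v) * (quarterWeight ρ u + quarterWeight ρ v)) := by gcongr
      _ = _ := by ring

lemma logSinSq_eq (p : ℝ × ℝ) :
    logSinSq p = (Real.log (|Real.sin (π * (p.1 - p.2))| ^ 2) : ℂ) := by
  rw [logSinSq, sq_abs]

lemma logSinSq_sub_regLogSinSq (ρ : ℝ) (p : ℝ × ℝ) :
    (logSinSq - regLogSinSq (ρ ^ 8)) p =
      -(regError ρ |Real.sin (π * (p.1 - p.2))| : ℂ) := by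
  rw [Pi.sub_apply, logSinSq, regLogSinSq, regError, sq_abs]
  push_cast
  ring

/-! ### Quadrature operators with logarithmic kernels -/

lemma UniformlySmooth.exists_norm_mul_logSinSq_add_le {A K : ℕ → ℝ × ℝ → ℂ}
    (hA : UniformlySmooth A) (hK : UniformlySmooth K) :
    ∃ C, 0 ≤ C ∧ ∀ N p, 0 < |Real.sin (π * (p.1 - p.2))| →
      ‖(A N * logSinSq + K N) p‖ ≤ C * quarterWeight 1 |Real.sin (π * (p.1 - p.2))| := by
  obtain ⟨C, hC0, hC⟩ := hA.exists_norm_le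
  obtain ⟨D, hD0, hD⟩ := hK.exists_norm_le
  refine ⟨C * 8 + D, by positivity, fun N p hp => ?_⟩
  have log_le : ‖logSinSq p‖ ≤ 8 * quarterWeight 1 |Real.sin (π * (p.1 - p.2))| := by
    rw [logSinSq_eq, Complex.norm_real]
    exact abs_log_sq_le hp (Real.abs_sin_le_one _)
  have one_le := one_le_quarterWeight_one hp (Real.abs_sin_le_one _)
  set q := quarterWeight 1 |Real.sin (π * (p.1 - p.2))|
  calc ‖(A N * logSinSq + K N) p‖ ≤ ‖A N p‖ * ‖logSinSq p‖ + ‖K N p‖ :=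
        (norm_add_le _ _).trans (by rw [Pi.mul_apply, norm_mul])
    _ ≤ C * (8 * q) + D * q := by
        gcongr
        · exact hC N p
        · exact (hD N p).trans (le_mul_of_one_le_right hD0 one_le)
    _ = (C * 8 + D) * q := by ring

lemma exists_norm_quadOp_le_of_uniformlySmooth {F : ℕ → ℝ × ℝ → ℂ} (hF : UniformlySmooth F)
    (a c : ℝ) : ∃ C, 0 ≤ C ∧ ∀ (N : ℕ) [NeZero N] (x : GridFun N),
      ‖quadOp N a c (F N) x‖ ≤ C * ‖x‖ := by
  obtain ⟨C, hC0, hC⟩ := hF.exists_norm_le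
  refine ⟨C, hC0, fun N _ x => ?_⟩
  refine norm_quadOp_le a c _ (fun _ => C ^ 2) hC0 (fun i j => ?_) ?_ x
  · exact pow_le_pow_left₀ (norm_nonneg _) (hC N _) 2
  · have hN : (N : ℝ) ≠ 0 := NeZero.ne _
    simp [ZMod.card, hN]

lemma exists_norm_quadOp_logKernel_le {A K : ℕ → ℝ × ℝ → ℂ} (hA : UniformlySmooth A)
    (hK : UniformlySmooth K) (hAp : ∀ N, BiPeriodic (A N)) (hKp : ∀ N, BiPeriodic (K N))
    {a c : ℝ} (hε : ∀ k : ℤ, a - c ≠ k) :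
    ∃ C, 0 ≤ C ∧ ∀ (N : ℕ) [NeZero N] (x : GridFun N),
      ‖quadOp N a c (A N * logSinSq + K N) x‖ ≤ C * ‖x‖ := by
  obtain ⟨C, -, hC⟩ := hA.exists_norm_mul_logSinSq_add_le hK
  obtain ⟨S, hS0, hS⟩ := exists_average_inv_sqrt_sinDist_le hε
  refine ⟨√(C ^ 2 * S), by positivity, fun N _ x => ?_⟩
  refine norm_quadOp_le a c _ (fun k => C ^ 2 * (1 / √(sinDist N (a - c) k))) (by positivity)
    (fun i j => ?_) ?_ x
  · obtain ⟨m, rfl⟩ := ZMod.intCast_surjective i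
    obtain ⟨n, rfl⟩ := ZMod.intCast_surjective j
    have dist_pos := sinDist_pos hε (m - n : ZMod N)
    rw [kernelMatrix_intCast a c (((hAp N).mul biPeriodic_logSinSq).add (hKp N))]
    rw [← abs_sin_gridPoint_sub] at dist_pos ⊢
    refine (pow_le_pow_left₀ (norm_nonneg _)
      (hC N (gridPoint N a m, gridPoint N c n) dist_pos) 2).trans_eq ?_
    rw [mul_pow, quarterWeight_sq, one_pow, one_mul]
  · rw [Real.sq_sqrt (by positivity), ← Finset.mul_sum, mul_left_comm]
    gcongr
    exact hS N

lemma le_one_add_mul_of_abs_sub_le {N : ℕ} {d u v : ℝ} (hd : 0 < d) (hu : 2 * d / N ≤ u)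
    (huv : |v - u| ≤ π / N) : v ≤ (1 + π / (2 * d)) * u := by
  have : π / N ≤ π / (2 * d) * u := calc
    π / N = π / (2 * d) * (2 * d / N) := by field_simp
    _ ≤ π / (2 * d) * u := by gcongr
  linarith [(abs_le.1 huv).2]

lemma abs_abs_sin_sub_abs_sin_le (x y : ℝ) : |(|Real.sin x| - |Real.sin y|)| ≤ |x - y| :=
  (abs_abs_sub_abs_le _ _).trans (Real.abs_sin_sub_sin_le x y)

lemma abs_abs_sin_shift_sub_le (N : ℕ) (s t : ℝ) :
    |(|Real.sin (π * (s + 1 / N - t))| - |Real.sin (π * (s - t))|)| ≤ π / N := by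
  refine (abs_abs_sin_sub_abs_sin_le _ _).trans_eq ?_
  rw [← mul_sub, add_sub_right_comm, add_sub_cancel_left, abs_of_nonneg (by positivity),
    mul_one_div]

lemma kernelDiff_mul_regError (N : ℕ) (B : ℝ × ℝ → ℂ) (ρ s t : ℝ) :
    kernelDiff N (1, 0) (B * (logSinSq - regLogSinSq (ρ ^ 8))) (s, t) =
      -(kernelDiff N (1, 0) B (s, t) * regError ρ |Real.sin (π * (s + 1 / N - t))|) +
        N * (B (s, t) * (regError ρ |Real.sin (π * (s - t))| -
          regError ρ |Real.sin (π * (s + 1 / N - t))| : ℝ)) := by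
  simp only [kernelDiff, Pi.mul_apply, logSinSq_sub_regLogSinSq, Prod.smul_mk, Prod.mk_add_mk,
    smul_eq_mul, mul_one, mul_zero, add_zero]
  push_cast
  ring

/-- The factor `N` of the divided difference is compensated by the vanishing of `B` on the
diagonal. -/
lemma exists_norm_kernelDiff_mul_regError_le {B : ℕ → ℝ × ℝ → ℂ} (hB : UniformlySmooth B)
    (hBp : ∀ N, BiPeriodic (B N)) (hB0 : ∀ N s, B N (s, s) = 0) {d : ℝ} (hd : 0 < d) :
    ∃ D, 0 ≤ D ∧ ∀ ρ, 0 < ρ → ∀ (N : ℕ) [NeZero N] (s t : ℝ) {u v : ℝ},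
      |Real.sin (π * (s - t))| = u → |Real.sin (π * (s + 1 / N - t))| = v →
      2 * d / N ≤ u → 2 * d / N ≤ v →
      ‖kernelDiff N (1, 0) (B N * (logSinSq - regLogSinSq (ρ ^ 8))) (s, t)‖ ≤
        D * (quarterWeight ρ u + quarterWeight ρ v) := by
  obtain ⟨C₁, hC₁0, hC₁⟩ := hB.exists_norm_le_mul_abs_sin hBp hB0
  obtain ⟨C₂, hC₂0, hC₂⟩ := (hB.kernelDiff (1, 0)).exists_norm_le
  set κ : ℝ := 1 + π / (2 * d)
  have hκ1 : 1 ≤ κ := le_add_of_nonneg_right (by positivity)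
  refine ⟨C₂ * 8 + C₁ * (κ * (κ + 1) * π), by positivity, fun ρ hρ N _ s t u v hu hv hdu hdv => ?_⟩
  have hN : (0 : ℝ) < N := Nat.cast_pos.2 (NeZero.pos N)
  have hu0 : 0 < u := lt_of_lt_of_le (by positivity) hdu
  have hv0 : 0 < v := lt_of_lt_of_le (by positivity) hdv
  have huv : |v - u| ≤ π / N := hu ▸ hv ▸ abs_abs_sin_shift_sub_le N s t
  have error_diff := mul_abs_regError_sub_le hρ hu0 hv0 (le_one_add_mul_of_abs_sub_le hd hdu huv)
    (le_one_add_mul_of_abs_sub_le hd hdv (by rwa [abs_sub_comm])) hκ1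
  have weight_u_nonneg := quarterWeight_nonneg hρ.le u
  have weight_v_nonneg := quarterWeight_nonneg hρ.le v
  have diff_term : ‖kernelDiff N (1, 0) (B N) (s, t)‖ * |regError ρ v| ≤
      C₂ * (8 * quarterWeight ρ v) := by
    rw [abs_of_nonneg (regError_nonneg hρ hv0)]
    gcongr
    exacts [regError_nonneg hρ hv0, hC₂ N (s, t), regError_le hρ hv0]
  have vanishing_term : N * (‖B N (s, t)‖ * |regError ρ u - regError ρ v|) ≤
      C₁ * (κ * (κ + 1) * π) * (quarterWeight ρ u + quarterWeight ρ v) := calc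
    _ ≤ N * (C₁ * u * |regError ρ u - regError ρ v|) := by
        gcongr
        exact hu ▸ hC₁ N (s, t)
    _ = N * C₁ * (u * |regError ρ u - regError ρ v|) := by ring
    _ ≤ N * C₁ * (κ * (κ + 1) * (π / N) * (quarterWeight ρ u + quarterWeight ρ v)) := by
        refine mul_le_mul_of_nonneg_left (error_diff.trans ?_) (by positivity)
        gcongr
    _ = _ := by field_simp
  rw [kernelDiff_mul_regError, hu, hv]
  refine (norm_add_le _ _).trans ?_
  simp only [norm_neg, norm_mul, Complex.norm_natCast, Complex.norm_real, Real.norm_eq_abs]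
  nlinarith [mul_nonneg hC₂0 weight_u_nonneg]

/-- The regularization error is concentrated near the diagonal, where `B` vanishes. -/
lemma exists_norm_quadOp_kernelDiff_mul_regError_le {B : ℕ → ℝ × ℝ → ℂ} (hB : UniformlySmooth B)
    (hBp : ∀ N, BiPeriodic (B N)) (hB0 : ∀ N s, B N (s, s) = 0) {a c : ℝ}
    (hε : ∀ k : ℤ, a - c ≠ k) :
    ∃ C, 0 ≤ C ∧ ∀ ρ, 0 < ρ → ∀ (N : ℕ) [NeZero N] (x : GridFun N),
      ‖quadOp N a c (kernelDiff N (1, 0) (B N * (logSinSq - regLogSinSq (ρ ^ 8)))) x‖ ≤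
        C * ρ * ‖x‖ := by
  obtain ⟨d, hd0, hd⟩ := exists_pos_le_abs_sub_intCast hε
  obtain ⟨S, hS0, hS⟩ := exists_average_inv_sqrt_sinDist_le hε
  obtain ⟨D, -, hD⟩ := exists_norm_kernelDiff_mul_regError_le hB hBp hB0 hd0
  refine ⟨√(4 * D ^ 2 * S), by positivity, fun ρ hρ N _ x => ?_⟩
  refine norm_quadOp_le a c _ (fun k => 2 * D ^ 2 * ρ ^ 2 * (1 / √(sinDist N (a - c) k) +
    1 / √(sinDist N (a - c) (k + 1)))) (by positivity) (fun i j => ?_) ?_ x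
  · obtain ⟨m, rfl⟩ := ZMod.intCast_surjective i
    obtain ⟨n, rfl⟩ := ZMod.intCast_surjective j
    have dist_eq := abs_sin_gridPoint_sub (N := N) a c m n
    have dist_succ_eq := abs_sin_gridPoint_sub (N := N) a c (m + 1) n
    rw [gridPoint_succ, Int.cast_add, Int.cast_one, add_sub_right_comm (m : ZMod N)] at dist_succ_eq
    rw [kernelMatrix_intCast a c
      (((hBp N).mul (biPeriodic_logSinSq_sub_regLogSinSq _)).kernelDiff N _)]
    refine (pow_le_pow_left₀ (norm_nonneg _) (hD ρ hρ N _ _ dist_eq dist_succ_eq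
      (two_mul_div_le_sinDist hd _) (two_mul_div_le_sinDist hd _)) 2).trans ?_
    rw [mul_pow]
    refine (mul_le_mul_of_nonneg_left add_sq_le (sq_nonneg D)).trans_eq ?_
    rw [quarterWeight_sq, quarterWeight_sq]
    ring
  · have sum_shift := Equiv.sum_comp (Equiv.addRight (1 : ZMod N))
      fun k => 1 / √(sinDist N (a - c) k)
    simp only [Equiv.coe_addRight] at sum_shift
    rw [← Finset.mul_sum, Finset.sum_add_distrib, sum_shift, mul_pow, Real.sq_sqrt (by positivity)]
    calc _ = 4 * D ^ 2 * ρ ^ 2 * ((N : ℝ)⁻¹ * ∑ k, 1 / √(sinDist N (a - c) k)) := by ring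
      _ ≤ 4 * D ^ 2 * ρ ^ 2 * S := by gcongr; exact hS N
      _ = _ := by ring

lemma kernelDiff_add (N : ℕ) (w : ℝ × ℝ) (F G : ℝ × ℝ → ℂ) :
    kernelDiff N w (F + G) = kernelDiff N w F + kernelDiff N w G := by
  ext p
  simp only [kernelDiff, Pi.add_apply]
  ring

lemma kernelDiff_smul (N : ℕ) (w : ℝ × ℝ) (r : ℂ) (F : ℝ × ℝ → ℂ) :
    kernelDiff N w (r • F) = r • kernelDiff N w F := by
  ext p
  simp only [kernelDiff, Pi.smul_apply, smul_eq_mul]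
  ring

/-- When the coefficient of the logarithm vanishes on the diagonal, the twice differenced kernel is
of order zero up to an arbitrarily small term of order one. -/
lemma exists_norm_quadOp_kernelDiff_kernelDiff_le {B K : ℕ → ℝ × ℝ → ℂ} (hB : UniformlySmooth B)
    (hBp : ∀ N, BiPeriodic (B N)) (hB0 : ∀ N s, B N (s, s) = 0) (hK : UniformlySmooth K) {a c : ℝ}
    (hε : ∀ k : ℤ, a - c ≠ k) {θ : ℝ} (hθ : 0 < θ) :
    ∃ C, 0 ≤ C ∧ ∀ (N : ℕ) [NeZero N] (x : GridFun N),
      ‖quadOp N a c (kernelDiff N (1, 0) (kernelDiff N (0, 1) (B N * logSinSq + K N))) x‖ ≤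
        θ * ‖forwardDiff x‖ + C * ‖x‖ := by
  obtain ⟨C, hC0, hC⟩ := exists_norm_quadOp_kernelDiff_mul_regError_le hB hBp hB0 hε
  set ρ : ℝ := θ / (C + 1) with hρ
  have smooth_part : UniformlySmooth fun N => B N * regLogSinSq (ρ ^ 8) + K N :=
    (hB.mul ((biPeriodic_regLogSinSq _).uniformlySmooth_const
      (contDiff_regLogSinSq (by positivity)))).add hK
  obtain ⟨D, hD0, hD⟩ :=
    exists_norm_quadOp_le_of_uniformlySmooth ((smooth_part.kernelDiff (0, 1)).kernelDiff (1, 0)) a c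
  refine ⟨D, hD0, fun N _ x => ?_⟩
  have error_biPeriodic := (hBp N).mul (biPeriodic_logSinSq_sub_regLogSinSq (ρ ^ 8))
  have split : B N * logSinSq + K N =
      B N * (logSinSq - regLogSinSq (ρ ^ 8)) + (B N * regLogSinSq (ρ ^ 8) + K N) := by ring
  rw [split, kernelDiff_add, kernelDiff_add, quadOp_add, LinearMap.add_apply,
    kernelDiff_commute N (1, 0) (0, 1), quadOp_kernelDiff_snd a c (error_biPeriodic.kernelDiff N _)]
  refine (norm_add_le _ _).trans (add_le_add ?_ (hD N x))
  calc _ ≤ C * ρ * ‖forwardDiff x‖ := by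
        rw [norm_neg, ← norm_backwardDiff]
        exact hC ρ (by positivity) N _
    _ ≤ θ * ‖forwardDiff x‖ := by
        gcongr
        rw [hρ, mul_div_assoc', div_le_iff₀ (by positivity)]
        nlinarith

/-! ### The discrete Fourier transform -/

lemma norm_one_sub_fourierChar (x : ℝ) : ‖1 - (𝐞 x : ℂ)‖ = 2 * |Real.sin (π * x)| := by
  have := Complex.norm_exp_I_mul_ofReal_sub_one (2 * π * x)
  rw [norm_sub_rev, Real.fourierChar_apply, mul_comm _ Complex.I, this, norm_mul, Real.norm_two,
    Real.norm_eq_abs, show 2 * π * x / 2 = π * x by ring]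

section DFT

variable [NeZero N]

lemma stdAddChar_intCast (m : ℤ) : stdAddChar (m : ZMod N) = (𝐞 (m / N) : ℂ) := by
  rw [ZMod.stdAddChar_coe, Real.fourierChar_apply]
  congr 1
  push_cast
  ring

lemma four_mul_div_le_norm_one_sub_stdAddChar {m : ℕ} (hm : 2 * m ≤ N) :
    4 * (m / N : ℝ) ≤ ‖1 - stdAddChar (m : ZMod N)‖ := by
  have hN : (0 : ℝ) < N := Nat.cast_pos.2 (NeZero.pos N)
  have half : (m : ℝ) / N ≤ 1 / 2 := by
    rw [div_le_div_iff₀ hN two_pos]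
    exact_mod_cast (by omega : m * 2 ≤ 1 * N)
  have jordan := Real.mul_le_sin (x := π * (m / N)) (by positivity) (by nlinarith [Real.pi_pos])
  rw [← mul_assoc, div_mul_cancel₀ _ Real.pi_ne_zero] at jordan
  rw [← Int.cast_natCast (R := ZMod N), stdAddChar_intCast, norm_one_sub_fourierChar,
    Int.cast_natCast]
  linarith [le_abs_self (Real.sin (π * (m / N)))]

lemma sum_stdAddChar_mul_dft (x : ZMod N → ℂ) (j : ZMod N) :
    ∑ k, stdAddChar (j * k) * dft x k = N * x j := by
  have inversion := congrFun (ZMod.dft_dft x) (-j)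
  simp only [ZMod.dft_apply (dft x), mul_neg, neg_neg, smul_eq_mul, mul_comm _ j] at inversion
  exact inversion

lemma sum_norm_dft_sq (x : ZMod N → ℂ) : ∑ k, ‖dft x k‖ ^ 2 = N * ∑ j, ‖x j‖ ^ 2 := by
  have complex_form : ∑ k, conj (dft x k) * dft x k = N * ∑ j, conj (x j) * x j := calc
    ∑ k, conj (dft x k) * dft x k
        = ∑ k, ∑ j, conj (x j) * (stdAddChar (j * k) * dft x k) := by
          refine Finset.sum_congr rfl fun k _ => ?_
          rw [ZMod.dft_apply x, map_sum, Finset.sum_mul]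
          refine Finset.sum_congr rfl fun j _ => ?_
          rw [smul_eq_mul, map_mul, ← AddChar.map_neg_eq_conj, neg_neg]
          ring
    _ = ∑ j, conj (x j) * (N * x j) := by
          rw [Finset.sum_comm]
          exact Finset.sum_congr rfl fun j _ => by rw [← Finset.mul_sum, sum_stdAddChar_mul_dft]
    _ = N * ∑ j, conj (x j) * x j := by simp only [Finset.mul_sum, mul_left_comm]
  simp only [Complex.conj_mul'] at complex_form
  exact_mod_cast complex_form

lemma mul_norm_le_norm_of_dft {x y : GridFun N} {C : ℝ} (hC : 0 ≤ C)
    (h : ∀ m, C * ‖dft x.ofLp m‖ ≤ ‖dft y.ofLp m‖) : C * ‖x‖ ≤ ‖y‖ := by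
  have hN : (0 : ℝ) < N := Nat.cast_pos.2 (NeZero.pos N)
  refine (pow_le_pow_iff_left₀ (by positivity) (norm_nonneg _) two_ne_zero).1 ?_
  refine le_of_mul_le_mul_left ?_ hN
  calc N * (C * ‖x‖) ^ 2 = ∑ m, (C * ‖dft x.ofLp m‖) ^ 2 := by
        simp only [mul_pow, ← Finset.mul_sum, sum_norm_dft_sq, EuclideanSpace.norm_sq_eq]
        ring
    _ ≤ ∑ m, ‖dft y.ofLp m‖ ^ 2 := Finset.sum_le_sum fun m _ => by gcongr; exact h m
    _ = N * ‖y‖ ^ 2 := by rw [sum_norm_dft_sq, EuclideanSpace.norm_sq_eq]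

lemma dft_convolution (f g : ZMod N → ℂ) (k : ZMod N) :
    dft (fun i => ∑ j, f (i - j) * g j) k = dft f k * dft g k := by
  simp only [ZMod.dft_apply, smul_eq_mul, Finset.mul_sum]
  rw [Finset.sum_comm]
  refine Finset.sum_congr rfl fun j _ => ?_
  rw [← Equiv.sum_comp (Equiv.addRight j), Finset.sum_mul]
  refine Finset.sum_congr rfl fun i _ => ?_
  rw [Equiv.coe_addRight, add_sub_cancel_right, add_mul, neg_add, AddChar.map_add_eq_mul]
  ring

lemma dft_shift (x : GridFun N) (k : ZMod N) :
    dft (shift x).ofLp k = stdAddChar k * dft x.ofLp k := by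
  simp only [ZMod.dft_apply, smul_eq_mul, shift_apply, Finset.mul_sum]
  rw [← Equiv.sum_comp (Equiv.addRight (1 : ZMod N))
    fun j => stdAddChar k * (stdAddChar (-(j * k)) * x j)]
  refine Finset.sum_congr rfl fun i _ => ?_
  rw [Equiv.coe_addRight, ← mul_assoc, ← AddChar.map_add_eq_mul]
  congr 2
  ring

lemma dft_forwardDiff (x : GridFun N) (k : ZMod N) :
    dft (forwardDiff x).ofLp k = N * (stdAddChar k - 1) * dft x.ofLp k := by
  have : (forwardDiff x).ofLp = (N : ℂ) • ((shift x).ofLp - x.ofLp) := rfl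
  rw [this, map_smul, map_sub, Pi.smul_apply, Pi.sub_apply, dft_shift, smul_eq_mul]
  ring

lemma dft_backwardDiff (x : GridFun N) (k : ZMod N) :
    dft (backwardDiff x).ofLp k = N * (1 - stdAddChar (-k)) * dft x.ofLp k := by
  have shift_eq : shift (backwardDiff x) = forwardDiff x := by ext j; simp
  have cancel : stdAddChar (-k) * stdAddChar k = 1 := by
    rw [← AddChar.map_add_eq_mul, neg_add_cancel, AddChar.map_zero_eq_one]
  have dft_eq := dft_shift (backwardDiff x) k
  rw [shift_eq, dft_forwardDiff] at dft_eq
  linear_combination (dft x.ofLp k * N - dft (backwardDiff x).ofLp k) * cancel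
    - stdAddChar (-k) * dft_eq

end DFT

/-! ### The Fourier coefficients of the discrete logarithm -/

/-- The grid values `log(sin²(π(k + ε)/N))` of the logarithmic kernel, as a function of the index
difference `k`. -/
def logSinDistSq (N : ℕ) (ε : ℝ) (k : ZMod N) : ℂ := (Real.log (sinDist N ε k ^ 2) : ℂ)

/-- The integral `∫₀¹ rᵖ / (1 - rᴺ u) dr`, into which the radial representation of `log (1 - z)`
turns the Fourier coefficients of the discrete logarithm. -/
def radialIntegral (N p : ℕ) (u : ℂ) : ℂ := ∫ r in (0 : ℝ)..1, (r : ℂ) ^ p / (1 - (r : ℂ) ^ N * u)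

/-- The Fourier coefficient of the discrete logarithm at the frequency `p + 1 = N - (q + 1)`, up to
a factor of modulus `N`; here `u = exp(2πiε)`. -/
def logSymbol (N p q : ℕ) (u : ℂ) : ℂ := radialIntegral N p u + conj (u * radialIntegral N q u)

lemma re_lt_one_of_norm_eq_one {z : ℂ} (hz : ‖z‖ = 1) (hz1 : z ≠ 1) : z.re < 1 := by
  refine lt_of_le_of_ne (hz ▸ Complex.re_le_norm z) fun hre => hz1 ?_
  have normSq_eq := Complex.sq_norm z
  rw [Complex.normSq_apply, hz, hre] at normSq_eq
  exact Complex.ext hre (by simpa using normSq_eq)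

lemma one_sub_ofReal_mul_ne_zero {z : ℂ} (hz : z.re < 1) {r : ℝ} (hr : r ∈ Set.Icc 0 1) :
    1 - (r : ℂ) * z ≠ 0 := by
  intro h
  have hre : 1 - r * z.re = 0 := by simpa using congrArg Complex.re h
  nlinarith [hr.1, hr.2, mul_nonneg hr.1 (sub_pos.2 hz).le]

lemma log_inv_one_sub_eq_integral {z : ℂ} (hz : z.re < 1) :
    Complex.log (1 - z)⁻¹ = ∫ r in (0 : ℝ)..1, z / (1 - r * z) := by
  rw [Complex.log_inv_eq_integral (Or.inl (by simpa using hz)),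
    ← intervalIntegral.integral_const_mul]
  rfl

lemma two_mul_log_norm_one_sub {z : ℂ} (hz : z.re < 1) :
    ((2 * Real.log ‖1 - z‖ : ℝ) : ℂ) =
      -(Complex.log (1 - z)⁻¹ + conj (Complex.log (1 - z)⁻¹)) := by
  have arg_ne : (1 - z).arg ≠ π := Complex.slitPlane_arg_ne_pi (Or.inl (by simpa using hz))
  rw [Complex.add_conj, Complex.log_inv _ arg_ne, Complex.neg_re, Complex.log_re]
  push_cast
  ring

section Symbol

variable [NeZero N]

/-- Of the geometric progression in `1 / (1 - z) = ∑ zˡ / (1 - zᴺ)`, only one power survives the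
summation over the characters. -/
lemma sum_stdAddChar_mul_geometric (η r : ℂ) {p : ℕ} (hp : p < N) :
    ∑ k : ZMod N, stdAddChar (-(k * ((p + 1 : ℕ) : ZMod N))) *
      ∑ l ∈ Finset.range N, r ^ l * (stdAddChar k * η) ^ (l + 1) = N * r ^ p * η ^ (p + 1) := by
  have character (k : ZMod N) (l : ℕ) :
      stdAddChar (-(k * ((p + 1 : ℕ) : ZMod N))) * (r ^ l * (stdAddChar k * η) ^ (l + 1)) =
        r ^ l * η ^ (l + 1) * stdAddChar (k * ((l : ZMod N) - (p : ZMod N))) := by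
    have : k * ((l : ZMod N) - (p : ZMod N)) =
        -(k * ((p + 1 : ℕ) : ZMod N)) + (l + 1) • k := by
      rw [nsmul_eq_mul]
      push_cast
      ring
    rw [this, AddChar.map_add_eq_mul, AddChar.map_nsmul_eq_pow, mul_pow]
    ring
  have orthogonality (l : ℕ) (hl : l ∈ Finset.range N) :
      ∑ k : ZMod N, stdAddChar (k * ((l : ZMod N) - (p : ZMod N))) =
        if l = p then (N : ℂ) else 0 := by
    have : (l : ZMod N) - (p : ZMod N) = 0 ↔ l = p := by
      rw [sub_eq_zero, ZMod.natCast_eq_natCast_iff', Nat.mod_eq_of_lt (Finset.mem_range.1 hl),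
        Nat.mod_eq_of_lt hp]
    simp only [AddChar.sum_mulShift _ (ZMod.isPrimitive_stdAddChar N), this, ZMod.card,
      Nat.cast_ite, Nat.cast_zero]
  simp only [Finset.mul_sum, character]
  rw [Finset.sum_comm]
  simp only [← Finset.mul_sum]
  rw [Finset.sum_congr rfl fun l hl => by rw [orthogonality l hl, mul_ite, mul_zero],
    Finset.sum_ite_eq', if_pos (Finset.mem_range.2 hp)]
  ring

lemma stdAddChar_mul_pow (k : ZMod N) (η : ℂ) : (stdAddChar k * η) ^ N = η ^ N := by
  rw [mul_pow, ← AddChar.map_nsmul_eq_pow, ZModModule.char_nsmul_eq_zero, AddChar.map_zero_eq_one,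
    one_mul]

lemma sum_stdAddChar_mul_div {η r : ℂ} (hr : 1 - r ^ N * η ^ N ≠ 0) {p : ℕ} (hp : p < N) :
    ∑ k : ZMod N, stdAddChar (-(k * ((p + 1 : ℕ) : ZMod N))) *
        (stdAddChar k * η / (1 - r * (stdAddChar k * η))) =
      N * η ^ (p + 1) * (r ^ p / (1 - r ^ N * η ^ N)) := by
  have geometric (k : ZMod N) : stdAddChar k * η / (1 - r * (stdAddChar k * η)) =
      (∑ l ∈ Finset.range N, r ^ l * (stdAddChar k * η) ^ (l + 1)) / (1 - r ^ N * η ^ N) := by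
    have geom_sum := mul_neg_geom_sum (r * (stdAddChar k * η)) N
    rw [mul_pow, stdAddChar_mul_pow] at geom_sum
    have ne : 1 - r * (stdAddChar k * η) ≠ 0 := left_ne_zero_of_mul (geom_sum ▸ hr)
    rw [div_eq_div_iff ne hr, ← geom_sum, mul_left_comm, mul_comm _ (1 - _), Finset.mul_sum]
    congr 1
    exact Finset.sum_congr rfl fun l _ => by ring
  simp only [geometric, mul_div_assoc']
  rw [← Finset.sum_div, sum_stdAddChar_mul_geometric η r hp]
  ring

lemma re_stdAddChar_mul_lt_one {η : ℂ} (hη : ‖η‖ = 1) (hηN : η ^ N ≠ 1) (k : ZMod N) :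
    (stdAddChar k * η).re < 1 := by
  refine re_lt_one_of_norm_eq_one (by rw [norm_mul, AddChar.norm_apply, hη, one_mul])
    fun h => hηN ?_
  rw [← stdAddChar_mul_pow k, h, one_pow]

lemma sum_stdAddChar_mul_log {η : ℂ} (hη : ‖η‖ = 1) (hηN : η ^ N ≠ 1) {p : ℕ} (hp : p < N) :
    ∑ k : ZMod N, stdAddChar (-(k * ((p + 1 : ℕ) : ZMod N))) *
        Complex.log (1 - stdAddChar k * η)⁻¹ = N * η ^ (p + 1) * radialIntegral N p (η ^ N) := by
  have re_lt := re_stdAddChar_mul_lt_one hη hηN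
  have re_pow_lt : (η ^ N).re < 1 := re_lt_one_of_norm_eq_one (by rw [norm_pow, hη, one_pow]) hηN
  have integrable (k : ZMod N) : IntervalIntegrable
      (fun r : ℝ => stdAddChar (-(k * ((p + 1 : ℕ) : ZMod N))) *
        (stdAddChar k * η / (1 - r * (stdAddChar k * η)))) volume 0 1 := by
    refine ContinuousOn.intervalIntegrable (continuousOn_const.mul
      (continuousOn_const.div (by fun_prop) fun r hr => ?_))
    rw [Set.uIcc_of_le zero_le_one] at hr
    exact one_sub_ofReal_mul_ne_zero (re_lt k) hr
  simp only [fun k => log_inv_one_sub_eq_integral (re_lt k), ← intervalIntegral.integral_const_mul]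
  rw [← intervalIntegral.integral_finsetSum fun k _ => integrable k, radialIntegral,
    ← intervalIntegral.integral_const_mul]
  refine intervalIntegral.integral_congr fun r hr => ?_
  rw [Set.uIcc_of_le zero_le_one] at hr
  have pow_mem : r ^ N ∈ Set.Icc (0 : ℝ) 1 := ⟨pow_nonneg hr.1 N, pow_le_one₀ hr.1 hr.2⟩
  refine sum_stdAddChar_mul_div ?_ hp
  exact_mod_cast one_sub_ofReal_mul_ne_zero re_pow_lt pow_mem

lemma fourierChar_div_pow (ε : ℝ) : (𝐞 (ε / N) : ℂ) ^ N = 𝐞 ε := by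
  have hN : (N : ℝ) ≠ 0 := NeZero.ne _
  rw [← Circle.coe_pow, ← AddChar.map_nsmul_eq_pow, nsmul_eq_mul, mul_div_cancel₀ _ hN]

lemma norm_one_sub_stdAddChar_mul (ε : ℝ) (k : ZMod N) :
    ‖1 - stdAddChar k * (𝐞 (ε / N) : ℂ)‖ = 2 * sinDist N ε k := by
  obtain ⟨m, rfl⟩ := ZMod.intCast_surjective k
  rw [stdAddChar_intCast, ← Circle.coe_mul, ← AddChar.map_add_eq_mul, norm_one_sub_fourierChar,
    ← add_div, sinDist_intCast]
  rfl

lemma fourierChar_ne_one {ε : ℝ} (hε : ∀ k : ℤ, ε ≠ k) : (𝐞 ε : ℂ) ≠ 1 := by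
  intro h
  have hsin := norm_one_sub_fourierChar ε
  rw [h, sub_self, norm_zero, eq_comm, mul_eq_zero_iff_left two_ne_zero, abs_eq_zero,
    Real.sin_eq_zero_iff] at hsin
  obtain ⟨k, hk⟩ := hsin
  rw [mul_comm] at hk
  exact hε k (mul_left_cancel₀ Real.pi_ne_zero hk).symm

lemma logSinDistSq_eq {ε : ℝ} (hε : ∀ k : ℤ, ε ≠ k) (k : ZMod N) :
    logSinDistSq N ε k = -(Complex.log (1 - stdAddChar k * (𝐞 (ε / N) : ℂ))⁻¹ +
      conj (Complex.log (1 - stdAddChar k * (𝐞 (ε / N) : ℂ))⁻¹)) - (2 * Real.log 2 : ℝ) := by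
  have pow_ne : (𝐞 (ε / N) : ℂ) ^ N ≠ 1 := fourierChar_div_pow (N := N) ε ▸ fourierChar_ne_one hε
  rw [← two_mul_log_norm_one_sub (re_stdAddChar_mul_lt_one (Circle.norm_coe _) pow_ne k),
    norm_one_sub_stdAddChar_mul, Real.log_mul two_ne_zero (sinDist_pos hε k).ne', logSinDistSq,
    Real.log_pow]
  push_cast
  ring

lemma dft_logSinDistSq {ε : ℝ} (hε : ∀ k : ℤ, ε ≠ k) {p q : ℕ} (hpq : p + q + 2 = N) :
    dft (logSinDistSq N ε) ((p + 1 : ℕ) : ZMod N) =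
      -(N * (𝐞 (ε / N) : ℂ) ^ (p + 1)) * logSymbol N p q (𝐞 ε) := by
  have values := logSinDistSq_eq (N := N) hε
  set η : ℂ := (𝐞 (ε / N) : ℂ)
  have hη : ‖η‖ = 1 := Circle.norm_coe _
  have pow_eq : η ^ N = 𝐞 ε := fourierChar_div_pow ε
  have pow_ne : η ^ N ≠ 1 := pow_eq ▸ fourierChar_ne_one hε
  set m : ZMod N := ((p + 1 : ℕ) : ZMod N) with hm
  have neg_m : ((q + 1 : ℕ) : ZMod N) = -m := by
    rw [hm, eq_neg_iff_add_eq_zero, ← Nat.cast_add, ZMod.natCast_eq_zero_iff]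
    exact ⟨1, by omega⟩
  have m_ne : -m ≠ 0 := by
    rw [← neg_m, Ne, ZMod.natCast_eq_zero_iff]
    exact fun h => absurd (Nat.le_of_dvd (by omega) h) (by omega)
  have log_sum := sum_stdAddChar_mul_log hη pow_ne (p := p) (by omega)
  have conj_log_sum := congrArg conj (sum_stdAddChar_mul_log hη pow_ne (p := q) (by omega))
  rw [neg_m] at conj_log_sum
  rw [← hm] at log_sum
  simp only [map_sum, map_mul (starRingEnd ℂ), ← AddChar.map_neg_eq_conj, mul_neg, neg_neg,
    map_natCast] at conj_log_sum
  have const_sum : ∑ k : ZMod N, stdAddChar (-(k * m)) = (0 : ℂ) := by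
    have := AddChar.sum_mulShift (-m) (ZMod.isPrimitive_stdAddChar N)
    simpa only [mul_neg, if_neg m_ne, Nat.cast_zero] using this
  have conj_pow : conj (η ^ (q + 1)) = η ^ (p + 1) * conj (η ^ N) := by
    rw [← hpq, show p + q + 2 = (p + 1) + (q + 1) by ring, pow_add η (p + 1), map_mul,
      ← mul_assoc, Complex.mul_conj', norm_pow, hη]
    simp
  simp only [ZMod.dft_apply, smul_eq_mul, values, mul_sub, mul_neg, mul_add,
    Finset.sum_sub_distrib, Finset.sum_neg_distrib, Finset.sum_add_distrib, ← Finset.sum_mul,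
    const_sum, log_sum, conj_log_sum, conj_pow, logSymbol, ← pow_eq, map_mul]
  ring

end Symbol

/-! ### Ellipticity of the principal part -/

section SymbolBound

variable {u : ℂ}

lemma one_sub_ofReal_mul_ne_zero_of_im_ne_zero (hu : u.im ≠ 0) (x : ℝ) : 1 - (x : ℂ) * u ≠ 0 := by
  intro h
  have him : x * u.im = 0 := by simpa using congrArg Complex.im h
  have hx : x = 0 := (mul_eq_zero.1 him).resolve_right hu
  simp [hx] at h

lemma abs_im_le_norm_one_sub_ofReal_mul (hu : ‖u‖ = 1) (x : ℝ) : |u.im| ≤ ‖1 - (x : ℂ) * u‖ := by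
  have factor : conj u * (1 - (x : ℂ) * u) = conj u - x := by
    have : u * conj u = 1 := by simp [Complex.mul_conj', hu]
    linear_combination -(x : ℂ) * this
  calc |u.im| = |(conj u - x).im| := by simp
    _ ≤ ‖conj u - x‖ := Complex.abs_im_le_norm _
    _ = ‖1 - (x : ℂ) * u‖ := by rw [← factor, norm_mul, Complex.norm_conj, hu, one_mul]

lemma continuous_pow_div_one_sub (hu : u.im ≠ 0) (N p : ℕ) :
    Continuous fun r : ℝ => (r : ℂ) ^ p / (1 - (r : ℂ) ^ N * u) :=
  Continuous.div (by fun_prop) (by fun_prop) fun r => by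
    simpa using one_sub_ofReal_mul_ne_zero_of_im_ne_zero hu (r ^ N)

lemma intervalIntegrable_mul_pow_div_one_sub (hu : u.im ≠ 0) (N p : ℕ) :
    IntervalIntegrable (fun r : ℝ => u * ((r : ℂ) ^ p / (1 - (r : ℂ) ^ N * u))) volume 0 1 :=
  ((continuous_pow_div_one_sub hu N p).intervalIntegrable 0 1).const_mul u

lemma radialIntegral_eq_add (hu : u.im ≠ 0) (N p : ℕ) :
    radialIntegral N p u = ((1 / (p + 1) : ℝ) : ℂ) + u * radialIntegral N (p + N) u := by
  have leading : ((1 / (p + 1) : ℝ) : ℂ) = ∫ r in (0 : ℝ)..1, (r : ℂ) ^ p := by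
    simp_rw [← Complex.ofReal_pow]
    rw [intervalIntegral.integral_ofReal, integral_pow]
    simp
  rw [leading, radialIntegral, radialIntegral, ← intervalIntegral.integral_const_mul,
    ← intervalIntegral.integral_add (Continuous.intervalIntegrable (by fun_prop) _ _)
      (intervalIntegrable_mul_pow_div_one_sub hu N (p + N))]
  refine intervalIntegral.integral_congr fun r _ => ?_
  have ne : 1 - (r : ℂ) ^ N * u ≠ 0 := by
    simpa using one_sub_ofReal_mul_ne_zero_of_im_ne_zero hu (r ^ N)
  field_simp
  ring

lemma norm_radialIntegral_le (hu : ‖u‖ = 1) (him : u.im ≠ 0) (N p : ℕ) :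
    ‖radialIntegral N p u‖ ≤ 1 / (p + 1) / |u.im| := by
  have : 0 < |u.im| := abs_pos.2 him
  have integral_eq : ∫ r in (0 : ℝ)..1, r ^ p / |u.im| = 1 / (p + 1) / |u.im| := by
    rw [intervalIntegral.integral_div, integral_pow]
    simp
  rw [← integral_eq]
  refine intervalIntegral.norm_integral_le_of_norm_le zero_le_one
    (Eventually.of_forall fun r hr => ?_) (Continuous.intervalIntegrable (by fun_prop) _ _)
  have den := abs_im_le_norm_one_sub_ofReal_mul hu (r ^ N)
  rw [Complex.ofReal_pow] at den
  rw [norm_div, norm_pow, Complex.norm_of_nonneg hr.1.le]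
  exact div_le_div_of_nonneg_left (pow_nonneg hr.1.le p) this den

lemma im_mul_radialIntegral (hu : u.im ≠ 0) (N l : ℕ) :
    (u * radialIntegral N l u).im =
      u.im * ∫ r in (0 : ℝ)..1, r ^ l / Complex.normSq (1 - (r : ℂ) ^ N * u) := by
  rw [radialIntegral, ← intervalIntegral.integral_const_mul, ← Complex.imCLM_apply,
    ← Complex.imCLM.intervalIntegral_comp_comm
      (intervalIntegrable_mul_pow_div_one_sub hu N l),
    ← intervalIntegral.integral_const_mul]
  refine intervalIntegral.integral_congr fun r _ => ?_
  have im_eq (x y : ℝ) : (u * ((y : ℂ) / (1 - (x : ℂ) * u))).im =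
      u.im * (y / Complex.normSq (1 - (x : ℂ) * u)) := by
    simp only [Complex.mul_im, Complex.div_re, Complex.div_im, Complex.ofReal_re, Complex.ofReal_im,
      Complex.sub_re, Complex.sub_im, Complex.one_re, Complex.one_im, Complex.mul_re]
    ring
  simpa using im_eq (r ^ N) (r ^ l)

lemma normSq_one_sub_pow_mul_le (hu : ‖u‖ = 1) (N : ℕ) {r : ℝ} (hr : r ∈ Set.Icc 0 1) :
    Complex.normSq (1 - (r : ℂ) ^ N * u) ≤ 4 := by
  have norm_le : ‖1 - (r : ℂ) ^ N * u‖ ≤ 2 := calc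
    ‖1 - (r : ℂ) ^ N * u‖ ≤ 1 + r ^ N := by
      simpa [hu, abs_of_nonneg hr.1] using norm_sub_le 1 ((r : ℂ) ^ N * u)
    _ ≤ 2 := by linarith [pow_le_one₀ hr.1 hr.2 (n := N)]
  rw [← Complex.sq_norm]
  nlinarith [norm_nonneg (1 - (r : ℂ) ^ N * u)]

lemma abs_im_div_four_mul_le_norm_logSymbol (hu : ‖u‖ = 1) (him : u.im ≠ 0) {N p q : ℕ}
    (hq : q ≤ p + N) :
    |u.im| / 4 * (1 / (q + 1) - 1 / (p + N + 1)) ≤ ‖logSymbol N p q u‖ := by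
  have normSq_pos (r : ℝ) : 0 < Complex.normSq (1 - (r : ℂ) ^ N * u) := by
    simpa using one_sub_ofReal_mul_ne_zero_of_im_ne_zero him (r ^ N)
  have integrable (l : ℕ) : IntervalIntegrable
      (fun r : ℝ => r ^ l / Complex.normSq (1 - (r : ℂ) ^ N * u)) volume 0 1 :=
    (Continuous.div (by fun_prop) (Complex.continuous_normSq.comp (by fun_prop))
      fun r => (normSq_pos r).ne').intervalIntegrable _ _
  have im_eq : (logSymbol N p q u).im = -(u.im * ∫ r in (0 : ℝ)..1,
      (r ^ q / Complex.normSq (1 - (r : ℂ) ^ N * u) -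
        r ^ (p + N) / Complex.normSq (1 - (r : ℂ) ^ N * u))) := by
    rw [logSymbol, radialIntegral_eq_add him, Complex.add_im, Complex.add_im, Complex.ofReal_im,
      Complex.conj_im, im_mul_radialIntegral him, im_mul_radialIntegral him,
      intervalIntegral.integral_sub (integrable q) (integrable (p + N))]
    ring
  have lower : (1 / (q + 1) - 1 / (p + N + 1)) / 4 ≤ ∫ r in (0 : ℝ)..1,
      (r ^ q / Complex.normSq (1 - (r : ℂ) ^ N * u) -
        r ^ (p + N) / Complex.normSq (1 - (r : ℂ) ^ N * u)) := by
    have integral_eq : ∫ r in (0 : ℝ)..1, (r ^ q - r ^ (p + N)) / 4 =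
        (1 / (q + 1) - 1 / (p + N + 1)) / 4 := by
      rw [intervalIntegral.integral_div, intervalIntegral.integral_sub
        (Continuous.intervalIntegrable (by fun_prop) _ _)
        (Continuous.intervalIntegrable (by fun_prop) _ _)]
      simp [integral_pow]
    rw [← integral_eq]
    refine intervalIntegral.integral_mono_on zero_le_one
      (Continuous.intervalIntegrable (by fun_prop) _ _)
      ((integrable q).sub (integrable (p + N))) fun r hr => ?_
    have : 0 ≤ r ^ q - r ^ (p + N) := sub_nonneg.2 (pow_le_pow_of_le_one hr.1 hr.2 hq)
    rw [← sub_div]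
    gcongr
    · exact normSq_pos r
    · exact normSq_one_sub_pow_mul_le hu N hr
  have im_le := Complex.abs_im_le_norm (logSymbol N p q u)
  rw [im_eq, abs_neg, abs_mul] at im_le
  calc |u.im| / 4 * (1 / (q + 1) - 1 / (p + N + 1))
      = |u.im| * ((1 / (q + 1) - 1 / (p + N + 1)) / 4) := by ring
    _ ≤ |u.im| * |_| := by gcongr; exact lower.trans (le_abs_self _)
    _ ≤ _ := im_le

lemma norm_logSymbol_sub_le (hu : ‖u‖ = 1) (him : u.im ≠ 0) (N p q : ℕ) :
    ‖logSymbol N p q u - (1 / (p + 1) : ℝ)‖ ≤ (1 / (p + N + 1) + 1 / (q + 1)) / |u.im| := by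
  have remainder : logSymbol N p q u - (1 / (p + 1) : ℝ) =
      u * radialIntegral N (p + N) u + conj (u * radialIntegral N q u) := by
    rw [logSymbol, radialIntegral_eq_add him]
    ring
  have high := norm_radialIntegral_le hu him N (p + N)
  have low := norm_radialIntegral_le hu him N q
  rw [Nat.cast_add] at high
  calc _ ≤ ‖u * radialIntegral N (p + N) u‖ + ‖conj (u * radialIntegral N q u)‖ :=
        remainder ▸ norm_add_le _ _
    _ ≤ 1 / (p + N + 1) / |u.im| + 1 / (q + 1) / |u.im| := by
      rw [Complex.norm_conj, norm_mul, norm_mul, hu, one_mul, one_mul]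
      exact add_le_add high low
    _ = _ := by ring

lemma abs_im_mul_sq_le_logSymbol (hu : ‖u‖ = 1) (him : u.im ≠ 0) {N p q : ℕ}
    (hpq : p + q + 2 = N) :
    |u.im| / 2 * ((p + 1) / N) ^ 2 ≤ ‖logSymbol N p q u‖ * (p + 1) := by
  have hN : (N : ℝ) = p + q + 2 := by rw [← hpq]; push_cast; ring
  have gap : 2 * ((p : ℝ) + 1) / N ^ 2 ≤ 1 / (q + 1) - 1 / (p + N + 1) := by
    rw [div_sub_div _ _ (by positivity) (by positivity), hN,
      div_le_div_iff₀ (by positivity) (by positivity)]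
    have identity : ((q + 1 : ℝ) * (p + (p + q + 2) + 1)) + (p + 1) ^ 2 = (p + q + 2) ^ 2 := by ring
    rw [← identity]
    nlinarith [show (0 : ℝ) ≤ (p + 1) ^ 3 by positivity]
  calc |u.im| / 2 * ((p + 1) / N) ^ 2 = |u.im| / 4 * (2 * (p + 1) / N ^ 2) * (p + 1) := by ring
    _ ≤ |u.im| / 4 * (1 / (q + 1) - 1 / (p + N + 1)) * (p + 1) := by gcongr
    _ ≤ _ := by
      gcongr
      exact abs_im_div_four_mul_le_norm_logSymbol hu him (by lia)

lemma half_le_logSymbol (hu : ‖u‖ = 1) (him : u.im ≠ 0) {N p q : ℕ} (hpq : p + q + 2 = N)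
    (hpN : 2 * (p + 1) ≤ N) (hlow : (p + 1 : ℝ) / N ≤ |u.im| / 6) :
    1 / 2 ≤ ‖logSymbol N p q u‖ * (p + 1) := by
  have : 0 < |u.im| := abs_pos.2 him
  have hN : (0 : ℝ) < N := by rw [← hpq]; positivity
  have remainder_le : (1 / (p + N + 1) + 1 / (q + 1)) / |u.im| * (p + 1) ≤ 1 / 2 := calc
    _ ≤ (1 / N + 1 / (N / 2)) / |u.im| * (p + 1 : ℝ) := by
      have : (N : ℝ) ≤ 2 * (q + 1) := by exact_mod_cast (by lia : N ≤ 2 * (q + 1))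
      gcongr <;> linarith
    _ = 3 / |u.im| * ((p + 1) / N) := by
      field_simp
      norm_num
    _ ≤ 3 / |u.im| * (|u.im| / 6) := by gcongr
    _ = 1 / 2 := by
      field_simp
      norm_num
  have leading_le : 1 / (p + 1 : ℝ) ≤
      ‖logSymbol N p q u‖ + (1 / (p + N + 1) + 1 / (q + 1)) / |u.im| := calc
    1 / (p + 1 : ℝ) = ‖((1 / (p + 1) : ℝ) : ℂ)‖ := by
      rw [Complex.norm_of_nonneg (by positivity)]
    _ ≤ ‖logSymbol N p q u‖ + ‖logSymbol N p q u - (1 / (p + 1) : ℝ)‖ :=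
      norm_le_norm_add_norm_sub _ _
    _ ≤ _ := by
      gcongr
      exact norm_logSymbol_sub_le hu him N p q
  have scaled := mul_le_mul_of_nonneg_right leading_le (show (0 : ℝ) ≤ p + 1 by positivity)
  rw [one_div_mul_cancel (by positivity), add_mul] at scaled
  linarith

lemma abs_im_pow_three_le_logSymbol (hu : ‖u‖ = 1) (him : u.im ≠ 0) {N p q : ℕ}
    (hpq : p + q + 2 = N) (hpN : 2 * (p + 1) ≤ N) :
    |u.im| ^ 3 / 72 ≤ ‖logSymbol N p q u‖ * (p + 1) := by
  have im_le : |u.im| ≤ 1 := hu ▸ Complex.abs_im_le_norm u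
  rcases le_total ((p + 1 : ℝ) / N) (|u.im| / 6) with low | high
  · linarith [half_le_logSymbol hu him hpq hpN low, pow_le_one₀ (abs_nonneg u.im) im_le (n := 3)]
  · calc |u.im| ^ 3 / 72 = |u.im| / 2 * (|u.im| / 6) ^ 2 := by ring
      _ ≤ |u.im| / 2 * ((p + 1) / N) ^ 2 := by gcongr
      _ ≤ _ := abs_im_mul_sq_le_logSymbol hu him hpq

end SymbolBound

section PrincipalPart

variable [NeZero N] {ε : ℝ}

lemma dft_logSinDistSq_neg (ε : ℝ) (m : ZMod N) :
    dft (logSinDistSq N ε) (-m) = conj (dft (logSinDistSq N ε) m) := by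
  simp only [ZMod.dft_apply, map_sum, smul_eq_mul, map_mul, ← AddChar.map_neg_eq_conj]
  refine Finset.sum_congr rfl fun k _ => ?_
  rw [logSinDistSq, Complex.conj_ofReal, mul_neg]

lemma fourierChar_im_ne_zero (hε : ∀ k : ℤ, ε ≠ k / 2) : (𝐞 ε : ℂ).im ≠ 0 := by
  rw [Real.fourierChar_apply, Complex.exp_ofReal_mul_I_im]
  intro hsin
  obtain ⟨n, hn⟩ := Real.sin_eq_zero_iff.1 hsin
  refine hε n ?_
  field_simp
  exact mul_left_cancel₀ Real.pi_ne_zero (by linarith)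

lemma ne_intCast_of_ne_half (hε : ∀ k : ℤ, ε ≠ k / 2) (k : ℤ) : ε ≠ k := by
  simpa using hε (2 * k)

lemma symbol_lower_bound_natCast (hε : ∀ k : ℤ, ε ≠ k / 2) {m : ℕ} (hm0 : 0 < m)
    (hm : 2 * m ≤ N) :
    |(𝐞 ε : ℂ).im| ^ 3 / 18 ≤
      ‖1 - stdAddChar (m : ZMod N)‖ * ‖dft (logSinDistSq N ε) (m : ZMod N)‖ := by
  obtain ⟨p, rfl⟩ : ∃ p, m = p + 1 := ⟨m - 1, by lia⟩
  obtain ⟨q, hpq⟩ : ∃ q, p + q + 2 = N := ⟨N - p - 2, by lia⟩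
  have hN : (0 : ℝ) < N := Nat.cast_pos.2 (NeZero.pos N)
  have character := four_mul_div_le_norm_one_sub_stdAddChar hm
  have symbol :=
    abs_im_pow_three_le_logSymbol (Circle.norm_coe _) (fourierChar_im_ne_zero hε) hpq hm
  rw [dft_logSinDistSq (ne_intCast_of_ne_half hε) hpq, norm_mul, norm_neg, norm_mul, norm_pow,
    Circle.norm_coe, one_pow, mul_one, Complex.norm_natCast]
  calc |(𝐞 ε : ℂ).im| ^ 3 / 18 ≤ 4 * (‖logSymbol N p q (𝐞 ε)‖ * (p + 1)) := by linarith
    _ = 4 * ((p + 1 : ℕ) / N) * (N * ‖logSymbol N p q (𝐞 ε)‖) := by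
      field_simp
      push_cast
      ring
    _ ≤ _ := by gcongr

lemma symbol_lower_bound (hε : ∀ k : ℤ, ε ≠ k / 2) {m : ZMod N} (hm : m ≠ 0) :
    |(𝐞 ε : ℂ).im| ^ 3 / 18 ≤ ‖1 - stdAddChar m‖ * ‖dft (logSinDistSq N ε) m‖ := by
  have val_pos : 0 < m.val := Nat.pos_of_ne_zero ((ZMod.val_ne_zero m).2 hm)
  have val_lt := ZMod.val_lt m
  rcases le_total (2 * m.val) N with low | high
  · simpa using symbol_lower_bound_natCast hε val_pos low
  · have bound := symbol_lower_bound_natCast (N := N) hε (m := N - m.val) (by lia) (by lia)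
    have reflect : ((N - m.val : ℕ) : ZMod N) = -m := by simp [Nat.cast_sub val_lt.le]
    have conj_eq : 1 - stdAddChar (-m) = conj (1 - stdAddChar m) := by
      simp [AddChar.map_neg_eq_conj]
    rwa [reflect, dft_logSinDistSq_neg, conj_eq, Complex.norm_conj, Complex.norm_conj] at bound

lemma quadOp_logSinSq_apply (a c : ℝ) (x : GridFun N) (i : ZMod N) :
    quadOp N a c logSinSq x i = (N : ℂ)⁻¹ * ∑ j, logSinDistSq N (a - c) (i - j) * x j := by
  rw [quadOp_apply]
  congr 1
  refine Finset.sum_congr rfl fun j _ => ?_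
  obtain ⟨m, rfl⟩ := ZMod.intCast_surjective i
  obtain ⟨n, rfl⟩ := ZMod.intCast_surjective j
  rw [kernelMatrix_intCast a c biPeriodic_logSinSq, logSinSq_eq, abs_sin_gridPoint_sub]
  rfl

lemma dft_quadOp_logSinSq (a c : ℝ) (x : GridFun N) (m : ZMod N) :
    dft (quadOp N a c logSinSq x).ofLp m =
      (N : ℂ)⁻¹ * (dft (logSinDistSq N (a - c)) m * dft x.ofLp m) := by
  have : (quadOp N a c logSinSq x).ofLp =
      (N : ℂ)⁻¹ • fun i => ∑ j, logSinDistSq N (a - c) (i - j) * x j :=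
    funext (quadOp_logSinSq_apply a c x)
  rw [this, map_smul, Pi.smul_apply, dft_convolution, smul_eq_mul]

lemma norm_forwardDiff_le_norm_quadOp_logSinSq {a c : ℝ} (hac : ∀ k : ℤ, a - c ≠ k / 2)
    (x : GridFun N) :
    |(𝐞 (a - c) : ℂ).im| ^ 3 / 18 * ‖forwardDiff x‖ ≤
      ‖quadOp N a c (kernelDiff N (1, 0) (kernelDiff N (0, 1) logSinSq)) x‖ := by
  have hN : (N : ℂ) ≠ 0 := NeZero.ne _
  rw [quadOp_kernelDiff_fst a c (biPeriodic_logSinSq.kernelDiff N _),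
    quadOp_kernelDiff_snd a c biPeriodic_logSinSq, map_neg, norm_neg, ← norm_backwardDiff]
  refine mul_norm_le_norm_of_dft (by positivity) fun m => ?_
  by_cases hm : m = 0
  · simp [hm, dft_backwardDiff]
  · have symbol := symbol_lower_bound hac hm
    have : N * (stdAddChar m - 1) * ((N : ℂ)⁻¹ * (dft (logSinDistSq N (a - c)) m *
        dft (backwardDiff x).ofLp m)) = (stdAddChar m - 1) * dft (logSinDistSq N (a - c)) m *
        dft (backwardDiff x).ofLp m := by
      field_simp
    rw [dft_forwardDiff, dft_quadOp_logSinSq, this, norm_mul, norm_mul, norm_sub_rev]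
    gcongr

end PrincipalPart

/-! ### Logarithmic kernels and the discrete hypersingular operator -/

/-- A biperiodic kernel `coeff(s, t) log(sin²(π(s - t))) + smoothPart(s, t)` with smooth
coefficients. -/
structure LogKernel where
  /-- The coefficient of the logarithm. -/
  coeff : ℝ × ℝ → ℂ
  /-- The smooth summand. -/
  smoothPart : ℝ × ℝ → ℂ
  contDiff_coeff : ContDiff ℝ ∞ coeff
  contDiff_smoothPart : ContDiff ℝ ∞ smoothPart
  biPeriodic_coeff : BiPeriodic coeff
  biPeriodic_smoothPart : BiPeriodic smoothPart

namespace LogKernel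

/-- The function of two variables represented by a logarithmic kernel. -/
def kernel (V : LogKernel) : ℝ × ℝ → ℂ := V.coeff * logSinSq + V.smoothPart

variable (V : LogKernel)

lemma biPeriodic_kernel : BiPeriodic V.kernel :=
  (V.biPeriodic_coeff.mul biPeriodic_logSinSq).add V.biPeriodic_smoothPart

lemma kernelDiff_diag_iterate (N l : ℕ) :
    (kernelDiff N (1, 1))^[l] V.kernel =
      (kernelDiff N (1, 1))^[l] V.coeff * logSinSq + (kernelDiff N (1, 1))^[l] V.smoothPart := by
  induction l with
  | zero => rfl
  | succ l ih =>
    simp only [Function.iterate_succ_apply', ih, kernelDiff_add, kernelDiff_diag_mul_logSinSq]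

lemma exists_norm_quadOp_kernelDiff_diag_le {a c : ℝ} (hε : ∀ k : ℤ, a - c ≠ k) (l : ℕ) :
    ∃ C, 0 ≤ C ∧ ∀ (N : ℕ) [NeZero N] (x : GridFun N),
      ‖quadOp N a c ((kernelDiff N (1, 1))^[l] V.kernel) x‖ ≤ C * ‖x‖ := by
  simp only [kernelDiff_diag_iterate]
  exact exists_norm_quadOp_logKernel_le
    ((V.biPeriodic_coeff.uniformlySmooth_const V.contDiff_coeff).kernelDiff_iterate _ l)
    ((V.biPeriodic_smoothPart.uniformlySmooth_const V.contDiff_smoothPart).kernelDiff_iterate _ l)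
    (fun N => V.biPeriodic_coeff.kernelDiff_iterate N _ l)
    (fun N => V.biPeriodic_smoothPart.kernelDiff_iterate N _ l) hε

end LogKernel

/-- The coefficients of a hypersingular operator, with the offsets of the two staggered pairs of
grids on which its two logarithmic kernels are sampled. -/
structure HypersingularData where
  /-- The kernel of the hypersingular part. -/
  V₁ : LogKernel
  /-- The kernel of the part of order `-1`. -/
  V₂ : LogKernel
  /-- The constant value of the coefficient of the logarithm of `V₁` on the diagonal. -/
  κ : ℂ
  /-- Row offset for `V₁`. -/
  a₁ : ℝ
  /-- Column offset for `V₁`. -/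
  c₁ : ℝ
  /-- Row offset for `V₂`. -/
  a₂ : ℝ
  /-- Column offset for `V₂`. -/
  c₂ : ℝ
  coeff_diag : ∀ s, V₁.coeff (s, s) = κ
  κ_ne_zero : κ ≠ 0
  sub_ne_half : ∀ k : ℤ, a₁ - c₁ ≠ k / 2
  sub_ne_intCast : ∀ k : ℤ, a₂ - c₂ ≠ k

lemma kernelDiff_diag_iterate_diag (N l : ℕ) {A : ℝ × ℝ → ℂ} {κ : ℂ} (hA : ∀ s, A (s, s) = κ)
    (s : ℝ) : (kernelDiff N (1, 1))^[l + 1] A (s, s) = 0 := by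
  induction l generalizing A κ with
  | zero => simp [kernelDiff, hA]
  | succ l ih =>
    rw [Function.iterate_succ_apply]
    exact ih (κ := 0) fun s => by simp [kernelDiff, hA]

namespace HypersingularData

/-- The discrete hypersingular operator with both kernels differenced `l` times along the diagonal.
For `l = 0` it is `N` times the Nyström matrix. -/
def nystromOp (D : HypersingularData) (N : ℕ) [NeZero N] (l : ℕ) : Module.End ℂ (GridFun N) :=
  quadOp N D.a₁ D.c₁
      (kernelDiff N (1, 0) (kernelDiff N (0, 1) ((kernelDiff N (1, 1))^[l] D.V₁.kernel))) +
    quadOp N D.a₂ D.c₂ ((kernelDiff N (1, 1))^[l] D.V₂.kernel)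

variable (D : HypersingularData)

lemma forwardDiff_nystromOp [NeZero N] (l : ℕ) (x : GridFun N) :
    forwardDiff (D.nystromOp N l x) =
      D.nystromOp N (l + 1) (shift x) + D.nystromOp N l (forwardDiff x) := by
  simp only [nystromOp, LinearMap.add_apply, map_add]
  rw [forwardDiff_quadOp _ _
      (((D.V₁.biPeriodic_kernel.kernelDiff_iterate N _ l).kernelDiff N _).kernelDiff N _),
    forwardDiff_quadOp _ _ (D.V₂.biPeriodic_kernel.kernelDiff_iterate N _ l),
    kernelDiff_commute N (1, 1) (1, 0), kernelDiff_commute N (1, 1) (0, 1)]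
  simp only [Function.iterate_succ_apply']
  abel

/-- The constant diagonal value of the coefficient of `V₁` is annihilated by differencing along the
diagonal, so the differenced operators have order one only. -/
lemma exists_norm_nystromOp_succ_le (l : ℕ) :
    ∃ C, 0 ≤ C ∧ ∀ (N : ℕ) [NeZero N] (x : GridFun N),
      ‖D.nystromOp N (l + 1) x‖ ≤ C * (‖forwardDiff x‖ + ‖x‖) := by
  obtain ⟨C₁, _, hC₁⟩ := exists_norm_quadOp_kernelDiff_kernelDiff_le
    ((D.V₁.biPeriodic_coeff.uniformlySmooth_const D.V₁.contDiff_coeff).kernelDiff_iterate _ (l + 1))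
    (fun N => D.V₁.biPeriodic_coeff.kernelDiff_iterate N _ (l + 1))
    (fun N => kernelDiff_diag_iterate_diag N l D.coeff_diag)
    ((D.V₁.biPeriodic_smoothPart.uniformlySmooth_const
      D.V₁.contDiff_smoothPart).kernelDiff_iterate _ (l + 1))
    (ne_intCast_of_ne_half D.sub_ne_half) one_pos
  obtain ⟨C₂, _, hC₂⟩ := D.V₂.exists_norm_quadOp_kernelDiff_diag_le D.sub_ne_intCast (l + 1)
  refine ⟨1 + C₁ + C₂, by positivity, fun N _ x => ?_⟩
  have first_le := hC₁ N x
  rw [← D.V₁.kernelDiff_diag_iterate] at first_le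
  have cross_le : 0 ≤ (C₁ + C₂) * ‖forwardDiff x‖ := by positivity
  have := norm_nonneg x
  refine (norm_add_le _ _).trans ((add_le_add first_le (hC₂ N x)).trans ?_)
  linarith

lemma nystromOp_zero_apply [NeZero N] (x : GridFun N) :
    D.nystromOp N 0 x =
      D.κ • quadOp N D.a₁ D.c₁ (kernelDiff N (1, 0) (kernelDiff N (0, 1) logSinSq)) x +
        quadOp N D.a₁ D.c₁ (kernelDiff N (1, 0) (kernelDiff N (0, 1)
          ((D.V₁.coeff + Function.const _ (-D.κ)) * logSinSq + D.V₁.smoothPart))) x +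
        quadOp N D.a₂ D.c₂ ((kernelDiff N (1, 1))^[0] D.V₂.kernel) x := by
  have kernel_eq : D.V₁.kernel = D.κ • logSinSq +
      ((D.V₁.coeff + Function.const _ (-D.κ)) * logSinSq + D.V₁.smoothPart) := by
    ext p
    simp only [LogKernel.kernel, Pi.add_apply, Pi.mul_apply, Pi.smul_apply, Function.const_apply,
      smul_eq_mul]
    ring
  rw [nystromOp, Function.iterate_zero_apply, kernel_eq]
  simp only [kernelDiff_add, kernelDiff_smul, quadOp_add, quadOp_smul]
  rfl

lemma exists_norm_forwardDiff_le : ∃ C, 0 ≤ C ∧ ∀ (N : ℕ) [NeZero N] (x : GridFun N),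
    ‖forwardDiff x‖ ≤ C * (‖D.nystromOp N 0 x‖ + ‖x‖) := by
  set γ : ℝ := ‖D.κ‖ * (|(𝐞 (D.a₁ - D.c₁) : ℂ).im| ^ 3 / 18) with hγ
  have hγ0 : 0 < γ := by
    have := norm_pos_iff.2 D.κ_ne_zero
    have := abs_pos.2 (fourierChar_im_ne_zero D.sub_ne_half)
    positivity
  have const_biPeriodic : BiPeriodic (Function.const (ℝ × ℝ) (-D.κ)) := fun _ _ => ⟨rfl, rfl⟩
  have coeff_biPeriodic := D.V₁.biPeriodic_coeff.add const_biPeriodic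
  obtain ⟨C₁, _, hC₁⟩ := exists_norm_quadOp_kernelDiff_kernelDiff_le
    (coeff_biPeriodic.uniformlySmooth_const (D.V₁.contDiff_coeff.add contDiff_const))
    (fun _ => coeff_biPeriodic) (fun _ s => by simp [D.coeff_diag])
    (D.V₁.biPeriodic_smoothPart.uniformlySmooth_const D.V₁.contDiff_smoothPart)
    (ne_intCast_of_ne_half D.sub_ne_half) (θ := γ / 2) (by positivity)
  obtain ⟨C₂, _, hC₂⟩ := D.V₂.exists_norm_quadOp_kernelDiff_diag_le D.sub_ne_intCast 0
  refine ⟨2 / γ * (1 + C₁ + C₂), by positivity, fun N _ x => ?_⟩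
  set P := quadOp N D.a₁ D.c₁ (kernelDiff N (1, 0) (kernelDiff N (0, 1) logSinSq)) x
  set R := quadOp N D.a₁ D.c₁ (kernelDiff N (1, 0) (kernelDiff N (0, 1)
    ((D.V₁.coeff + Function.const _ (-D.κ)) * logSinSq + D.V₁.smoothPart))) x
  set T := quadOp N D.a₂ D.c₂ ((kernelDiff N (1, 1))^[0] D.V₂.kernel) x
  have split : D.nystromOp N 0 x = D.κ • P + R + T := D.nystromOp_zero_apply x
  have principal : γ * ‖forwardDiff x‖ ≤ ‖D.κ • P‖ := by
    rw [hγ, mul_assoc, norm_smul]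
    gcongr
    exact norm_forwardDiff_le_norm_quadOp_logSinSq D.sub_ne_half x
  have triangle : ‖D.κ • P‖ ≤ ‖D.nystromOp N 0 x‖ + (‖R‖ + ‖T‖) := by
    rw [show D.κ • P = D.nystromOp N 0 x - (R + T) by rw [split]; abel]
    exact (norm_sub_le _ _).trans (by gcongr; exact norm_add_le _ _)
  have cross_nonneg : 0 ≤ (C₁ + C₂) * ‖D.nystromOp N 0 x‖ := by positivity
  have absorbed : γ / 2 * ‖forwardDiff x‖ ≤ (1 + C₁ + C₂) * (‖D.nystromOp N 0 x‖ + ‖x‖) := by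
    linarith [hC₁ N x, hC₂ N x, norm_nonneg x]
  calc ‖forwardDiff x‖ = 2 / γ * (γ / 2 * ‖forwardDiff x‖) := by field_simp
    _ ≤ 2 / γ * ((1 + C₁ + C₂) * (‖D.nystromOp N 0 x‖ + ‖x‖)) := by gcongr
    _ = _ := by ring

end HypersingularData

/-! ### Discrete elliptic regularity -/

/-- The discrete Sobolev norm of order `k`. -/
def sobolevNorm [NeZero N] (k : ℕ) (x : GridFun N) : ℝ :=
  ∑ j ∈ Finset.range (k + 1), ‖(forwardDiff ^ j) x‖

section Sobolev

variable [NeZero N]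

lemma sobolevNorm_nonneg (k : ℕ) (x : GridFun N) : 0 ≤ sobolevNorm k x :=
  Finset.sum_nonneg fun _ _ => norm_nonneg _

lemma sobolevNorm_shift (k : ℕ) (x : GridFun N) : sobolevNorm k (shift x) = sobolevNorm k x :=
  Finset.sum_congr rfl fun j _ => by rw [forwardDiff_pow_shift, LinearIsometryEquiv.norm_map]

lemma sobolevNorm_succ (k : ℕ) (x : GridFun N) :
    sobolevNorm (k + 1) x = sobolevNorm k x + ‖(forwardDiff ^ (k + 1)) x‖ :=
  Finset.sum_range_succ _ _

lemma sobolevNorm_le_succ (k : ℕ) (x : GridFun N) : sobolevNorm k x ≤ sobolevNorm (k + 1) x := by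
  rw [sobolevNorm_succ]
  exact le_add_of_nonneg_right (norm_nonneg _)

lemma sobolevNorm_forwardDiff_le (k : ℕ) (x : GridFun N) :
    sobolevNorm k (forwardDiff x) ≤ sobolevNorm (k + 1) x := by
  rw [sobolevNorm, sobolevNorm, Finset.sum_range_succ' _ (k + 1)]
  exact le_add_of_nonneg_right (norm_nonneg _)

lemma norm_forwardDiff_pow_le_sobolevNorm (k : ℕ) (x : GridFun N) :
    ‖(forwardDiff ^ k) x‖ ≤ sobolevNorm k x :=
  Finset.single_le_sum (f := fun j => ‖(forwardDiff ^ j) x‖) (fun _ _ => norm_nonneg _)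
    (Finset.self_mem_range_succ k)

end Sobolev

namespace HypersingularData

variable (D : HypersingularData)

lemma exists_norm_forwardDiff_pow_commutator_le (k l : ℕ) :
    ∃ C, 0 ≤ C ∧ ∀ (N : ℕ) [NeZero N] (x : GridFun N),
      ‖(forwardDiff ^ k) (D.nystromOp N l x) - D.nystromOp N l ((forwardDiff ^ k) x)‖ ≤
        C * sobolevNorm k x := by
  induction k generalizing l with
  | zero => exact ⟨0, le_rfl, fun N _ x => by simp⟩
  | succ k ih =>
    obtain ⟨C₁, _, hC₁⟩ := ih l
    obtain ⟨C₂, _, hC₂⟩ := ih (l + 1)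
    obtain ⟨C₃, _, hC₃⟩ := D.exists_norm_nystromOp_succ_le l
    refine ⟨C₁ + C₂ + C₃, by positivity, fun N _ x => ?_⟩
    have split : (forwardDiff ^ (k + 1)) (D.nystromOp N l x) -
        D.nystromOp N l ((forwardDiff ^ (k + 1)) x) =
        ((forwardDiff ^ k) (D.nystromOp N l (forwardDiff x)) -
          D.nystromOp N l ((forwardDiff ^ k) (forwardDiff x))) +
        ((forwardDiff ^ k) (D.nystromOp N (l + 1) (shift x)) -
          D.nystromOp N (l + 1) ((forwardDiff ^ k) (shift x))) +
        D.nystromOp N (l + 1) ((forwardDiff ^ k) (shift x)) := by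
      rw [pow_succ, Module.End.mul_apply, Module.End.mul_apply, forwardDiff_nystromOp, map_add]
      abel
    have first_le : C₁ * sobolevNorm k (forwardDiff x) ≤ C₁ * sobolevNorm (k + 1) x := by
      gcongr
      exact sobolevNorm_forwardDiff_le k x
    have second_le : C₂ * sobolevNorm k (shift x) ≤ C₂ * sobolevNorm (k + 1) x := by
      rw [sobolevNorm_shift]
      gcongr
      exact sobolevNorm_le_succ k x
    have third_le : C₃ * (‖forwardDiff ((forwardDiff ^ k) (shift x))‖ +
        ‖(forwardDiff ^ k) (shift x)‖) ≤ C₃ * sobolevNorm (k + 1) x := by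
      rw [← Module.End.mul_apply, ← pow_succ', forwardDiff_pow_shift, forwardDiff_pow_shift,
        LinearIsometryEquiv.norm_map, LinearIsometryEquiv.norm_map, sobolevNorm_succ, add_comm]
      gcongr
      exact norm_forwardDiff_pow_le_sobolevNorm k x
    rw [split]
    refine (norm_add₃_le).trans ?_
    linarith [hC₁ N (forwardDiff x), hC₂ N (shift x), hC₃ N ((forwardDiff ^ k) (shift x))]

lemma exists_norm_forwardDiff_pow_succ_le (k : ℕ) :
    ∃ C, 0 ≤ C ∧ ∀ (N : ℕ) [NeZero N] (x : GridFun N),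
      ‖(forwardDiff ^ (k + 1)) x‖ ≤
        C * (‖(forwardDiff ^ k) (D.nystromOp N 0 x)‖ + sobolevNorm k x) := by
  obtain ⟨C₁, _, hC₁⟩ := D.exists_norm_forwardDiff_le
  obtain ⟨C₂, _, hC₂⟩ := D.exists_norm_forwardDiff_pow_commutator_le k 0
  refine ⟨C₁ * (1 + C₂ + 1), by positivity, fun N _ x => ?_⟩
  have image_le : ‖D.nystromOp N 0 ((forwardDiff ^ k) x)‖ ≤
      ‖(forwardDiff ^ k) (D.nystromOp N 0 x)‖ + C₂ * sobolevNorm k x :=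
    (norm_le_norm_add_norm_sub _ _).trans (by gcongr; exact hC₂ N x)
  have cross_nonneg : 0 ≤ (C₂ + 1) * ‖(forwardDiff ^ k) (D.nystromOp N 0 x)‖ := by positivity
  rw [pow_succ', Module.End.mul_apply, mul_assoc]
  refine (hC₁ N _).trans ?_
  gcongr
  linarith [norm_forwardDiff_pow_le_sobolevNorm k x, sobolevNorm_nonneg k x]

end HypersingularData

/-! ### Adjoints and lowest singular vectors -/

/-- The kernel of the adjoint of an integral operator. -/
def adjointKernel (F : ℝ × ℝ → ℂ) (p : ℝ × ℝ) : ℂ := conj (F p.swap)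

lemma kernelDiff_adjointKernel (N : ℕ) (w : ℝ × ℝ) (F : ℝ × ℝ → ℂ) :
    kernelDiff N w (adjointKernel F) = adjointKernel (kernelDiff N w.swap F) := by
  ext p
  simp [kernelDiff, adjointKernel]

lemma contDiff_adjointKernel {F : ℝ × ℝ → ℂ} (hF : ContDiff ℝ ∞ F) :
    ContDiff ℝ ∞ (adjointKernel F) :=
  Complex.conjCLE.contDiff.comp (hF.comp (contDiff_snd.prodMk contDiff_fst))

lemma biPeriodic_adjointKernel {F : ℝ × ℝ → ℂ} (hF : BiPeriodic F) :
    BiPeriodic (adjointKernel F) :=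
  fun s t => ⟨congrArg conj (hF t s).2, congrArg conj (hF t s).1⟩

lemma adjoint_quadOp [NeZero N] (a c : ℝ) (F : ℝ × ℝ → ℂ) :
    LinearMap.adjoint (quadOp N a c F) = quadOp N c a (adjointKernel F) := by
  rw [quadOp, map_smulₛₗ, ← Matrix.toEuclideanLin_conjTranspose_eq_adjoint, map_inv₀, map_natCast]
  rfl

namespace LogKernel

/-- The logarithmic kernel of the adjoint operator. -/
def adjoint (V : LogKernel) : LogKernel where
  coeff := adjointKernel V.coeff
  smoothPart := adjointKernel V.smoothPart
  contDiff_coeff := contDiff_adjointKernel V.contDiff_coeff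
  contDiff_smoothPart := contDiff_adjointKernel V.contDiff_smoothPart
  biPeriodic_coeff := biPeriodic_adjointKernel V.biPeriodic_coeff
  biPeriodic_smoothPart := biPeriodic_adjointKernel V.biPeriodic_smoothPart

lemma kernel_adjoint (V : LogKernel) : V.adjoint.kernel = adjointKernel V.kernel := by
  ext ⟨s, t⟩
  have symmetric : conj (logSinSq (t, s)) = logSinSq (s, t) := by
    simp only [logSinSq, Complex.conj_ofReal]
    rw [← neg_sub s t, mul_neg, Real.sin_neg, neg_sq]
  simp [kernel, adjoint, adjointKernel, symmetric]

end LogKernel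

namespace HypersingularData

/-- The coefficients of the adjoint operator. -/
def adjoint (D : HypersingularData) : HypersingularData where
  V₁ := D.V₁.adjoint
  V₂ := D.V₂.adjoint
  κ := conj D.κ
  a₁ := D.c₁
  c₁ := D.a₁
  a₂ := D.c₂
  c₂ := D.a₂
  coeff_diag s := by simp [LogKernel.adjoint, adjointKernel, D.coeff_diag]
  κ_ne_zero := by simpa using D.κ_ne_zero
  sub_ne_half k h := D.sub_ne_half (-k) (by push_cast; linarith)
  sub_ne_intCast k h := D.sub_ne_intCast (-k) (by push_cast; linarith)

lemma adjoint_nystromOp [NeZero N] (D : HypersingularData) :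
    LinearMap.adjoint (D.nystromOp N 0) = D.adjoint.nystromOp N 0 := by
  simp only [nystromOp, map_add, adjoint_quadOp, Function.iterate_zero, id, adjoint,
    LogKernel.kernel_adjoint, kernelDiff_adjointKernel, Prod.swap_prod_mk,
    kernelDiff_commute N (1, 0) (0, 1) D.V₁.kernel]

end HypersingularData

section SingularVector

variable {𝕜 E F : Type*} [RCLike 𝕜] [NormedAddCommGroup E] [InnerProductSpace 𝕜 E]
  [FiniteDimensional 𝕜 E] [NormedAddCommGroup F] [InnerProductSpace 𝕜 F] [FiniteDimensional 𝕜 F]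

open LinearMap in
lemma norm_sq_of_adjoint_apply_eq_smul {T : E →ₗ[𝕜] F} {x : E} {μ : ℝ}
    (h : adjoint T (T x) = (μ : 𝕜) • x) : ‖T x‖ ^ 2 = μ * ‖x‖ ^ 2 := by
  rw [← inner_self_eq_norm_sq (𝕜 := 𝕜), ← adjoint_inner_left, h, inner_smul_left,
    RCLike.conj_ofReal, RCLike.re_ofReal_mul, inner_self_eq_norm_sq]

open LinearMap in
lemma exists_lowest_singularVector [Nontrivial E] (T : E →ₗ[𝕜] F) :
    ∃ (x : E) (μ : ℝ), x ≠ 0 ∧ adjoint T (T x) = (μ : 𝕜) • x ∧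
      ∀ y, μ * ‖y‖ ^ 2 ≤ ‖T y‖ ^ 2 := by
  have symmetric : (adjoint T ∘ₗ T).IsSymmetric := fun x y => by
    simp [adjoint_inner_left, adjoint_inner_right]
  obtain ⟨x, hx⟩ := symmetric.hasEigenvalue_iInf_of_finiteDimensional.exists_hasEigenvector
  refine ⟨x, _, hx.2, hx.apply_eq_smul, fun y => ?_⟩
  rcases eq_or_ne y 0 with rfl | hy
  · simp
  have rayleigh (z : E) : RCLike.re (inner 𝕜 ((adjoint T ∘ₗ T) z) z) = ‖T z‖ ^ 2 := by
    rw [comp_apply, adjoint_inner_left, inner_self_eq_norm_sq]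
  simp only [rayleigh]
  rw [← le_div_iff₀ (by positivity)]
  refine ciInf_le (f := fun z : {z : E // z ≠ 0} => ‖T z‖ ^ 2 / ‖(z : E)‖ ^ 2) ⟨0, ?_⟩ ⟨y, hy⟩
  rintro _ ⟨z, rfl⟩
  positivity

open LinearMap in
lemma exists_singularVector_norm_le {T : E →ₗ[𝕜] F} {y : E} {β r : ℝ} (hr : 0 ≤ r)
    (hy : ‖T y‖ < β * ‖y‖) :
    ∃ (x : E) (μ : ℝ), ‖x‖ = r ∧ |μ| ≤ β ^ 2 ∧ adjoint T (T x) = (μ : 𝕜) • x ∧ ‖T x‖ ≤ β * r := by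
  have hβy : 0 < β * ‖y‖ := (norm_nonneg _).trans_lt hy
  have hy0 : 0 < ‖y‖ := (norm_nonneg y).lt_of_ne' fun h => by simp [h] at hβy
  have hβ : 0 < β := pos_of_mul_pos_left hβy hy0.le
  have : Nontrivial E := ⟨y, 0, norm_pos_iff.1 hy0⟩
  obtain ⟨e, μ, he, eigen, lowest⟩ := exists_lowest_singularVector T
  have he0 : 0 < ‖e‖ := norm_pos_iff.2 he
  have hμ0 : 0 ≤ μ := nonneg_of_mul_nonneg_left
    ((sq_nonneg _).trans_eq (norm_sq_of_adjoint_apply_eq_smul eigen)) (by positivity)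
  have hμ : μ ≤ β ^ 2 := by
    refine le_of_mul_le_mul_right ((lowest y).trans ?_) (pow_pos hy0 2)
    rw [← mul_pow]
    gcongr
  set x := ((r / ‖e‖ : ℝ) : 𝕜) • e
  have norm_eq : ‖x‖ = r := by
    rw [norm_smul, RCLike.norm_ofReal, abs_of_nonneg (by positivity), div_mul_cancel₀ _ he0.ne']
  have eigen' : adjoint T (T x) = (μ : 𝕜) • x := by
    rw [map_smul, map_smul, eigen, smul_comm]
  refine ⟨x, μ, norm_eq, by rwa [abs_of_nonneg hμ0], eigen', ?_⟩
  refine (pow_le_pow_iff_left₀ (norm_nonneg _) (by positivity) two_ne_zero).1 ?_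
  rw [norm_sq_of_adjoint_apply_eq_smul eigen', norm_eq, mul_pow]
  gcongr

end SingularVector

lemma HypersingularData.exists_sobolevNorm_singularVector_le (D : HypersingularData) (k : ℕ) :
    ∃ C, 0 ≤ C ∧ ∀ (N : ℕ) [NeZero N] (x : GridFun N) (μ : ℝ), |μ| ≤ 1 →
      D.adjoint.nystromOp N 0 (D.nystromOp N 0 x) = (μ : ℂ) • x →
      sobolevNorm k x ≤ C * ‖x‖ ∧ sobolevNorm k (D.nystromOp N 0 x) ≤ C * ‖x‖ := by
  induction k with
  | zero =>
    refine ⟨1, zero_le_one, fun N _ x μ hμ hx => ?_⟩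
    rw [← adjoint_nystromOp] at hx
    have image_le : ‖D.nystromOp N 0 x‖ ≤ ‖x‖ := by
      refine (pow_le_pow_iff_left₀ (norm_nonneg _) (norm_nonneg _) two_ne_zero).1 ?_
      rw [norm_sq_of_adjoint_apply_eq_smul hx]
      exact mul_le_of_le_one_left (sq_nonneg _) (le_of_abs_le hμ)
    simpa [sobolevNorm] using image_le
  | succ k ih =>
    obtain ⟨C, _, hC⟩ := ih
    obtain ⟨C₁, _, hC₁⟩ := D.exists_norm_forwardDiff_pow_succ_le k
    obtain ⟨C₂, _, hC₂⟩ := D.adjoint.exists_norm_forwardDiff_pow_succ_le k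
    refine ⟨C + 2 * C₁ * C + 2 * C₂ * C, by positivity, fun N _ x μ hμ hx => ?_⟩
    obtain ⟨vector_le, image_le⟩ := hC N x μ hμ hx
    have diff_image_le := (norm_forwardDiff_pow_le_sobolevNorm k _).trans image_le
    have diff_vector_le := (norm_forwardDiff_pow_le_sobolevNorm k x).trans vector_le
    have next_vector_le : ‖(forwardDiff ^ (k + 1)) x‖ ≤ C₁ * (C * ‖x‖ + C * ‖x‖) :=
      (hC₁ N x).trans (by gcongr)
    have next_image_le : ‖(forwardDiff ^ (k + 1)) (D.nystromOp N 0 x)‖ ≤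
        C₂ * (C * ‖x‖ + C * ‖x‖) := by
      refine (hC₂ N (D.nystromOp N 0 x)).trans ?_
      have scaled_le : |μ| * ‖(forwardDiff ^ k) x‖ ≤ C * ‖x‖ :=
        (mul_le_of_le_one_left (norm_nonneg _) hμ).trans diff_vector_le
      rw [hx, map_smul, norm_smul, Complex.norm_real, Real.norm_eq_abs]
      gcongr
    have : 0 ≤ C₁ * C * ‖x‖ := by positivity
    have : 0 ≤ C₂ * C * ‖x‖ := by positivity
    rw [sobolevNorm_succ, sobolevNorm_succ]
    constructor <;> linarith

/-! ### Fourier series -/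

/-- The Fourier series with coefficients `c`. -/
def fourierSeries (c : ℤ → ℂ) (t : ℝ) : ℂ := ∑' m : ℤ, c m * (𝐞 (m * t) : ℂ)

/-- Faster than polynomial decay of a sequence of Fourier coefficients. -/
def RapidDecay (c : ℤ → ℂ) : Prop := ∀ k : ℕ, ∃ B, ∀ m : ℤ, (1 + |(m : ℝ)|) ^ k * ‖c m‖ ≤ B

lemma summable_inv_one_add_abs_sq : Summable fun m : ℤ => ((1 + |(m : ℝ)|) ^ 2)⁻¹ := by
  refine (Real.summable_one_div_int_pow.2 one_lt_two).of_norm_bounded_eventually ?_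
  filter_upwards [eventually_cofinite_ne (0 : ℤ)] with m hm
  have : (0 : ℝ) < |(m : ℝ)| := abs_pos.2 (Int.cast_ne_zero.2 hm)
  rw [Real.norm_of_nonneg (by positivity), one_div, ← sq_abs (m : ℝ)]
  gcongr
  linarith

lemma fourierChar_intCast (m : ℤ) : (𝐞 m : ℂ) = 1 := by
  have := stdAddChar_intCast (N := 1) m
  rwa [Nat.cast_one, div_one, Subsingleton.elim (m : ZMod 1) 0, AddChar.map_zero_eq_one,
    eq_comm] at this

lemma fourierSeries_periodic (c : ℤ → ℂ) : Function.Periodic (fourierSeries c) 1 := fun t =>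
  tsum_congr fun m => by
    rw [mul_add, mul_one, AddChar.map_add_eq_mul, Circle.coe_mul, fourierChar_intCast, mul_one]

lemma hasDerivAt_fourierChar_mul (m t : ℝ) :
    HasDerivAt (fun t : ℝ => (𝐞 (m * t) : ℂ)) (2 * π * m * Complex.I * 𝐞 (m * t)) t := by
  refine ((Real.hasDerivAt_fourierChar (m * t)).scomp t
    ((hasDerivAt_id t).const_mul m)).congr_deriv ?_
  rw [mul_one, Complex.real_smul]
  ring

section RapidDecay

variable {c : ℤ → ℂ}

lemma RapidDecay.exists_norm_le (h : RapidDecay c) :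
    ∃ B, ∀ m : ℤ, ‖c m‖ ≤ B * ((1 + |(m : ℝ)|) ^ 2)⁻¹ := by
  obtain ⟨B, hB⟩ := h 2
  exact ⟨B, fun m => (le_mul_inv_iff₀ (by positivity)).2 ((mul_comm _ _).trans_le (hB m))⟩

lemma summable_mul_fourierChar {u : ℤ → ℝ} (hu : Summable u) (hc : ∀ m, ‖c m‖ ≤ u m) (t : ℝ) :
    Summable fun m : ℤ => c m * (𝐞 (m * t) : ℂ) :=
  hu.of_norm_bounded fun m => by rw [norm_mul, Circle.norm_coe, mul_one]; exact hc m

lemma RapidDecay.deriv (h : RapidDecay c) : RapidDecay fun m => 2 * π * m * Complex.I * c m := by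
  intro k
  obtain ⟨B, hB⟩ := h (k + 1)
  refine ⟨2 * π * B, fun m => ?_⟩
  calc (1 + |(m : ℝ)|) ^ k * ‖2 * π * m * Complex.I * c m‖
      = 2 * π * ((1 + |(m : ℝ)|) ^ k * |(m : ℝ)| * ‖c m‖) := by
        simp [abs_of_pos Real.pi_pos]
        ring
    _ ≤ 2 * π * ((1 + |(m : ℝ)|) ^ k * (1 + |(m : ℝ)|) * ‖c m‖) := by
        have := Real.pi_pos
        gcongr
        linarith
    _ ≤ 2 * π * B := by
        rw [← pow_succ]
        have := Real.pi_pos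
        gcongr
        exact hB m

lemma RapidDecay.hasDerivAt_fourierSeries (h : RapidDecay c) (t : ℝ) :
    HasDerivAt (fourierSeries c) (fourierSeries (fun m => 2 * π * m * Complex.I * c m) t) t := by
  obtain ⟨B', hB'⟩ := h.deriv.exists_norm_le
  obtain ⟨B, hB⟩ := h.exists_norm_le
  have summable := summable_inv_one_add_abs_sq
  refine hasDerivAt_tsum (g := fun (m : ℤ) (y : ℝ) => c m * (𝐞 (m * y) : ℂ))
    (g' := fun (m : ℤ) (y : ℝ) => 2 * π * m * Complex.I * c m * (𝐞 (m * y) : ℂ))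
    (summable.mul_left B') (fun m y => ?_) (fun m y => ?_)
    (summable_mul_fourierChar (summable.mul_left B) hB 0) t
  · refine ((hasDerivAt_fourierChar_mul m y).const_mul (c m)).congr_deriv ?_
    push_cast
    ring
  · rw [norm_mul, Circle.norm_coe, mul_one]
    exact hB' m

lemma RapidDecay.contDiff_fourierSeries (h : RapidDecay c) : ContDiff ℝ ∞ (fourierSeries c) := by
  refine contDiff_infty.2 fun n => ?_
  induction n generalizing c with
  | zero =>
    exact contDiff_zero.2 (continuous_iff_continuousAt.2 fun t =>
      (h.hasDerivAt_fourierSeries t).continuousAt)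
  | succ n ih =>
    have deriv_eq : _root_.deriv (fourierSeries c) = _ :=
      funext fun t => (h.hasDerivAt_fourierSeries t).deriv
    rw [Nat.cast_succ, contDiff_succ_iff_deriv, deriv_eq]
    exact ⟨fun t => (h.hasDerivAt_fourierSeries t).differentiableAt, by simp, ih h.deriv⟩

end RapidDecay

lemma tendstoUniformly_fourierSeries {ι : Type*} {l : Filter ι} {b : ι → ℤ → ℂ} {c : ℤ → ℂ}
    {u : ℤ → ℝ} (hu : Summable u) (hb : ∀ i m, ‖b i m‖ ≤ u m) (hc : ∀ m, ‖c m‖ ≤ u m)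
    (hlim : ∀ m, Tendsto (fun i => b i m) l (𝓝 (c m))) :
    TendstoUniformly (fun i => fourierSeries (b i)) (fourierSeries c) l := by
  have norm_sub_le_add : ∀ i m, ‖c m - b i m‖ ≤ u m + u m := fun i m =>
    (norm_sub_le _ _).trans (add_le_add (hc m) (hb i m))
  have l1_lim : Tendsto (fun i => ∑' m, ‖c m - b i m‖) l (𝓝 0) := by
    rw [← tsum_zero (α := ℝ) (β := ℤ)]
    refine tendsto_tsum_of_dominated_convergence (hu.add hu) (fun m => ?_)
      (Eventually.of_forall fun i m => (norm_norm _).trans_le (norm_sub_le_add i m))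
    simpa using ((hlim m).const_sub (c m)).norm
  refine Metric.tendstoUniformly_iff.2 fun δ hδ => ?_
  filter_upwards [l1_lim.eventually (gt_mem_nhds hδ)] with i hi t
  have summable : Summable fun m => ‖c m - b i m‖ :=
    Summable.of_nonneg_of_le (fun _ => norm_nonneg _) (norm_sub_le_add i) (hu.add hu)
  rw [dist_eq_norm, fourierSeries, fourierSeries, ← (summable_mul_fourierChar hu hc t).tsum_sub
    (summable_mul_fourierChar hu (hb i) t)]
  refine (tsum_of_norm_bounded summable.hasSum fun m => ?_).trans_lt hi
  rw [← sub_mul, norm_mul, Circle.norm_coe, mul_one]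

/-! ### Compactness of families of smooth grid functions -/

section Coefficients

variable [NeZero N]

/-- Discrete Fourier coefficients of a grid function, extended by zero from the representatives of
`ℤ/N` of least absolute value to all of `ℤ`. -/
def discreteFourierCoeff (x : GridFun N) (m : ℤ) : ℂ :=
  if (m : ZMod N).valMinAbs = m then 1 / N * dft x.ofLp m else 0

lemma tsum_discreteFourierCoeff_mul (x : GridFun N) (θ : ℤ → ℂ) :
    ∑' m, discreteFourierCoeff x m * θ m = 1 / N * ∑ k, dft x.ofLp k * θ k.valMinAbs := by
  have support_subset : (Function.support fun m => discreteFourierCoeff x m * θ m) ⊆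
      Set.range (ZMod.valMinAbs : ZMod N → ℤ) := fun m hm => by
    by_contra not_mem
    exact hm (mul_eq_zero_of_left (if_neg fun h => not_mem ⟨_, h⟩) _)
  rw [← ZMod.injective_valMinAbs.tsum_eq support_subset, tsum_fintype, Finset.mul_sum]
  exact Finset.sum_congr rfl fun k _ => by
    rw [discreteFourierCoeff, ZMod.coe_valMinAbs, if_pos rfl, mul_assoc]

lemma apply_eq_fourierSeries (x : GridFun N) (a : ℝ) (j : ℤ) :
    x j = fourierSeries (fun m => discreteFourierCoeff x m * 𝐞 (-(m * a / N)))
      (gridPoint N a j) := by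
  have hN : (N : ℂ) ≠ 0 := NeZero.ne _
  simp only [fourierSeries, mul_assoc]
  rw [tsum_discreteFourierCoeff_mul, ← mul_right_inj' hN, ← sum_stdAddChar_mul_dft, ← mul_assoc,
    mul_one_div_cancel hN, one_mul]
  refine Finset.sum_congr rfl fun k _ => ?_
  rw [← Circle.coe_mul, ← AddChar.map_add_eq_mul, mul_comm, ← ZMod.coe_valMinAbs k,
    ← Int.cast_mul, stdAddChar_intCast, ZMod.coe_valMinAbs]
  unfold gridPoint
  congr 3
  push_cast
  ring

lemma discreteFourierCoeff_backwardDiff (x : GridFun N) (m : ℤ) :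
    discreteFourierCoeff (backwardDiff x) m =
      N * (1 - 𝐞 (-(m / N))) * discreteFourierCoeff x m := by
  unfold discreteFourierCoeff
  split_ifs
  · rw [dft_backwardDiff, ← Int.cast_neg, stdAddChar_intCast, Int.cast_neg, neg_div]
    ring
  · rw [mul_zero]

lemma sqrt_mul_norm_discreteFourierCoeff_le (x : GridFun N) (m : ℤ) :
    √N * ‖discreteFourierCoeff x m‖ ≤ ‖x‖ := by
  have hN : (0 : ℝ) < N := Nat.cast_pos.2 (NeZero.pos N)
  unfold discreteFourierCoeff
  split_ifs
  · have norm_dft_le : ‖dft x.ofLp (m : ZMod N)‖ ≤ √N * ‖x‖ := calc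
      ‖dft x.ofLp (m : ZMod N)‖ ≤ ∑ j, ‖x j‖ := by
        rw [ZMod.dft_apply]
        refine norm_sum_le_of_le _ fun j _ => ?_
        rw [smul_eq_mul, norm_mul, AddChar.norm_apply, one_mul]
      _ ≤ √N * ‖x‖ := sum_norm_le x
    rw [norm_mul, norm_div, norm_one, Complex.norm_natCast, one_div]
    calc √N * ((N : ℝ)⁻¹ * ‖dft x.ofLp (m : ZMod N)‖)
        ≤ √N * ((N : ℝ)⁻¹ * (√N * ‖x‖)) := by gcongr
      _ = (√N * √N) * (N : ℝ)⁻¹ * ‖x‖ := by ring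
      _ = ‖x‖ := by rw [Real.mul_self_sqrt hN.le, mul_inv_cancel₀ hN.ne', one_mul]
  · simp

lemma four_mul_abs_le_norm_stdAddChar_sub_one {m : ℤ} (hm : (m : ZMod N).valMinAbs = m) :
    4 * |(m : ℝ)| ≤ N * ‖stdAddChar (m : ZMod N) - 1‖ := by
  have hN : (0 : ℝ) < N := Nat.cast_pos.2 (NeZero.pos N)
  have two_mul_le : 2 * m.natAbs ≤ N := by
    have := ZMod.natAbs_valMinAbs_le (m : ZMod N)
    rw [hm] at this
    omega
  have norm_natAbs :
      ‖1 - stdAddChar (m.natAbs : ZMod N)‖ = ‖stdAddChar (m : ZMod N) - 1‖ := by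
    rw [norm_sub_rev]
    rcases Int.natAbs_eq m with h | h
    · conv_rhs => rw [h, Int.cast_natCast]
    · conv_rhs => rw [h, Int.cast_neg, Int.cast_natCast, AddChar.map_neg_eq_conj,
        ← Complex.norm_conj, map_sub, map_one, Complex.conj_conj]
  have lower := four_mul_div_le_norm_one_sub_stdAddChar two_mul_le
  rw [norm_natAbs, Nat.cast_natAbs, Int.cast_abs, ← mul_div_assoc, div_le_iff₀' hN] at lower
  exact lower

lemma four_mul_abs_mul_norm_discreteFourierCoeff_le (x : GridFun N) (m : ℤ) :
    4 * |(m : ℝ)| * ‖discreteFourierCoeff x m‖ ≤ ‖discreteFourierCoeff (forwardDiff x) m‖ := by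
  unfold discreteFourierCoeff
  split_ifs with hm
  · rw [dft_forwardDiff, mul_left_comm, norm_mul (_ * _) (_ * _), norm_mul (N : ℂ),
      Complex.norm_natCast]
    exact mul_le_mul_of_nonneg_right (four_mul_abs_le_norm_stdAddChar_sub_one hm) (norm_nonneg _)
  · simp

lemma one_add_abs_pow_mul_norm_discreteFourierCoeff_le (x : GridFun N) (k : ℕ) (m : ℤ) :
    (1 + |(m : ℝ)|) ^ k * (√N * ‖discreteFourierCoeff x m‖) ≤
      ‖x‖ + ‖(forwardDiff ^ k) x‖ := by
  have iterate : (4 * |(m : ℝ)|) ^ k * ‖discreteFourierCoeff x m‖ ≤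
      ‖discreteFourierCoeff ((forwardDiff ^ k) x) m‖ := by
    induction k with
    | zero => simp
    | succ k ih =>
      rw [pow_succ', pow_succ', Module.End.mul_apply, mul_assoc]
      refine le_trans ?_ (four_mul_abs_mul_norm_discreteFourierCoeff_le _ m)
      gcongr
  have pow_le : (1 + |(m : ℝ)|) ^ k ≤ 1 + (4 * |(m : ℝ)|) ^ k := by
    rcases eq_or_ne m 0 with rfl | hm
    · simp
    · have : (1 : ℝ) ≤ |(m : ℝ)| := by exact_mod_cast Int.one_le_abs hm
      exact le_add_of_nonneg_of_le zero_le_one (by gcongr; linarith)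
  calc (1 + |(m : ℝ)|) ^ k * (√N * ‖discreteFourierCoeff x m‖)
      ≤ (1 + (4 * |(m : ℝ)|) ^ k) * (√N * ‖discreteFourierCoeff x m‖) := by gcongr
    _ = √N * ‖discreteFourierCoeff x m‖ +
          √N * ((4 * |(m : ℝ)|) ^ k * ‖discreteFourierCoeff x m‖) := by ring
    _ ≤ √N * ‖discreteFourierCoeff x m‖ +
          √N * ‖discreteFourierCoeff ((forwardDiff ^ k) x) m‖ := by gcongr
    _ ≤ _ := add_le_add (sqrt_mul_norm_discreteFourierCoeff_le _ m)
        (sqrt_mul_norm_discreteFourierCoeff_le _ m)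

end Coefficients

section Compactness

variable {M : ℕ → ℕ}

/-- Uniform convergence of grid functions, on the grids `(j + a)/M n`, to a function on the line. -/
def GridTendsto (x : ∀ n, GridFun (M n)) (a : ℝ) (f : ℝ → ℂ) : Prop :=
  ∀ δ > 0, ∀ᶠ n in atTop, ∀ j : ℤ, ‖x n j - f (gridPoint (M n) a j)‖ < δ

lemma tendsto_fourierChar_div (hM : Tendsto M atTop atTop) (m : ℝ) :
    Tendsto (fun n => (𝐞 (-(m / M n)) : ℂ)) atTop (𝓝 1) := by
  have arg_tendsto : Tendsto (fun n => -(m / M n)) atTop (𝓝 0) := by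
    simpa using ((tendsto_natCast_atTop_atTop.comp hM).const_div_atTop m).neg
  simpa [Function.comp_def] using
    (Real.differentiable_fourierChar.continuous.tendsto 0).comp arg_tendsto

variable [∀ n, NeZero (M n)]

/-- Boundedness of a sequence of grid functions in all discrete Sobolev norms; the factor `√(M n)`
turns the Euclidean norm of grid functions into a discrete `L²` norm. -/
def BoundedDifferences (x : ∀ n, GridFun (M n)) : Prop :=
  ∀ k : ℕ, ∃ B, ∀ n, ‖(forwardDiff ^ k) (x n)‖ ≤ B * √(M n)

lemma BoundedDifferences.backwardDiff {x : ∀ n, GridFun (M n)} (h : BoundedDifferences x) :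
    BoundedDifferences fun n => backwardDiff (x n) := by
  intro k
  obtain ⟨B, hB⟩ := h (k + 1)
  refine ⟨B, fun n => (le_of_eq ?_).trans (hB n)⟩
  have shift_eq : shift (Nystrom.backwardDiff (x n)) = forwardDiff (x n) := by ext j; simp
  rw [← shift.norm_map, ← forwardDiff_pow_shift, shift_eq, pow_succ, Module.End.mul_apply]

lemma BoundedDifferences.exists_norm_discreteFourierCoeff_le {x : ∀ n, GridFun (M n)}
    (h : BoundedDifferences x) (k : ℕ) :
    ∃ B, ∀ n (m : ℤ), (1 + |(m : ℝ)|) ^ k * ‖discreteFourierCoeff (x n) m‖ ≤ B := by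
  obtain ⟨B, hB⟩ := h 0
  obtain ⟨B', hB'⟩ := h k
  refine ⟨B + B', fun n m => ?_⟩
  have sqrt_pos : 0 < √(M n : ℝ) := Real.sqrt_pos.2 (Nat.cast_pos.2 (NeZero.pos (M n)))
  refine le_of_mul_le_mul_right ?_ sqrt_pos
  calc (1 + |(m : ℝ)|) ^ k * ‖discreteFourierCoeff (x n) m‖ * √(M n)
      = (1 + |(m : ℝ)|) ^ k * (√(M n) * ‖discreteFourierCoeff (x n) m‖) := by ring
    _ ≤ ‖x n‖ + ‖(forwardDiff ^ k) (x n)‖ :=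
        one_add_abs_pow_mul_norm_discreteFourierCoeff_le (x n) k m
    _ ≤ B * √(M n) + B' * √(M n) := add_le_add (hB n) (hB' n)
    _ = (B + B') * √(M n) := by ring

lemma BoundedDifferences.rapidDecay_of_tendsto {x : ∀ n, GridFun (M n)}
    (h : BoundedDifferences x) {c : ℤ → ℂ}
    (hc : ∀ m, Tendsto (fun n => discreteFourierCoeff (x n) m) atTop (𝓝 (c m))) :
    RapidDecay c := fun k =>
  (h.exists_norm_discreteFourierCoeff_le k).imp fun _ hB m =>
    le_of_tendsto ((hc m).norm.const_mul _) (Eventually.of_forall fun n => hB n m)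

lemma tendsto_nat_mul_one_sub_fourierChar (hM : Tendsto M atTop atTop) (m : ℝ) :
    Tendsto (fun n => (M n : ℂ) * (1 - 𝐞 (-(m / M n)))) atTop (𝓝 (2 * π * m * Complex.I)) := by
  have slope := hasDerivAt_iff_tendsto_slope_zero.1
    ((hasDerivAt_fourierChar_mul (-m) 0).const_sub (1 : ℂ))
  have mesh_tendsto : Tendsto (fun n => (M n : ℝ)⁻¹) atTop (𝓝[≠] 0) :=
    tendsto_nhdsWithin_iff.2 ⟨tendsto_inv_atTop_zero.comp (tendsto_natCast_atTop_atTop.comp hM),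
      Eventually.of_forall fun n => inv_ne_zero (NeZero.ne _)⟩
  convert slope.comp mesh_tendsto using 2 with n
  · simp [div_eq_mul_inv]
  · simp

lemma BoundedDifferences.gridTendsto_fourierSeries {x : ∀ n, GridFun (M n)}
    (h : BoundedDifferences x) (hM : Tendsto M atTop atTop) {c : ℤ → ℂ}
    (hc : ∀ m, Tendsto (fun n => discreteFourierCoeff (x n) m) atTop (𝓝 (c m)))
    (a : ℝ) : GridTendsto x a (fourierSeries c) := by
  intro δ hδ
  obtain ⟨B, hB⟩ := h.exists_norm_discreteFourierCoeff_le 2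
  have coeff_le : ∀ n (m : ℤ), ‖discreteFourierCoeff (x n) m * 𝐞 (-(m * a / M n))‖ ≤
      B * ((1 + |(m : ℝ)|) ^ 2)⁻¹ := fun n m => by
    rw [norm_mul, Circle.norm_coe, mul_one, le_mul_inv_iff₀ (by positivity), mul_comm]
    exact hB n m
  have coeff_lim : ∀ m : ℤ, Tendsto
      (fun n => discreteFourierCoeff (x n) m * 𝐞 (-(m * a / M n))) atTop (𝓝 (c m)) := fun m => by
    simpa using (hc m).mul (tendsto_fourierChar_div hM (m * a))
  have uniform := tendstoUniformly_fourierSeries (summable_inv_one_add_abs_sq.mul_left B) coeff_le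
    (fun m => le_of_tendsto (coeff_lim m).norm (Eventually.of_forall fun n => coeff_le n m))
    coeff_lim
  filter_upwards [Metric.tendstoUniformly_iff.1 uniform δ hδ] with n hn j
  rw [apply_eq_fourierSeries (x n) a, ← dist_eq_norm, dist_comm]
  exact hn _

lemma BoundedDifferences.exists_subseq_gridTendsto {x : ∀ n, GridFun (M n)}
    (h : BoundedDifferences x) (hM : Tendsto M atTop atTop) :
    ∃ φ : ℝ → ℂ, ContDiff ℝ ∞ φ ∧ Function.Periodic φ 1 ∧
      ∃ σ : ℕ → ℕ, StrictMono σ ∧ ∀ a, GridTendsto (fun n => x (σ n)) a φ ∧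
        GridTendsto (fun n => Nystrom.backwardDiff (x (σ n))) a (deriv φ) := by
  obtain ⟨B, hB⟩ := h.exists_norm_discreteFourierCoeff_le 0
  have compact : IsCompact (Set.univ.pi fun _ : ℤ => Metric.closedBall (0 : ℂ) B) :=
    isCompact_univ_pi fun _ => isCompact_closedBall _ _
  obtain ⟨c, -, σ, hσ, coeff_lim⟩ := compact.tendsto_subseq
    (x := fun n => discreteFourierCoeff (x n)) fun n m _ => by simpa using hB n m
  have hMσ : Tendsto (fun n => M (σ n)) atTop atTop := hM.comp hσ.tendsto_atTop
  have hxσ : BoundedDifferences fun n => x (σ n) := fun k => (h k).imp fun _ hk n => hk (σ n)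
  have hc := tendsto_pi_nhds.1 coeff_lim
  have decay : RapidDecay c := hxσ.rapidDecay_of_tendsto hc
  have hc' : ∀ m : ℤ, Tendsto (fun n => discreteFourierCoeff (Nystrom.backwardDiff (x (σ n))) m)
      atTop (𝓝 (2 * π * m * Complex.I * c m)) := fun m => by
    simp only [discreteFourierCoeff_backwardDiff]
    exact_mod_cast (tendsto_nat_mul_one_sub_fourierChar hMσ m).mul (hc m)
  refine ⟨fourierSeries c, decay.contDiff_fourierSeries, fourierSeries_periodic c, σ, hσ,
    fun a => ⟨hxσ.gridTendsto_fourierSeries hMσ hc a, ?_⟩⟩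
  rw [funext fun t => (decay.hasDerivAt_fourierSeries t).deriv]
  exact hxσ.backwardDiff.gridTendsto_fourierSeries hMσ hc' a

end Compactness

/-! ### Integral operators as limits of quadrature operators -/

/-- The integral operator over one period with kernel `F`. -/
def integralOp (F : ℝ × ℝ → ℂ) (g : ℝ → ℂ) (s : ℝ) : ℂ := ∫ t in (0 : ℝ)..1, F (s, t) * g t

lemma BiPeriodic.uniformContinuous {E : Type*} [PseudoMetricSpace E] {F : ℝ × ℝ → E}
    (hF : BiPeriodic F) (hc : Continuous F) : UniformContinuous F := by
  have compact : IsCompact (Set.Icc ((-1 : ℝ), (-1 : ℝ)) (2, 2)) := isCompact_Icc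
  refine Metric.uniformContinuous_iff.2 fun ε hε => ?_
  obtain ⟨δ, hδ, close⟩ := Metric.uniformContinuousOn_iff.1
    (compact.uniformContinuousOn_of_continuous hc.continuousOn) ε hε
  refine ⟨min δ 1, by positivity, fun {p q} hpq => ?_⟩
  obtain ⟨hpq_δ, hpq_one⟩ := lt_min_iff.1 hpq
  have translate : ∀ r : ℝ × ℝ, F r = F (r - ((⌊p.1⌋ : ℝ), (⌊p.2⌋ : ℝ))) := fun r => by
    simpa [sub_eq_add_neg, Prod.add_def] using (hF.add_intCast r.1 r.2 (-⌊p.1⌋) (-⌊p.2⌋)).symm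
  rw [Prod.dist_eq, max_lt_iff, Real.dist_eq, Real.dist_eq, abs_lt, abs_lt] at hpq_one
  have floor₁ := Int.floor_le p.1
  have floor₂ := Int.floor_le p.2
  have lt_floor₁ := Int.lt_floor_add_one p.1
  have lt_floor₂ := Int.lt_floor_add_one p.2
  rw [translate p, translate q]
  refine close _ ⟨⟨?_, ?_⟩, ?_, ?_⟩ _ ⟨⟨?_, ?_⟩, ?_, ?_⟩ (by rwa [dist_sub_right]) <;>
    simp only [Prod.fst_sub, Prod.snd_sub] <;> linarith

lemma norm_average_sub_integral_le {f : ℝ → ℂ} (hf : Continuous f) {y : ℤ → ℂ}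
    {a δ : ℝ} (hy : ∀ (j : ℤ) (t : ℝ), |gridPoint N a j - t| ≤ 1 / N → ‖y j - f t‖ ≤ δ) (i : ℤ)
    (m : ℕ) : ‖(N : ℂ)⁻¹ * ∑ k ∈ Finset.range m, y (i + k) -
      ∫ t in gridPoint N a i..gridPoint N a (i + m), f t‖ ≤ m * (δ * (1 / N)) := by
  have integral_eq := intervalIntegral.sum_integral_adjacent_intervals (n := m)
    (a := fun k : ℕ => gridPoint N a (i + k)) fun k _ => hf.intervalIntegrable (μ := volume) _ _
  rw [Nat.cast_zero, add_zero] at integral_eq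
  rw [← integral_eq, Finset.mul_sum, ← Finset.sum_sub_distrib]
  refine (norm_sum_le_of_le _ (n := fun _ => δ * (1 / (N : ℝ))) fun k _ => ?_).trans_eq
    (by simp)
  have cell_length : gridPoint N a (i + (k + 1 : ℕ)) - gridPoint N a (i + k) = 1 / N := by
    rw [Nat.cast_succ, ← add_assoc, gridPoint_succ, add_sub_cancel_left]
  have cell_average : (N : ℂ)⁻¹ * y (i + k) =
      ∫ _ in gridPoint N a (i + k)..gridPoint N a (i + (k + 1 : ℕ)), y (i + k) := by
    rw [intervalIntegral.integral_const, cell_length, Complex.real_smul]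
    push_cast
    rw [one_div]
  rw [cell_average, ← intervalIntegral.integral_sub (by simp) (hf.intervalIntegrable _ _)]
  refine (intervalIntegral.norm_integral_le_of_norm_le_const fun t ht => hy _ t ?_).trans_eq
    (by rw [cell_length, abs_of_nonneg (by positivity)])
  rw [Set.uIoc_of_le (sub_nonneg.1 (by rw [cell_length]; positivity))] at ht
  rw [abs_sub_comm, abs_of_pos (sub_pos.2 ht.1), ← cell_length]
  exact sub_le_sub_right ht.2 _

lemma quadOp_intCast_apply [NeZero N] (a c : ℝ) {F : ℝ × ℝ → ℂ} (hF : BiPeriodic F)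
    (x : GridFun N) (i : ℤ) : quadOp N a c F x i =
      (N : ℂ)⁻¹ * ∑ k ∈ Finset.range N, F (gridPoint N a i, gridPoint N c k) * x (k : ℤ) := by
  rw [quadOp_apply,
    ← sum_zmod_eq_sum_range fun k : ℤ => F (gridPoint N a i, gridPoint N c k) * x k]
  congr! with j
  · rw [← kernelMatrix_intCast a c hF, ZMod.intCast_zmod_cast]
  · rw [ZMod.intCast_zmod_cast]

lemma norm_quadOp_sub_integralOp_le [NeZero N] {a c δ : ℝ} {F : ℝ × ℝ → ℂ} (hF : BiPeriodic F)
    (hc : Continuous F) {g : ℝ → ℂ} (hg : Continuous g) (hgp : Function.Periodic g 1)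
    {x : GridFun N} {i : ℤ} (cell : ∀ (j : ℤ) (t : ℝ), |gridPoint N c j - t| ≤ 1 / N →
      ‖F (gridPoint N a i, gridPoint N c j) * x j - F (gridPoint N a i, t) * g t‖ ≤ δ) :
    ‖quadOp N a c F x i - integralOp F g (gridPoint N a i)‖ ≤ δ := by
  have row_periodic : Function.Periodic (fun t => F (gridPoint N a i, t) * g t) 1 := fun t => by
    simp only [(hF _ t).2, hgp t]
  have one_period : gridPoint N c (0 + N) = gridPoint N c 0 + 1 := by
    have := NeZero.ne N
    simp only [gridPoint]
    push_cast
    field_simp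
    ring
  have estimate := norm_average_sub_integral_le (f := fun t => F (gridPoint N a i, t) * g t)
    (by fun_prop) cell 0 N
  rw [one_period, row_periodic.intervalIntegral_add_eq _ 0, zero_add] at estimate
  simp only [zero_add] at estimate
  rw [quadOp_intCast_apply a c hF]
  refine estimate.trans_eq ?_
  field_simp [NeZero.ne N]

/-! ### Weakly singular kernels -/

/-- Domination of a kernel by the integrable singularity `C |sin(π(s - t))|^(-1/2)`. -/
def InvSqrtBound (F : ℝ × ℝ → ℂ) (C : ℝ) : Prop :=
  ∀ p : ℝ × ℝ, 0 < |Real.sin (π * (p.1 - p.2))| →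
    ‖F p‖ ≤ C * (1 / √|Real.sin (π * (p.1 - p.2))|)

lemma exists_norm_quadOp_apply_le {a c : ℝ} (hε : ∀ k : ℤ, a - c ≠ k) :
    ∃ S, 0 ≤ S ∧ ∀ (N : ℕ) [NeZero N] (F : ℝ × ℝ → ℂ) (C δ : ℝ), BiPeriodic F → 0 ≤ C →
      InvSqrtBound F C → ∀ x : GridFun N, (∀ j, ‖x j‖ ≤ δ) →
      ∀ i, ‖quadOp N a c F x i‖ ≤ S * C * δ := by
  obtain ⟨S, hS0, hS⟩ := exists_average_inv_sqrt_sinDist_le hε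
  refine ⟨S, hS0, fun N _ F C δ hF hC0 hC x hx i => ?_⟩
  have hδ : 0 ≤ δ := (norm_nonneg _).trans (hx 0)
  have entry_le : ∀ j, ‖kernelMatrix N a c F i j‖ ≤ C * (1 / √(sinDist N (a - c) (i - j))) := by
    intro j
    obtain ⟨m, rfl⟩ := ZMod.intCast_surjective i
    obtain ⟨n, rfl⟩ := ZMod.intCast_surjective j
    rw [kernelMatrix_intCast a c hF, ← abs_sin_gridPoint_sub]
    exact hC (gridPoint N a m, gridPoint N c n) (by
      rw [abs_sin_gridPoint_sub]
      exact sinDist_pos hε _)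
  rw [quadOp_apply, norm_mul, norm_inv, Complex.norm_natCast]
  calc (N : ℝ)⁻¹ * ‖∑ j, kernelMatrix N a c F i j * x j‖
      ≤ (N : ℝ)⁻¹ * ∑ j, C * (1 / √(sinDist N (a - c) (i - j))) * δ := by
        gcongr
        refine norm_sum_le_of_le _ fun j _ => ?_
        rw [norm_mul]
        gcongr
        exacts [entry_le j, hx j]
    _ = (N : ℝ)⁻¹ * (∑ k, 1 / √(sinDist N (a - c) k)) * C * δ := by
        rw [← Finset.sum_mul, ← Finset.mul_sum,
          ← Equiv.sum_comp (Equiv.subLeft i) fun k => 1 / √(sinDist N (a - c) k)]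
        simp only [Equiv.subLeft_apply]
        ring
    _ ≤ S * C * δ := by
        gcongr
        exact hS N

lemma inv_sqrt_abs_sin_periodic : Function.Periodic (fun t => 1 / √|Real.sin (π * t)|) 1 :=
  fun t => by
    have := abs_sin_pi_mul_add_intCast t 1
    rw [Int.cast_one] at this
    simp only [this]

lemma intervalIntegrable_inv_sqrt_abs_sin (a b : ℝ) :
    IntervalIntegrable (fun t => 1 / √|Real.sin (π * t)|) volume a b := by
  have inv_sqrt_integrable : IntervalIntegrable (fun t : ℝ => 1 / √t) volume 0 1 := by
    refine (intervalIntegral.intervalIntegrable_rpow' (r := -(1 / 2)) (by norm_num)).congr ?_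
    intro t ht
    rw [Set.uIoc_of_le zero_le_one] at ht
    simp only [Real.rpow_neg ht.1.le, Real.sqrt_eq_rpow, one_div]
  have reflected_integrable := inv_sqrt_integrable.comp_sub_left 1
  rw [sub_zero, sub_self] at reflected_integrable
  refine inv_sqrt_abs_sin_periodic.intervalIntegrable₀ one_ne_zero ?_ a b
  refine (inv_sqrt_integrable.add reflected_integrable.symm).mono_fun ?_ ?_
  · exact Measurable.aestronglyMeasurable (by fun_prop)
  · rw [Set.uIoc_of_le zero_le_one, ← Measure.restrict_congr_set Ioo_ae_eq_Ioc]
    filter_upwards [ae_restrict_mem measurableSet_Ioo] with t ht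
    rw [Real.norm_of_nonneg (by positivity)]
    exact (inv_sqrt_abs_sin_le ht.1 ht.2).trans (Real.le_norm_self _)

lemma ae_sin_pi_mul_sub_ne_zero (s : ℝ) : ∀ᵐ t : ℝ, Real.sin (π * (s - t)) ≠ 0 := by
  have countable : (Set.range fun n : ℤ => s - n).Countable := Set.countable_range _
  filter_upwards [countable.ae_notMem volume] with t ht vanish
  obtain ⟨n, hn⟩ := Real.sin_eq_zero_iff.1 vanish
  rw [mul_comm] at hn
  exact ht ⟨n, sub_eq_of_eq_add (by linarith [mul_left_cancel₀ Real.pi_ne_zero hn])⟩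

lemma exists_norm_integralOp_le :
    ∃ S, 0 ≤ S ∧ ∀ (F : ℝ × ℝ → ℂ) (C δ : ℝ), InvSqrtBound F C → 0 ≤ C →
      ∀ g : ℝ → ℂ, (∀ t, ‖g t‖ ≤ δ) → ∀ s, ‖integralOp F g s‖ ≤ S * C * δ := by
  refine ⟨∫ t in (0 : ℝ)..1, 1 / √|Real.sin (π * t)|,
    intervalIntegral.integral_nonneg zero_le_one fun t _ => by positivity,
    fun F C δ hC hC0 g hg s => ?_⟩
  have weight_integrable := (intervalIntegrable_inv_sqrt_abs_sin (s - 0) (s - 1)).comp_sub_left s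
  rw [sub_sub_cancel, sub_sub_cancel] at weight_integrable
  have weight_integral : ∫ t in (0 : ℝ)..1, 1 / √|Real.sin (π * (s - t))| =
      ∫ t in (0 : ℝ)..1, 1 / √|Real.sin (π * t)| := by
    rw [intervalIntegral.integral_comp_sub_left (fun t => 1 / √|Real.sin (π * t)|) s]
    simpa using inv_sqrt_abs_sin_periodic.intervalIntegral_add_eq (s - 1) 0
  calc ‖integralOp F g s‖
      ≤ ∫ t in (0 : ℝ)..1, C * (1 / √|Real.sin (π * (s - t))|) * δ := by
        refine intervalIntegral.norm_integral_le_of_norm_le zero_le_one ?_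
          ((weight_integrable.const_mul C).mul_const δ)
        filter_upwards [ae_sin_pi_mul_sub_ne_zero s] with t ht _
        rw [norm_mul]
        gcongr
        exacts [hC (s, t) (abs_pos.2 ht), hg t]
    _ = _ := by
        rw [intervalIntegral.integral_mul_const, intervalIntegral.integral_const_mul,
          weight_integral, mul_comm C]

lemma quarterWeight_le {ρ u : ℝ} (hρ : 0 ≤ ρ) (hu : 0 < u) (hu1 : u ≤ 1) :
    quarterWeight ρ u ≤ ρ * (1 / √u) := by
  have one_le := one_le_quarterWeight_one hu hu1
  have sq_eq := quarterWeight_sq 1 u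
  calc quarterWeight ρ u = ρ * quarterWeight 1 u := by simp only [quarterWeight, mul_one_div]
    _ ≤ ρ * (1 / √u) := by
        gcongr
        nlinarith

lemma intervalIntegrable_logSinSq (s a b : ℝ) :
    IntervalIntegrable (fun t => logSinSq (s, t)) volume a b := by
  have log_sin : IntervalIntegrable (fun t => Real.log (Real.sin (π * (s - t)))) volume a b := by
    have := (intervalIntegrable_log_sin (a := π * (s - a)) (b := π * (s - b))).comp_mul_left
      (c := π)
    simpa [mul_div_cancel_left₀ _ Real.pi_ne_zero] using this.comp_sub_left s
  have log_sin_sq : IntervalIntegrable (fun t => Real.log (Real.sin (π * (s - t)) ^ 2)) volume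
      a b := (log_sin.const_mul 2).congr fun t _ => by simp only [Real.log_pow, Nat.cast_ofNat]
  exact ⟨log_sin_sq.1.ofReal, log_sin_sq.2.ofReal⟩

namespace LogKernel

variable (V : LogKernel)

/-- The continuous approximation of a logarithmic kernel that replaces the logarithm by
`regLogSinSq (ρ ^ 8)`. -/
def regKernel (ρ : ℝ) : ℝ × ℝ → ℂ := V.coeff * regLogSinSq (ρ ^ 8) + V.smoothPart

lemma biPeriodic_regKernel (ρ : ℝ) : BiPeriodic (V.regKernel ρ) :=
  (V.biPeriodic_coeff.mul (biPeriodic_regLogSinSq _)).add V.biPeriodic_smoothPart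

lemma continuous_regKernel {ρ : ℝ} (hρ : 0 < ρ) : Continuous (V.regKernel ρ) :=
  (V.contDiff_coeff.continuous.mul (contDiff_regLogSinSq (by positivity)).continuous).add
    V.contDiff_smoothPart.continuous

lemma kernel_sub_regKernel (ρ : ℝ) :
    V.kernel - V.regKernel ρ = V.coeff * (logSinSq - regLogSinSq (ρ ^ 8)) := by
  rw [kernel, regKernel]
  ring

lemma exists_invSqrtBound_kernel_sub_regKernel :
    ∃ C, 0 ≤ C ∧ ∀ ρ > 0, InvSqrtBound (V.kernel - V.regKernel ρ) (C * ρ) := by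
  obtain ⟨C, hC⟩ := V.biPeriodic_coeff.exists_norm_le_of_continuous V.contDiff_coeff.continuous
  have hC0 : 0 ≤ C := (norm_nonneg _).trans (hC 0)
  refine ⟨C * 8, by positivity, fun ρ hρ p hp => ?_⟩
  rw [kernel_sub_regKernel, Pi.mul_apply, norm_mul, logSinSq_sub_regLogSinSq, norm_neg,
    Complex.norm_real, Real.norm_of_nonneg (regError_nonneg hρ hp)]
  set u := |Real.sin (π * (p.1 - p.2))|
  have regError_bound : regError ρ u ≤ 8 * (ρ * (1 / √u)) :=
    (regError_le hρ hp).trans (mul_le_mul_of_nonneg_left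
      (quarterWeight_le hρ.le hp (Real.abs_sin_le_one _)) (by norm_num))
  calc ‖V.coeff p‖ * regError ρ u ≤ C * (8 * (ρ * (1 / √u))) :=
        mul_le_mul (hC p) regError_bound (regError_nonneg hρ hp) hC0
    _ = C * 8 * ρ * (1 / √u) := by ring

lemma exists_norm_quadOp_kernel_sub_regKernel_le {a c : ℝ} (hε : ∀ k : ℤ, a - c ≠ k) :
    ∃ C, ∀ ρ > 0, ∀ (N : ℕ) [NeZero N] (x : GridFun N) (δ : ℝ), (∀ j, ‖x j‖ ≤ δ) →
      ∀ i, ‖quadOp N a c V.kernel x i - quadOp N a c (V.regKernel ρ) x i‖ ≤ C * δ * ρ := by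
  obtain ⟨C, hC0, hC⟩ := V.exists_invSqrtBound_kernel_sub_regKernel
  obtain ⟨S, -, hS⟩ := exists_norm_quadOp_apply_le hε
  refine ⟨S * C, fun ρ hρ N _ x δ hx i => ?_⟩
  have periodic : BiPeriodic (V.kernel - V.regKernel ρ) := by
    rw [kernel_sub_regKernel]
    exact V.biPeriodic_coeff.mul (biPeriodic_logSinSq_sub_regLogSinSq _)
  have add_eq := quadOp_add (N := N) a c (V.kernel - V.regKernel ρ) (V.regKernel ρ)
  rw [sub_add_cancel] at add_eq
  rw [add_eq, LinearMap.add_apply, PiLp.add_apply, add_sub_cancel_right]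
  exact (hS N _ (C * ρ) δ periodic (by positivity) (hC ρ hρ) x hx i).trans_eq (by ring)

lemma intervalIntegrable_kernel_mul {g : ℝ → ℂ} (hg : Continuous g) (s a b : ℝ) :
    IntervalIntegrable (fun t => V.kernel (s, t) * g t) volume a b := by
  have hA := V.contDiff_coeff.continuous
  have hK := V.contDiff_smoothPart.continuous
  have log_term : IntervalIntegrable (fun t => logSinSq (s, t) * (V.coeff (s, t) * g t)) volume
      a b := (intervalIntegrable_logSinSq s a b).mul_continuousOn (by fun_prop)
  have smooth_term : IntervalIntegrable (fun t => V.smoothPart (s, t) * g t) volume a b :=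
    Continuous.intervalIntegrable (by fun_prop) _ _
  refine (log_term.add smooth_term).congr fun t _ => ?_
  simp only [kernel, Pi.add_apply, Pi.mul_apply]
  ring

lemma exists_norm_integralOp_kernel_sub_regKernel_le :
    ∃ C, ∀ ρ > 0, ∀ g : ℝ → ℂ, Continuous g → ∀ δ, (∀ t, ‖g t‖ ≤ δ) →
      ∀ s, ‖integralOp V.kernel g s - integralOp (V.regKernel ρ) g s‖ ≤ C * δ * ρ := by
  obtain ⟨C, hC0, hC⟩ := V.exists_invSqrtBound_kernel_sub_regKernel
  obtain ⟨S, -, hS⟩ := exists_norm_integralOp_le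
  refine ⟨S * C, fun ρ hρ g hg δ hδ s => ?_⟩
  have hc := V.continuous_regKernel hρ
  have sub_eq : integralOp V.kernel g s - integralOp (V.regKernel ρ) g s =
      integralOp (V.kernel - V.regKernel ρ) g s := by
    rw [integralOp, integralOp, ← intervalIntegral.integral_sub
      (V.intervalIntegrable_kernel_mul hg s 0 1)
      (Continuous.intervalIntegrable (by fun_prop) _ _)]
    simp only [integralOp, Pi.sub_apply, sub_mul]
  rw [sub_eq]
  exact (hS _ (C * ρ) δ (hC ρ hρ) (by positivity) g hδ s).trans_eq (by ring)

lemma integralOp_kernel_periodic (g : ℝ → ℂ) : Function.Periodic (integralOp V.kernel g) 1 :=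
  fun s => by simp only [integralOp, (V.biPeriodic_kernel s _).1]

lemma continuous_integralOp_kernel {g : ℝ → ℂ} (hg : Continuous g) {B : ℝ} (hB : ∀ t, ‖g t‖ ≤ B) :
    Continuous (integralOp V.kernel g) := by
  obtain ⟨C, hC⟩ := V.exists_norm_integralOp_kernel_sub_regKernel_le
  refine continuous_of_uniform_approx_of_continuous fun u hu => ?_
  obtain ⟨δ, hδ, hu⟩ := Metric.mem_uniformity_dist.1 hu
  obtain ⟨ρ, hρ, small⟩ := exists_pos_mul_lt hδ (C * B)
  refine ⟨integralOp (V.regKernel ρ) g, ?_, fun s => hu ?_⟩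
  · have hc := V.continuous_regKernel hρ
    refine intervalIntegral.continuous_parametric_intervalIntegral_of_continuous' ?_ 0 1
    simp only [Function.uncurry_def]
    fun_prop
  · rw [dist_eq_norm]
    exact (hC ρ hρ g hg B hB s).trans_lt small

end LogKernel

section GridLimits

variable {M : ℕ → ℕ} {x : ∀ n, GridFun (M n)} {a c : ℝ} {f g : ℝ → ℂ}

lemma GridTendsto.of_approx (h : ∀ δ > 0, ∃ (y : ∀ n, GridFun (M n)) (f' : ℝ → ℂ),
    GridTendsto y a f' ∧ (∀ᶠ n in atTop, ∀ j, ‖x n j - y n j‖ < δ) ∧ ∀ s, ‖f s - f' s‖ < δ) :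
    GridTendsto x a f := by
  intro δ hδ
  obtain ⟨y, f', hy, near, near'⟩ := h (δ / 3) (by positivity)
  filter_upwards [hy (δ / 3) (by positivity), near] with n hn near j
  have triangle := dist_triangle4 (x n j) (y n j) (f' (gridPoint (M n) a j))
    (f (gridPoint (M n) a j))
  rw [dist_comm (f' _)] at triangle
  simp only [dist_eq_norm] at triangle
  linarith [near j, hn j, near' (gridPoint (M n) a j)]

lemma GridTendsto.eventually_norm_le (hx : GridTendsto x a f) {B : ℝ} (hB : ∀ t, ‖f t‖ ≤ B) :
    ∀ᶠ n in atTop, ∀ j, ‖x n j‖ ≤ B + 1 := by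
  filter_upwards [hx 1 one_pos] with n hn j
  obtain ⟨m, rfl⟩ := ZMod.intCast_surjective j
  calc ‖x n m‖ ≤ ‖f (gridPoint (M n) a m)‖ + ‖x n m - f (gridPoint (M n) a m)‖ :=
        norm_le_norm_add_norm_sub' _ _
    _ ≤ B + 1 := add_le_add (hB _) (hn m).le

variable [∀ n, NeZero (M n)]

lemma GridTendsto.quadOp_of_continuous (hx : GridTendsto x c g) (hM : Tendsto M atTop atTop)
    (hg : Continuous g) (hgp : Function.Periodic g 1) {F : ℝ × ℝ → ℂ} (hF : BiPeriodic F)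
    (hc : Continuous F) :
    GridTendsto (fun n => quadOp (M n) a c F (x n)) a (integralOp F g) := by
  intro δ hδ
  have hG : BiPeriodic fun p => F p * g p.2 := hF.mul (G := fun p => g p.2) fun s t => ⟨rfl, hgp t⟩
  obtain ⟨B, hB⟩ := hF.exists_norm_le_of_continuous hc
  obtain ⟨η, hη, modulus⟩ := Metric.uniformContinuous_iff.1
    (hG.uniformContinuous (by fun_prop)) (δ / 3) (by positivity)
  obtain ⟨δ', hδ', small⟩ := exists_pos_mul_lt (show 0 < δ / 3 by positivity) B
  have mesh : ∀ᶠ n in atTop, 1 / (M n : ℝ) < η :=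
    ((tendsto_natCast_atTop_atTop (R := ℝ).comp hM).const_div_atTop 1).eventually_lt_const hη
  filter_upwards [hx δ' hδ', mesh] with n hn mesh i
  refine (norm_quadOp_sub_integralOp_le hF hc hg hgp (δ := δ / 3 + δ / 3) fun j t ht => ?_).trans_lt
    (by linarith)
  set s := gridPoint (M n) a i
  set r := gridPoint (M n) c j
  have sample := modulus (a := (s, r)) (b := (s, t)) (by
    rw [Prod.dist_eq, dist_self, max_eq_right dist_nonneg]
    exact ht.trans_lt mesh)
  rw [dist_eq_norm] at sample
  calc ‖F (s, r) * x n j - F (s, t) * g t‖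
      = ‖F (s, r) * (x n j - g r) + (F (s, r) * g r - F (s, t) * g t)‖ := by ring_nf
    _ ≤ ‖F (s, r)‖ * ‖x n j - g r‖ + ‖F (s, r) * g r - F (s, t) * g t‖ :=
        (norm_add_le _ _).trans_eq (by rw [norm_mul])
    _ ≤ B * δ' + δ / 3 := by
        gcongr
        exacts [(norm_nonneg _).trans (hB (s, r)), hB _, (hn j).le]
    _ ≤ δ / 3 + δ / 3 := by linarith

/-- Replacing the logarithm by its regularization costs `O(ρ)` in the quadrature sums uniformly in
the mesh, because the shifted grids keep a distance of order `1/N` from the singularity. -/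
lemma GridTendsto.quadOp_kernel (hx : GridTendsto x c g) (hM : Tendsto M atTop atTop)
    (hg : Continuous g) (hgp : Function.Periodic g 1) (V : LogKernel)
    (hε : ∀ k : ℤ, a - c ≠ k) :
    GridTendsto (fun n => quadOp (M n) a c V.kernel (x n)) a (integralOp V.kernel g) := by
  obtain ⟨B, hB⟩ := (hgp.isBounded_of_continuous one_ne_zero hg).exists_norm_le
  rw [Set.forall_mem_range] at hB
  obtain ⟨C, hC⟩ := V.exists_norm_quadOp_kernel_sub_regKernel_le hε
  obtain ⟨C', hC'⟩ := V.exists_norm_integralOp_kernel_sub_regKernel_le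
  refine .of_approx fun δ hδ => ?_
  obtain ⟨ρ, hρ, small⟩ := exists_pos_mul_lt hδ (max (C * (B + 1)) (C' * B))
  refine ⟨_, _, hx.quadOp_of_continuous hM hg hgp (V.biPeriodic_regKernel ρ)
    (V.continuous_regKernel hρ), ?_, fun s => ?_⟩
  · filter_upwards [hx.eventually_norm_le hB] with n hn j
    refine (hC ρ hρ _ _ _ hn j).trans_lt (lt_of_le_of_lt ?_ small)
    gcongr
    exact le_max_left _ _
  · refine (hC' ρ hρ g hg B hB s).trans_lt (lt_of_le_of_lt ?_ small)
    gcongr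
    exact le_max_right _ _

end GridLimits

/-! ### Passage to the limit -/

section Telescoping

variable [NeZero N]

lemma sum_range_forwardDiff (x : GridFun N) (i : ℤ) (m : ℕ) :
    ∑ k ∈ Finset.range m, forwardDiff x ((i + k : ℤ) : ZMod N) =
      N * (x ((i + m : ℤ) : ZMod N) - x i) := by
  have telescope := Finset.sum_range_sub (fun k : ℕ => x ((i + k : ℤ) : ZMod N)) m
  rw [Nat.cast_zero, add_zero] at telescope
  rw [← telescope, Finset.mul_sum]
  refine Finset.sum_congr rfl fun k _ => ?_
  rw [forwardDiff_apply]
  push_cast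
  rw [add_assoc]

lemma norm_sum_range_le (x : GridFun N) (i : ℤ) {m : ℕ} (hm : m ≤ N) :
    ‖∑ k ∈ Finset.range m, x ((i + k : ℤ) : ZMod N)‖ ≤ √N * ‖x‖ :=
  calc ‖∑ k ∈ Finset.range m, x ((i + k : ℤ) : ZMod N)‖
      ≤ ∑ k ∈ Finset.range m, ‖x ((i + k : ℤ) : ZMod N)‖ := norm_sum_le _ _
    _ ≤ ∑ k ∈ Finset.range N, ‖x ((i + k : ℤ) : ZMod N)‖ :=
        Finset.sum_le_sum_of_subset_of_nonneg (Finset.range_subset_range.2 hm)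
          fun _ _ _ => norm_nonneg _
    _ = ∑ j : ZMod N, ‖x (i + j)‖ := by
        rw [← sum_zmod_eq_sum_range fun k : ℤ => ‖x ((i + k : ℤ) : ZMod N)‖]
        simp only [Int.cast_add, ZMod.intCast_zmod_cast]
    _ = ∑ j, ‖x j‖ := Equiv.sum_comp (Equiv.addLeft (i : ZMod N)) fun j => ‖x j‖
    _ ≤ √N * ‖x‖ := sum_norm_le x

lemma norm_le_sqrt_mul {x : GridFun N} {δ : ℝ} (h : ∀ j, ‖x j‖ ≤ δ) : ‖x‖ ≤ √N * δ := by
  have hδ : 0 ≤ δ := (norm_nonneg _).trans (h 0)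
  rw [← Real.sqrt_sq hδ, ← Real.sqrt_mul (Nat.cast_nonneg N), EuclideanSpace.norm_eq]
  refine Real.sqrt_le_sqrt ((Finset.sum_le_card_nsmul _ _ (δ ^ 2) fun j _ => ?_).trans_eq ?_)
  · gcongr
    exact h j
  · rw [Finset.card_univ, ZMod.card, nsmul_eq_mul]

end Telescoping

lemma uniformContinuous_of_periodic {g : ℝ → ℂ} (hg : Continuous g)
    (hgp : Function.Periodic g 1) : UniformContinuous g := by
  have periodic : BiPeriodic fun p : ℝ × ℝ => g p.1 := fun s _ => ⟨hgp s, rfl⟩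
  exact (periodic.uniformContinuous (by fun_prop)).comp
    (uniformContinuous_id.prodMk (uniformContinuous_const (b := (0 : ℝ))))

section GridLimits

variable {M : ℕ → ℕ} {x u v : ∀ n, GridFun (M n)} {a c : ℝ} {f U Z : ℝ → ℂ}

lemma tendsto_gridPoint_floor (hM : Tendsto M atTop atTop) (a s : ℝ) :
    Tendsto (fun n => gridPoint (M n) a ⌊s * M n⌋) atTop (𝓝 s) := by
  have hM' : Tendsto (fun n => (M n : ℝ)) atTop atTop := tendsto_natCast_atTop_atTop.comp hM
  have offset_tendsto (b : ℝ) : Tendsto (fun n => s + b / M n) atTop (𝓝 s) := by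
    simpa using (hM'.const_div_atTop b).const_add s
  refine tendsto_of_tendsto_of_tendsto_of_le_of_le' (offset_tendsto (a - 1)) (offset_tendsto a)
    ?_ ?_ <;> filter_upwards [hM'.eventually_gt_atTop 0] with n hn
  · rw [gridPoint, le_div_iff₀ hn, add_mul, div_mul_cancel₀ _ hn.ne']
    linarith [Int.lt_floor_add_one (s * M n)]
  · rw [gridPoint, div_le_iff₀ hn, add_mul, div_mul_cancel₀ _ hn.ne']
    linarith [Int.floor_le (s * M n)]

lemma GridTendsto.tendsto_apply (hx : GridTendsto x a f) (hf : Continuous f) {j : ℕ → ℤ} {r : ℝ}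
    (hj : Tendsto (fun n => gridPoint (M n) a (j n)) atTop (𝓝 r)) :
    Tendsto (fun n => x n (j n)) atTop (𝓝 (f r)) := by
  have error_tendsto :
      Tendsto (fun n => x n (j n) - f (gridPoint (M n) a (j n))) atTop (𝓝 0) :=
    Metric.tendsto_nhds.2 fun δ hδ => by
      filter_upwards [hx δ hδ] with n hn
      simpa using hn (j n)
  simpa using error_tendsto.add ((hf.tendsto r).comp hj)

variable [∀ n, NeZero (M n)]

lemma GridTendsto.tendsto_average (hx : GridTendsto x a f) (hM : Tendsto M atTop atTop)
    (hf : UniformContinuous f) {i : ℕ → ℤ} {m : ℕ → ℕ} (hm : ∀ n, m n ≤ M n) {r s : ℝ}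
    (hr : Tendsto (fun n => gridPoint (M n) a (i n)) atTop (𝓝 r))
    (hs : Tendsto (fun n => gridPoint (M n) a (i n + m n)) atTop (𝓝 s)) :
    Tendsto (fun n => (M n : ℂ)⁻¹ * ∑ k ∈ Finset.range (m n), x n ((i n + k : ℤ) : ZMod (M n)))
      atTop (𝓝 (∫ t in r..s, f t)) := by
  have primitive := intervalIntegral.continuous_primitive
    (fun b c => hf.continuous.intervalIntegrable (μ := volume) b c) 0
  have integral_tendsto : Tendsto
      (fun n => ∫ t in gridPoint (M n) a (i n)..gridPoint (M n) a (i n + m n), f t) atTop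
      (𝓝 (∫ t in r..s, f t)) := by
    have interval_eq (b c : ℝ) : ∫ t in b..c, f t = (∫ t in 0..c, f t) - ∫ t in 0..b, f t :=
      (intervalIntegral.integral_interval_sub_left (hf.continuous.intervalIntegrable _ _)
        (hf.continuous.intervalIntegrable _ _)).symm
    rw [interval_eq r s]
    refine Tendsto.congr (fun n => (interval_eq _ _).symm) ?_
    exact ((primitive.tendsto s).comp hs).sub ((primitive.tendsto r).comp hr)
  have error_tendsto : Tendsto
      (fun n => (M n : ℂ)⁻¹ * ∑ k ∈ Finset.range (m n), x n ((i n + k : ℤ) : ZMod (M n)) -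
        ∫ t in gridPoint (M n) a (i n)..gridPoint (M n) a (i n + m n), f t) atTop (𝓝 0) := by
    refine Metric.tendsto_nhds.2 fun δ hδ => ?_
    obtain ⟨η, hη, modulus⟩ := Metric.uniformContinuous_iff.1 hf (δ / 3) (by positivity)
    have mesh : ∀ᶠ n in atTop, 1 / (M n : ℝ) < η :=
      ((tendsto_natCast_atTop_atTop (R := ℝ).comp hM).const_div_atTop 1).eventually_lt_const hη
    filter_upwards [hx (δ / 3) (by positivity), mesh] with n hn mesh
    have estimate := norm_average_sub_integral_le hf.continuous (y := fun j => x n j)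
      (δ := δ / 3 + δ / 3) (fun j t ht => (norm_sub_le_norm_sub_add_norm_sub _ _ _).trans
        (add_le_add (hn j).le ((dist_eq_norm (f _) _).symm.trans_le
          (modulus (ht.trans_lt mesh)).le))) (i n) (m n)
    have hm' : (m n : ℝ) ≤ M n := Nat.cast_le.2 (hm n)
    have : (0 : ℝ) < M n := Nat.cast_pos.2 (NeZero.pos (M n))
    rw [dist_zero_right]
    refine (estimate.trans ?_).trans_lt (show δ / 3 + δ / 3 < δ by linarith)
    rw [mul_one_div, mul_div_assoc', div_le_iff₀ this, mul_comm]
    gcongr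
  simpa using error_tendsto.add integral_tendsto

lemma sub_eq_integral_of_gridTendsto (hM : Tendsto M atTop atTop) (hu : GridTendsto u a U)
    (hU : Continuous U) (hv : GridTendsto v c Z) (hZ : UniformContinuous Z)
    (h : Tendsto (fun n => ‖-forwardDiff (u n) + v n‖ / √(M n)) atTop (𝓝 0)) {s t : ℝ}
    (hst : s ≤ t) (hts : t ≤ s + 1) : U t - U s = ∫ r in s..t, Z r := by
  set i : ℕ → ℤ := fun n => ⌊s * M n⌋
  set m : ℕ → ℕ := fun n => (⌊t * M n⌋ - ⌊s * M n⌋).toNat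
  have end_eq (n : ℕ) : i n + m n = ⌊t * M n⌋ := by
    rw [Int.toNat_of_nonneg (sub_nonneg.2 (Int.floor_mono (by gcongr)))]
    exact add_sub_cancel _ _
  have length_le (n : ℕ) : m n ≤ M n := by
    have : ⌊t * M n⌋ ≤ ⌊s * M n⌋ + M n := by
      rw [← Int.floor_add_natCast]
      exact Int.floor_mono (by nlinarith [Nat.cast_nonneg (α := ℝ) (M n)])
    exact Int.toNat_le.2 (by omega)
  have start_tendsto (b : ℝ) := tendsto_gridPoint_floor hM b s
  have end_tendsto (b : ℝ) : Tendsto (fun n => gridPoint (M n) b (i n + m n)) atTop (𝓝 t) := by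
    simp only [end_eq]
    exact tendsto_gridPoint_floor hM b t
  have defect_tendsto : Tendsto (fun n => (M n : ℂ)⁻¹ * ∑ k ∈ Finset.range (m n),
      (-forwardDiff (u n) + v n) ((i n + k : ℤ) : ZMod (M n))) atTop (𝓝 0) := by
    refine squeeze_zero_norm (fun n => ?_) h
    rw [norm_mul, norm_inv, Complex.norm_natCast, inv_mul_le_iff₀ (by simp [NeZero.pos (M n)])]
    refine (norm_sum_range_le _ _ (length_le n)).trans_eq ?_
    rw [mul_div_left_comm, Real.div_sqrt, mul_comm]
  have average_eq (n : ℕ) : (M n : ℂ)⁻¹ * ∑ k ∈ Finset.range (m n),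
      (-forwardDiff (u n) + v n) ((i n + k : ℤ) : ZMod (M n)) =
        (M n : ℂ)⁻¹ * ∑ k ∈ Finset.range (m n), v n ((i n + k : ℤ) : ZMod (M n)) -
          (u n ((i n + m n : ℤ) : ZMod (M n)) - u n (i n)) := by
    simp only [PiLp.add_apply, PiLp.neg_apply, Finset.sum_add_distrib, Finset.sum_neg_distrib,
      sum_range_forwardDiff]
    field_simp [NeZero.ne (M n)]
    ring
  simp only [average_eq] at defect_tendsto
  exact (sub_eq_zero.1 (tendsto_nhds_unique defect_tendsto
    ((hv.tendsto_average hM hZ length_le (start_tendsto c) (end_tendsto c)).sub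
      ((hu.tendsto_apply hU (end_tendsto a)).sub
        (hu.tendsto_apply hU (start_tendsto a)))) |>.symm)).symm

lemma hasDerivAt_of_gridTendsto (hM : Tendsto M atTop atTop) (hu : GridTendsto u a U)
    (hU : Continuous U) (hv : GridTendsto v c Z) (hZ : UniformContinuous Z)
    (h : Tendsto (fun n => ‖-forwardDiff (u n) + v n‖ / √(M n)) atTop (𝓝 0)) (s : ℝ) :
    HasDerivAt U (Z s) s := by
  have primitive := ((intervalIntegral.integral_hasDerivAt_right
    (hZ.continuous.intervalIntegrable (s - 1 / 2) s)
    (hZ.continuous.stronglyMeasurableAtFilter _ _) hZ.continuous.continuousAt).const_add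
      (U (s - 1 / 2)))
  refine primitive.congr_of_eventuallyEq ?_
  filter_upwards [Ioo_mem_nhds (show s - 1 / 2 < s by linarith) (show s < s + 1 / 2 by linarith)]
    with t ht
  rw [← sub_eq_integral_of_gridTendsto hM hu hU hv hZ h ht.1.le (by linarith [ht.2]),
    add_sub_cancel]

end GridLimits

/-! ### Stability -/

namespace HypersingularData

variable (D : HypersingularData)

/-- The hypersingular integro-differential operator discretised by `nystromOp`. -/
def hypersingularOp (φ : ℝ → ℂ) (s : ℝ) : ℂ :=
  -deriv (integralOp D.V₁.kernel (deriv φ)) s + integralOp D.V₂.kernel φ s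

lemma nystromOp_zero_eq [NeZero N] (x : GridFun N) :
    D.nystromOp N 0 x = -forwardDiff (quadOp N D.a₁ D.c₁ D.V₁.kernel (backwardDiff x)) +
      quadOp N D.a₂ D.c₂ D.V₂.kernel x := by
  rw [nystromOp, LinearMap.add_apply, Function.iterate_zero_apply, Function.iterate_zero_apply,
    quadOp_kernelDiff_fst _ _ (D.V₁.biPeriodic_kernel.kernelDiff N _),
    quadOp_kernelDiff_snd _ _ D.V₁.biPeriodic_kernel, map_neg]

lemma hypersingularOp_eq_zero_of_gridTendsto {M : ℕ → ℕ} [∀ n, NeZero (M n)]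
    (hM : Tendsto M atTop atTop) {x : ∀ n, GridFun (M n)} {φ : ℝ → ℂ} (hφ : ContDiff ℝ ∞ φ)
    (hφp : Function.Periodic φ 1) (hx : GridTendsto x D.c₂ φ)
    (hx' : GridTendsto (fun n => backwardDiff (x n)) D.c₁ (deriv φ))
    (h : Tendsto (fun n => ‖D.nystromOp (M n) 0 (x n)‖ / √(M n)) atTop (𝓝 0)) (s : ℝ) :
    D.hypersingularOp φ s = 0 := by
  have hφ' : Continuous (deriv φ) := hφ.continuous_deriv (by exact_mod_cast le_top)
  have hφp' : Function.Periodic (deriv φ) 1 := fun t => by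
    rw [← deriv_comp_add_const, hφp.funext]
  obtain ⟨B, hB⟩ := (hφp.isBounded_of_continuous one_ne_zero hφ.continuous).exists_norm_le
  obtain ⟨B', hB'⟩ := (hφp'.isBounded_of_continuous one_ne_zero hφ').exists_norm_le
  rw [Set.forall_mem_range] at hB hB'
  simp only [nystromOp_zero_eq] at h
  have deriv_eq := (hasDerivAt_of_gridTendsto hM
    (hx'.quadOp_kernel hM hφ' hφp' D.V₁ (ne_intCast_of_ne_half D.sub_ne_half))
    (D.V₁.continuous_integralOp_kernel hφ' hB')
    (hx.quadOp_kernel hM hφ.continuous hφp D.V₂ D.sub_ne_intCast)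
    (uniformContinuous_of_periodic (D.V₂.continuous_integralOp_kernel hφ.continuous hB)
      (D.V₂.integralOp_kernel_periodic φ)) h s).deriv
  rw [hypersingularOp, deriv_eq, neg_add_cancel]

lemma boundedDifferences_of_singularVectors {M : ℕ → ℕ} [∀ n, NeZero (M n)]
    {x : ∀ n, GridFun (M n)} (hx : ∀ n, ‖x n‖ = √(M n)) {μ : ℕ → ℝ} (hμ : ∀ n, |μ n| ≤ 1)
    (h : ∀ n, LinearMap.adjoint (D.nystromOp (M n) 0) (D.nystromOp (M n) 0 (x n)) =
      (μ n : ℂ) • x n) : BoundedDifferences x := fun k => by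
  obtain ⟨C, -, hC⟩ := D.exists_sobolevNorm_singularVector_le k
  refine ⟨C, fun n => ?_⟩
  rw [← hx n]
  exact (norm_forwardDiff_pow_le_sobolevNorm k _).trans
    (hC (M n) (x n) (μ n) (hμ n) (by rw [← adjoint_nystromOp, h n])).1

theorem exists_mul_norm_le_norm_nystromOp (hinj : ∀ φ : ℝ → ℂ, ContDiff ℝ ∞ φ →
      Function.Periodic φ 1 → (∀ s, D.hypersingularOp φ s = 0) → ∀ s, φ s = 0) :
    ∃ N₀ : ℕ, ∃ β > 0, ∀ N ≥ N₀, ∀ [NeZero N] (x : GridFun N),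
      β * ‖x‖ ≤ ‖D.nystromOp N 0 x‖ := by
  by_contra! unstable
  choose M hMn inst y hy using fun n : ℕ => unstable n (1 / (n + 1 : ℝ)) (by positivity)
  have hM : Tendsto M atTop atTop := tendsto_atTop_mono hMn tendsto_id
  choose x μ hx hμ eigen image_le using fun n =>
    exists_singularVector_norm_le (Real.sqrt_nonneg (M n)) (hy n)
  have hμ1 (n : ℕ) : |μ n| ≤ 1 := (hμ n).trans (pow_le_one₀ (by positivity)
    ((div_le_one (by positivity)).2 (by linarith [Nat.cast_nonneg (α := ℝ) n])))
  obtain ⟨φ, smooth, periodic, σ, hσ, lim⟩ :=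
    (D.boundedDifferences_of_singularVectors hx hμ1 eigen).exists_subseq_gridTendsto hM
  have sqrt_pos (n : ℕ) : 0 < √(M n : ℝ) := Real.sqrt_pos.2 (Nat.cast_pos.2 (NeZero.pos (M n)))
  have residual : Tendsto (fun n => ‖D.nystromOp (M n) 0 (x n)‖ / √(M n)) atTop (𝓝 0) :=
    squeeze_zero (fun n => by positivity) (fun n => (div_le_iff₀ (sqrt_pos n)).2 (image_le n))
      tendsto_one_div_add_atTop_nhds_zero_nat
  have limit_zero := hinj φ smooth periodic (D.hypersingularOp_eq_zero_of_gridTendsto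
    (M := fun n => M (σ n)) (hM.comp hσ.tendsto_atTop) smooth periodic (lim _).1 (lim _).2
    (residual.comp hσ.tendsto_atTop))
  obtain ⟨n, hn⟩ := ((lim 0).1 (1 / 2) (by norm_num)).exists
  have norm_le : ‖x (σ n)‖ ≤ √(M (σ n)) * (1 / 2) := norm_le_sqrt_mul fun j => by
    obtain ⟨j, rfl⟩ := ZMod.intCast_surjective j
    simpa [limit_zero] using (hn j).le
  rw [hx] at norm_le
  linarith [sqrt_pos (σ n)]

end HypersingularData

/-! ### The Nyström matrix -/

/-- `logKer A K` as a logarithmic kernel; the factor `i/(2π)` is absorbed into the coefficient. -/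
def logKernelOfSPK {A K : ℝ → ℝ → ℂ} (hA : SPK A) (hK : SPK K) : LogKernel where
  coeff p := Complex.I / (2 * π) * A p.1 p.2
  smoothPart p := K p.1 p.2
  contDiff_coeff := contDiff_const.mul hA.1
  contDiff_smoothPart := hK.1
  biPeriodic_coeff s t := by simp only [hA.2.1, hA.2.2, and_self]
  biPeriodic_smoothPart s t := ⟨hK.2.1 s t, hK.2.2 s t⟩

lemma kernel_logKernelOfSPK {A K : ℝ → ℝ → ℂ} (hA : SPK A) (hK : SPK K) :
    (logKernelOfSPK hA hK).kernel = fun p => logKer A K p.1 p.2 :=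
  rfl

/-- The data of the hypersingular operator `Wop (logKer A₁ K₁) (logKer A₂ K₂)` on the grids
`s_{i+ε}`, `s_j` and `t_{i+ε}`, `t_j`. -/
def hypersingularDataOfSPK {A₁ K₁ A₂ K₂ : ℝ → ℝ → ℂ} (hA₁ : SPK A₁) (hK₁ : SPK K₁)
    (hA₂ : SPK A₂) (hK₂ : SPK K₂) {α : ℂ} (hα : α ≠ 0) (hdiag : ∀ s, A₁ s s = α) {ε : ℝ}
    (hε : ∀ k : ℤ, ε ≠ k / 2) : HypersingularData where
  V₁ := logKernelOfSPK hA₁ hK₁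
  V₂ := logKernelOfSPK hA₂ hK₂
  κ := Complex.I / (2 * π) * α
  a₁ := ε - 1 / 2
  c₁ := -(1 / 2)
  a₂ := ε
  c₂ := 0
  coeff_diag s := congrArg (Complex.I / (2 * π) * ·) (hdiag s)
  κ_ne_zero := by simp [hα, Real.pi_ne_zero]
  sub_ne_half k := by simpa using hε k
  sub_ne_intCast k := by simpa using hε (2 * k)

/-- The matrix `W^ε` for the mesh size `1/N`, with rows and columns indexed by residues. -/
def nystromMatrix (V₁ V₂ : ℝ → ℝ → ℂ) (N : ℕ) (ε : ℝ) : Matrix (ZMod N) (ZMod N) ℂ :=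
  Matrix.of fun i j => Wmat V₁ V₂ (1 / (N : ℝ)) ε i.cast j.cast

lemma sg_one_div (N : ℕ) (η : ℝ) (j : ℤ) : sg (1 / (N : ℝ)) η j = gridPoint N (η - 1 / 2) j := by
  unfold sg gridPoint
  ring

lemma tg_one_div (N : ℕ) (η : ℝ) (j : ℤ) : tg (1 / (N : ℝ)) η j = gridPoint N η j := by
  unfold tg gridPoint
  ring

lemma nystromOp_zero_eq_smul_nystromMatrix [NeZero N] {A₁ K₁ A₂ K₂ : ℝ → ℝ → ℂ} (hA₁ : SPK A₁)
    (hK₁ : SPK K₁) (hA₂ : SPK A₂) (hK₂ : SPK K₂) {α : ℂ} (hα : α ≠ 0) (hdiag : ∀ s, A₁ s s = α)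
    {ε : ℝ} (hε : ∀ k : ℤ, ε ≠ k / 2) :
    (hypersingularDataOfSPK hA₁ hK₁ hA₂ hK₂ hα hdiag hε).nystromOp N 0 = (N : ℂ) •
      Matrix.toEuclideanLin (nystromMatrix (logKer A₁ K₁) (logKer A₂ K₂) N ε) := by
  have := NeZero.ne N
  rw [HypersingularData.nystromOp, quadOp, quadOp, ← smul_add, ← map_add, inv_smul_eq_iff₀
    (NeZero.ne _), smul_smul, ← map_smul]
  congr 1
  ext i j
  simp only [Matrix.add_apply, Matrix.smul_apply, kernelMatrix, nystromMatrix, Matrix.of_apply,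
    Wmat, sg_one_div, tg_one_div, gridPoint_succ, kernelDiff, Function.iterate_zero, id,
    smul_eq_mul]
  simp only [hypersingularDataOfSPK, kernel_logKernelOfSPK, Prod.smul_mk, Prod.mk_add_mk,
    smul_eq_mul, mul_one, mul_zero, add_zero, zero_sub, Complex.ofReal_div, Complex.ofReal_one,
    Complex.ofReal_natCast]
  field_simp
  ring

lemma exists_mul_norm_le_norm_nystromMatrix {A₁ K₁ A₂ K₂ : ℝ → ℝ → ℂ} (hA₁ : SPK A₁)
    (hK₁ : SPK K₁) (hA₂ : SPK A₂) (hK₂ : SPK K₂) {α : ℂ} (hα : α ≠ 0) (hdiag : ∀ s, A₁ s s = α)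
    {ε : ℝ} (hε : ∀ k : ℤ, ε ≠ k / 2) (hinj : ∀ φ : ℝ → ℂ, ContDiff ℝ ∞ φ →
      Function.Periodic φ 1 → (∀ s, Wop (logKer A₁ K₁) (logKer A₂ K₂) φ s = 0) → ∀ s, φ s = 0) :
    ∃ N₀ : ℕ, ∃ β > 0, ∀ N ≥ N₀, ∀ [NeZero N] (x : GridFun N), β * (1 / N) * ‖x‖ ≤
      ‖Matrix.toEuclideanLin (nystromMatrix (logKer A₁ K₁) (logKer A₂ K₂) N ε) x‖ := by
  obtain ⟨N₀, β, hβ, stable⟩ := (hypersingularDataOfSPK hA₁ hK₁ hA₂ hK₂ hα hdiag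
    hε).exists_mul_norm_le_norm_nystromOp hinj
  refine ⟨N₀, β, hβ, fun N hN _ x => ?_⟩
  have lower := stable N hN x
  rw [nystromOp_zero_eq_smul_nystromMatrix, LinearMap.smul_apply, norm_smul,
    Complex.norm_natCast] at lower
  have : (0 : ℝ) < N := Nat.cast_pos.2 (NeZero.pos N)
  rwa [mul_one_div, div_mul_eq_mul_div, div_le_iff₀' this]

lemma isUnit_of_mul_norm_le {n 𝕜 : Type*} [Fintype n] [DecidableEq n] [RCLike 𝕜]
    {A : Matrix n n 𝕜} {β : ℝ} (hβ : 0 < β)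
    (h : ∀ x, β * ‖x‖ ≤ ‖Matrix.toEuclideanLin A x‖) : IsUnit A := by
  rw [← Matrix.mulVec_injective_iff_isUnit]
  refine (injective_iff_map_eq_zero A.mulVecLin).2 fun v hv => ?_
  have lower := h (WithLp.toLp 2 v)
  have image_eq_zero : Matrix.toEuclideanLin A (WithLp.toLp 2 v) = 0 := by
    rw [Matrix.toLpLin_toLp]
    exact congrArg (WithLp.toLp 2) hv
  rw [image_eq_zero, norm_zero] at lower
  exact congrArg WithLp.ofLp (norm_le_zero_iff.1 (nonpos_of_mul_nonpos_right lower hβ))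

end Nystrom

end

/-- discrete stability (inf-sup) of the Nyström matrix `W^ε` and its
invertibility for small enough `h`. -/
theorem stmt_0
    (A1 K1 A2 K2 : ℝ → ℝ → ℂ) (hA1 : SPK A1) (hK1 : SPK K1) (hA2 : SPK A2) (hK2 : SPK K2)
    (α : ℂ) (hα : α ≠ 0) (hdiag : ∀ s : ℝ, A1 s s = α)
    (hinj : ∀ φ : ℝ → ℂ, ContDiff ℝ (⊤ : ℕ∞) φ → Function.Periodic φ 1 →
      (∀ s, Wop (logKer A1 K1) (logKer A2 K2) φ s = 0) → ∀ s, φ s = 0)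
    (ε : ℝ) (hε : ∀ k : ℤ, ε ≠ (k : ℝ) / 2) :
    ∃ h0 > (0:ℝ), ∃ β > (0:ℝ), ∀ N : ℕ, 0 < N → 1 / (N : ℝ) ≤ h0 →
      (∀ φv : Fin N → ℂ,
        β * (1 / (N : ℝ)) * Real.sqrt (∑ j : Fin N, ‖φv j‖ ^ 2) ≤
          Real.sqrt (∑ i : Fin N,
            ‖∑ j : Fin N,
              Wmat (logKer A1 K1) (logKer A2 K2) (1 / (N : ℝ)) ε ((i : ℕ) : ℤ) ((j : ℕ) : ℤ)
                * φv j‖ ^ 2)) ∧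
      IsUnit (Matrix.of fun i j : Fin N =>
        Wmat (logKer A1 K1) (logKer A2 K2) (1 / (N : ℝ)) ε ((i : ℕ) : ℤ) ((j : ℕ) : ℤ)) := by
  obtain ⟨N₀, β, hβ, stable⟩ :=
    Nystrom.exists_mul_norm_le_norm_nystromMatrix hA1 hK1 hA2 hK2 hα hdiag hε hinj
  refine ⟨1 / (N₀ + 1), by positivity, β, hβ, fun N hN hNh => ?_⟩
  have hNN : N₀ ≤ N := by
    have : (N₀ : ℝ) + 1 ≤ N := (one_div_le_one_div (Nat.cast_pos.2 hN) (by positivity)).1 hNh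
    exact_mod_cast (le_add_of_nonneg_right zero_le_one).trans this
  obtain ⟨n, rfl⟩ := Nat.exists_eq_succ_of_ne_zero hN.ne'
  have lower (x : EuclideanSpace ℂ (Fin (n + 1))) :
      β * (1 / ((n + 1 : ℕ) : ℝ)) * ‖x‖ ≤ ‖Matrix.toEuclideanLin (Matrix.of fun i j : Fin (n + 1) =>
        Wmat (logKer A1 K1) (logKer A2 K2) (1 / ((n + 1 : ℕ) : ℝ)) ε (i : ℕ) (j : ℕ)) x‖ :=
    stable (n + 1) hNN x
  refine ⟨fun φv => ?_, Nystrom.isUnit_of_mul_norm_le (by positivity) lower⟩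
  have lower_φv := lower (WithLp.toLp 2 φv)
  rwa [EuclideanSpace.norm_eq, EuclideanSpace.norm_eq] at lower_φv
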